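/- For every rational number s with s > 0 and s ≠ 1, there is no rational number y such that F(s,y) = 0. -/

import Mathlib

/-!
Put `a = (s - 1) / (s + 1)` and `c = a (y - 1) / (y + 1)`. The equation `F(s, y) = 0` becomes
`c (1 - c²)² = 4 (1 - a²) (a² - c²)`. It is quadratic in `a²`, and solving it gives `1 - c = t²` for the rational number
`t = (2 a² - 1 - c²) / (1 - c²)`. With `t = 2 z - 1` one obtains the curve of genus two `a² = z - 16 (z - 1)³ z²`, and
since `a ≠ 0, ±1` it is enough to show that its rational points have `a ∈ {0, 1, -1}` (`no_point`).

In the coordinates `ζ = 1 / (2 z)`, `y = 2 a ζ³` the curve is `y² = 2 ζ (ζ⁴ + 8 ζ³ - 12 ζ² + 6 ζ - 1)`. The quartic factor has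
the root `χ = (θ - 1)³` in the field `K = ℚ(θ)`, `θ⁴ - 2 θ³ + 2 θ - 2 = 0`. The proof is an infinite descent on the Jacobian,
carried out `2`-adically over the ring `R` of rational numbers with odd denominator. The objects are reduced divisors
(`Dat`), cut out by `U = V² - 2 k² S` and `y = V / k` with `V = x - b`; the power of `2` in `k` measures how close
the divisor is to a divisor which is trivial on the Jacobian.

On such a divisor `1 + 2 k² ω`, which is `V² / U` at the roots of the quintic, has even valuation at all odd primes except
possibly the prime `2 θ + 1` above `43` (`Dat.val_sq`, from `sel`). Since `K` has class number one and its units are generated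
modulo squares by `-1`, `θ - 1` and `θ³ - θ + 1`, an element with this property which is congruent to `1` modulo `8` is the
square of an element congruent to `1` modulo `2` (`nf_square`). Hence, when `k` is even, the divisor can be halved in the
Jacobian (`Model.half`, `Half.even`, `Half.odd`), and halving divides `k` by `2` up to a unit. A divisor with `k` odd is
impossible on the first model for reasons modulo powers of `2` (`Dat.not_odd`), so there is no reduced divisor with `k ≠ 0` at
all (`no_dat`).

A rational point with `a ≠ 0, ±1` does produce such a divisor. If `ζ` is even, take the sum of the point and the Weierstrass
point `0`; if `ζ` is odd, the sum of the point and `(1, -2)`. If the denominator of `ζ` is even, the same construction is made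
on the model with coordinate `q = 1 / ζ = 2 z`. On that model halving is repeated until `k` is a unit, keeping track of `b`
modulo `4` (`chain_inv`), after which adding the rational point `ζ = 1 / 2` gives a reduced divisor on the first model
(`transition`).
-/

/-- The scaled root polynomial `F(s,y)`. -/
def scaledRootPoly (s y : ℚ) : ℚ :=
  s^2*y^5 + (-2*s^3 - s^2 + 6*s)*y^4 + (s^4 - 14*s^3 + 4*s^2 + 10*s + 1)*y^3
    + (-s^4 - 10*s^3 - 4*s^2 + 14*s - 1)*y^2 + (-6*s^3 + s^2 + 2*s)*y - s^2

/-! ### The quartic field -/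

noncomputable section
namespace SR
open Polynomial NumberField

/-- The polynomial `x⁴ - 2x³ + 2x - 2`, Eisenstein at `2`. -/
def quartic : ℤ[X] := X ^ 4 - 2 * X ^ 3 + 2 * X - 2

lemma quartic_natDegree : quartic.natDegree = 4 := by
  unfold quartic; compute_degree!

lemma quartic_monic : quartic.Monic := by
  unfold quartic; monicity!

lemma quartic_eisenstein : quartic.IsEisensteinAt (Ideal.span {(2 : ℤ)}) := by
  have hd : quartic.degree = 4 := by
    rw [degree_eq_natDegree quartic_monic.ne_zero, quartic_natDegree]; rfl
  refine ⟨?_, ?_, ?_⟩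
  · rw [quartic_monic.leadingCoeff, Ideal.mem_span_singleton]; decide
  · intro n hn
    rw [quartic_natDegree] at hn
    rw [Ideal.mem_span_singleton]
    interval_cases n <;> simp [quartic, coeff_X, coeff_ofNat_mul]
  · rw [Ideal.span_singleton_pow, Ideal.mem_span_singleton]
    simp [quartic]

lemma quartic_irreducible : Irreducible quartic :=
  quartic_eisenstein.irreducible
    ((Ideal.span_singleton_prime (by norm_num)).2 Int.prime_two)
    quartic_monic.isPrimitive (by rw [quartic_natDegree]; norm_num)

lemma quarticQ_irreducible : Irreducible (quartic.map (algebraMap ℤ ℚ)) :=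
  (quartic_monic.irreducible_iff_irreducible_map_fraction_map).1 quartic_irreducible

instance : Fact (Irreducible (quartic.map (algebraMap ℤ ℚ))) := ⟨quarticQ_irreducible⟩

/-- The quartic field `ℚ[x] / (x⁴ - 2x³ + 2x - 2)`. -/
def K : Type := AdjoinRoot (quartic.map (algebraMap ℤ ℚ))

instance : Field K := inferInstanceAs (Field (AdjoinRoot (quartic.map (algebraMap ℤ ℚ))))
instance : CharZero K := (inferInstance : CharZero (AdjoinRoot (quartic.map (algebraMap ℤ ℚ))))

/-- The class of `x` in `K`. -/
def θ : K := AdjoinRoot.root (quartic.map (algebraMap ℤ ℚ))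

lemma quarticQ_monic : (quartic.map (algebraMap ℤ ℚ)).Monic := quartic_monic.map _

/-- The quotient map from the polynomial ring onto `K`. -/
def mkK : ℚ[X] →+* K := AdjoinRoot.mk (quartic.map (algebraMap ℤ ℚ))

lemma mkK_eq (p : ℚ[X]) : mkK p = aeval θ p := by
  have : mkK = (aeval θ : ℚ[X] →ₐ[ℚ] K).toRingHom := by
    apply Polynomial.ringHom_ext'
    · exact Subsingleton.elim _ _
    · simp only [AlgHom.toRingHom_eq_coe, RingHom.coe_coe, aeval_X]; rfl
  rw [this]; rfl

lemma aeval_quarticQ : aeval θ (quartic.map (algebraMap ℤ ℚ)) = 0 := by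
  rw [← mkK_eq]; exact AdjoinRoot.mk_self

lemma aeval_quartic : aeval θ quartic = 0 := by
  rw [← aeval_quarticQ, aeval_map_algebraMap]

lemma θ_rel : θ ^ 4 = 2 * θ ^ 3 - 2 * θ + 2 := by
  have h := aeval_quartic
  simp only [quartic, map_sub, map_add, map_mul, map_pow, aeval_X, map_ofNat] at h
  linear_combination h

lemma θ_integral : IsIntegral ℤ θ := ⟨quartic, quartic_monic, aeval_quartic⟩

lemma θ_integralQ : IsIntegral ℚ θ := ⟨_, quarticQ_monic, aeval_quarticQ⟩

lemma adjoin_θ : Algebra.adjoin ℚ {θ} = ⊤ := by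
  rw [eq_top_iff]
  intro x _
  obtain ⟨p, rfl⟩ : ∃ p, mkK p = x := AdjoinRoot.mk_surjective x
  rw [mkK_eq]
  exact aeval_mem_adjoin_singleton ℚ θ

lemma minpolyQ_θ : minpoly ℚ θ = quartic.map (algebraMap ℤ ℚ) :=
  (minpoly.eq_of_irreducible_of_monic quarticQ_irreducible aeval_quarticQ quarticQ_monic).symm

/-- The power basis of `K` generated by `θ`. -/
def pbQ : PowerBasis ℚ K := PowerBasis.ofAdjoinEqTop θ_integralQ adjoin_θ

instance : NumberField K where
  to_charZero := inferInstance
  to_finiteDimensional := pbQ.finite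

lemma pbQ_gen : pbQ.gen = θ := PowerBasis.ofAdjoinEqTop_gen _ _
lemma pbQ_dim : pbQ.dim = 4 := by
  rw [← PowerBasis.natDegree_minpoly, pbQ_gen, minpolyQ_θ, quartic_monic.natDegree_map, quartic_natDegree]

lemma finrank_K : Module.finrank ℚ K = 4 := by rw [pbQ.finrank, pbQ_dim]

lemma minpoly_θ : minpoly ℤ θ = quartic := by
  apply Polynomial.map_injective (algebraMap ℤ ℚ) (Int.cast_injective)
  rw [← minpoly.isIntegrallyClosed_eq_field_fractions' ℚ θ_integral, minpolyQ_θ]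

/-- The basis `1, θ, θ², θ³`. -/
def bas : Module.Basis (Fin 4) ℚ K := pbQ.basis.reindex (finCongr pbQ_dim)

lemma bas_apply (i : Fin 4) : bas i = θ ^ (i : ℕ) := by
  simp [bas, pbQ_gen]

lemma repr_eq (a b c d : ℚ) :
   bas.repr (algebraMap ℚ K a + algebraMap ℚ K b * θ + algebraMap ℚ K c * θ^2 + algebraMap ℚ K d * θ^3) = Finsupp.equivFunOnFinite.symm ![a,b,c,d] := by
  rw [← bas.repr.eq_symm_apply]
  simp [Module.Basis.repr_symm_apply, Finsupp.linearCombination_apply, Finsupp.sum_fintype, Fin.sum_univ_four, bas_apply, Algebra.smul_def]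

/-- The element of `K` with the given rational coordinates in the basis `1, θ, θ², θ³`. -/
def el (a b c d : ℚ) : K := algebraMap ℚ K a + algebraMap ℚ K b * θ + algebraMap ℚ K c * θ^2 + algebraMap ℚ K d * θ^3

lemma exists_el (x : K) : ∃ a b c d, x = el a b c d := by
  refine ⟨bas.repr x 0, bas.repr x 1, bas.repr x 2, bas.repr x 3, ?_⟩
  conv_lhs => rw [← bas.sum_repr x]
  simp [Fin.sum_univ_four, bas_apply, Algebra.smul_def, el]

lemma el_inj {a b c d a' b' c' d' : ℚ} (h : el a b c d = el a' b' c' d') :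
    a = a' ∧ b = b' ∧ c = c' ∧ d = d' := by
  have h2 := congrArg bas.repr h
  unfold el at h2
  rw [repr_eq, repr_eq] at h2
  have := Finsupp.equivFunOnFinite.symm.injective h2
  simpa using this

lemma el_add (a b c d a' b' c' d' : ℚ) : el a b c d + el a' b' c' d' =
    el (a + a') (b + b') (c + c') (d + d') := by
  simp only [el, map_add]; ring

lemma el_mul (a b c d a' b' c' d' : ℚ) : el a b c d * el a' b' c' d' =
  el (a*a'+2*(b*d'+c*c'+d*b') +4*(c*d'+d*c')+8*d*d')
     (a*b'+b*a' -2*(b*d'+c*c'+d*b') -2*(c*d'+d*c')-4*d*d')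
     (a*c'+b*b'+c*a'-2*(c*d'+d*c') - 2*d*d')
     (a*d'+b*c'+c*b'+d*a'+2*(b*d'+c*c'+d*b')+4*(c*d'+d*c')+6*d*d') := by
  have h5 : θ ^ 5 = 4 * θ^3 - 2*θ^2 - 2 * θ + 4 := by linear_combination (θ + 2) * θ_rel
  have h6 : θ ^ 6 = 6 * θ^3 - 2*θ^2 - 4 * θ + 8 := by linear_combination θ * h5 + 4 * θ_rel
  simp only [el, map_add, map_mul, map_sub, map_ofNat]
  linear_combination (exp := 1) ((algebraMap ℚ K b)*(algebraMap ℚ K d')+(algebraMap ℚ K c)*(algebraMap ℚ K c')+(algebraMap ℚ K d)*(algebraMap ℚ K b')) * θ_rel + ((algebraMap ℚ K c)*(algebraMap ℚ K d')+(algebraMap ℚ K d)*(algebraMap ℚ K c'))*h5 + (algebraMap ℚ K d)*(algebraMap ℚ K d')*h6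

lemma norm_el (a b c d : ℚ) : Algebra.norm ℚ (el a b c d) =
   (!![a, 2*d, 2*(c+2*d), 2*(b+2*(c+2*d));
       b, a-2*d, 2*d-2*(c+2*d), 2*(c+2*d)-2*(b+2*(c+2*d));
       c, b, a-2*d, 2*d-2*(c+2*d);
       d, c+2*d, b+2*(c+2*d),a-2*d+2*(b+2*(c+2*d))] : Matrix (Fin 4) (Fin 4) ℚ).det := by
  rw [Algebra.norm_eq_matrix_det bas]
  congr 1
  have key : ∀ a b c d : ℚ, θ * el a b c d = el (2*d) (a-2*d) b (c+2*d) := by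
    intro a b c d
    simp only [el, map_add, map_mul, map_sub, map_ofNat]
    linear_combination (algebraMap ℚ K d) * θ_rel
  ext i j
  rw [Algebra.leftMulMatrix_eq_repr_mul, bas_apply, mul_comm]
  fin_cases j
  · have : θ ^ 0 * el a b c d = el a b c d := by ring
    erw [this]; unfold el; rw [repr_eq]; fin_cases i <;> simp
  · have := congrArg (fun e => e * el a b c d) (pow_one θ)
    simp only [key] at this
    erw [this]; unfold el; rw [repr_eq]; fin_cases i <;> simp
  · have := congrArg (fun e => e * el a b c d) (pow_two θ)
    simp only [mul_assoc, key] at this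
    erw [this]; unfold el; rw [repr_eq]; fin_cases i <;> simp
  · have := congrArg (fun e => e * el a b c d) (pow_three θ)
    simp only [mul_assoc, key] at this
    erw [this]; unfold el; rw [repr_eq]; fin_cases i <;> simp

lemma norm_θ : Algebra.norm ℚ θ = -2 := by
  have : θ = el 0 1 0 0 := by simp [el]
  rw [this, norm_el]
  simp [Matrix.det_succ_row_zero, Fin.sum_univ_succ, Fin.succAbove]
  norm_num
  
lemma norm_a : Algebra.norm ℚ (θ + 1) = -1 := by
  have : θ + 1 = el 1 1 0 0 := by simp [el]; ring
  rw [this, norm_el]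
  simp [Matrix.det_succ_row_zero, Fin.sum_univ_succ, Fin.succAbove]
  norm_num

lemma norm_b : Algebra.norm ℚ (θ - 1) = -1 := by
  have : θ - 1 = el (-1) 1 0 0 := by simp [el]; ring
  rw [this, norm_el]
  simp [Matrix.det_succ_row_zero, Fin.sum_univ_succ, Fin.succAbove]
  norm_num

lemma norm_c : Algebra.norm ℚ (2 * θ + 1) = -43 := by
  have : 2 * θ + 1 = el 1 2 0 0 := by simp [el]; ring
  rw [this, norm_el]
  simp [Matrix.det_succ_row_zero, Fin.sum_univ_succ, Fin.succAbove]
  norm_num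

lemma discr_pbQ : Algebra.discr ℚ pbQ.basis = -688 := by
  rw [Algebra.discr_powerBasis_eq_norm, pbQ_gen, finrank_K, minpolyQ_θ]
  have : aeval θ (derivative (quartic.map (algebraMap ℤ ℚ))) = 2 * (θ - 1) ^ 2 * (2 * θ + 1) := by
    rw [derivative_map, aeval_map_algebraMap]
    simp only [quartic, derivative_sub, derivative_add, derivative_mul, derivative_X_pow, derivative_X, derivative_ofNat, map_sub, map_add, map_mul, map_pow, aeval_X, map_ofNat, Nat.cast_ofNat, aeval_C, map_natCast, map_zero, map_one]
    norm_num
    ring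
  rw [this, map_mul, map_mul, map_pow, norm_b, norm_c]
  have h2 : Algebra.norm ℚ (2 : K) = 16 := by
    have := Algebra.norm_algebraMap (S := K) (2 : ℚ)
    rw [finrank_K] at this
    simpa using this.trans (by norm_num)
  rw [h2]; norm_num

lemma discr_K_mul : ∃ t : ℤ, discr K * t ^ 2 = -688 := by
  have hintg : ∀ i, IsIntegral ℤ (bas i) := fun i => by rw [bas_apply]; exact θ_integral.pow _
  have hf : Module.finrank ℤ (𝓞 K) = 4 := by rw [RingOfIntegers.rank, finrank_K]
  let B : Module.Basis (Fin 4) ℤ (𝓞 K) := (Module.finBasis ℤ (𝓞 K)).reindex (finCongr hf)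
  let b : Fin 4 → 𝓞 K := fun i => ⟨bas i, hintg i⟩
  have h1 : Algebra.discr ℤ b = (B.toMatrix b).det ^ 2 * Algebra.discr ℤ B := by
    rw [← Algebra.discr_of_matrix_vecMul]
    congr 1
    exact (Module.Basis.toMatrix_map_vecMul B b).symm
  have h2 : ((Algebra.discr ℤ b : ℤ) : ℚ) = Algebra.discr ℚ bas := by
    rw [Algebra.discr_def, Algebra.discr_def, ← eq_intCast (Int.castRingHom ℚ), RingHom.map_det]
    congr 1
    ext i j
    simp only [RingHom.mapMatrix_apply, Matrix.map_apply, Algebra.traceMatrix_apply, Algebra.traceForm_apply]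
    exact (Algebra.trace_localization (R := ℤ) (Rₘ := ℚ) (S := 𝓞 K) (Sₘ := K) (nonZeroDivisors ℤ) (b i * b j)).symm
  rw [NumberField.discr_eq_discr] at h1
  refine ⟨(B.toMatrix b).det, ?_⟩
  have h3 : Algebra.discr ℚ bas = -688 := by
    rw [← discr_pbQ]
    simp only [bas]
    rw [Module.Basis.coe_reindex]
    exact Algebra.discr_reindex _ _ _
  rw [h3, h1] at h2
  have : (((B.toMatrix b).det ^ 2 * discr K : ℤ) : ℚ) = ((-688 : ℤ) : ℚ) := by rw [h2]; norm_num
  have := Int.cast_injective this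
  linarith

lemma discr_neg : discr K < 0 := by
  obtain ⟨t, ht⟩ := discr_K_mul
  nlinarith [sq_nonneg t]

lemma discr_ge : -688 ≤ discr K := by
  obtain ⟨t, ht⟩ := discr_K_mul
  have : t ≠ 0 := by rintro rfl; norm_num at ht
  have : 1 ≤ t ^ 2 := by have := sq_nonneg t; have : t ^ 2 ≠ 0 := pow_ne_zero 2 ‹t ≠ 0›; omega
  nlinarith [discr_neg]

open InfinitePlace in
lemma places : nrComplexPlaces K = 1 ∧ nrRealPlaces K = 2 := by
  have h := sign_discr (K := K)
  rw [Int.sign_eq_neg_one_of_neg discr_neg] at h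
  have h2 := card_add_two_mul_card_eq_rank K
  rw [finrank_K] at h2
  have h3 : ¬ Even (nrComplexPlaces K) := fun he => by rw [he.neg_one_pow] at h; norm_num at h
  have : nrComplexPlaces K ≤ 2 := by omega
  interval_cases hh : nrComplexPlaces K
  · simp at h3
  · omega
  · exact absurd even_two h3

end SR
end

/-! ### The ring of integers is principal -/

noncomputable section
namespace SR
open Polynomial NumberField

/-- `θ` as an algebraic integer. -/
def θO : 𝓞 K := ⟨θ, θ_integral⟩

lemma θO_coe : (θO : K) = θ := rfl

lemma θO_rel : θO ^ 4 = 2 * θO ^ 3 - 2 * θO + 2 := by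
  apply RingOfIntegers.ext
  simpa using! θ_rel

lemma absNorm_of_norm {x : 𝓞 K} {n : ℤ} (h : Algebra.norm ℚ (x : K) = n) :
    Ideal.absNorm (Ideal.span {x}) = n.natAbs := by
  rw [Ideal.absNorm_span_singleton]
  congr 1
  rw [← Algebra.coe_norm_int] at h
  exact_mod_cast h

lemma absNorm_θ : Ideal.absNorm (Ideal.span {θO}) = 2 :=
  absNorm_of_norm (n := -2) (by rw [θO_coe, norm_θ]; norm_num)

lemma absNorm_θ1 : Ideal.absNorm (Ideal.span {θO + 1}) = 1 :=
  absNorm_of_norm (n := -1) (by rw [show ((θO + 1 : 𝓞 K) : K) = θ + 1 from rfl, norm_a]; norm_num)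

lemma absNorm_θ2 : Ideal.absNorm (Ideal.span {θO - 1}) = 1 :=
  absNorm_of_norm (n := -1) (by rw [show ((θO - 1 : 𝓞 K) : K) = θ - 1 from rfl, norm_b]; norm_num)

open scoped Real Nat in
/-- The Minkowski bound of `K` is less than `4`, because `|discr K| ≤ 688 < 27²`. -/
lemma minkowski_lt : (4 / π) ^ InfinitePlace.nrComplexPlaces K *
    ((Module.finrank ℚ K)! / (Module.finrank ℚ K) ^ (Module.finrank ℚ K) * √|(discr K : ℝ)|) < 4 := by
  rw [places.1, finrank_K]
  have h1 : √|(discr K : ℝ)| < 27 := by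
    rw [Real.sqrt_lt' (by norm_num), abs_lt]
    have h := discr_ge
    have h2 := discr_neg
    constructor
    · have : ((-688 : ℤ) : ℝ) ≤ (discr K : ℝ) := Int.cast_le.2 h
      push_cast at this; linarith
    · have : (discr K : ℝ) < ((0 : ℤ) : ℝ) := Int.cast_lt.2 h2
      push_cast at this; linarith
  have h3 : 4 / π < 4 / 3 := by
    apply div_lt_div_of_pos_left (by norm_num) (by norm_num) Real.pi_gt_three
  have h4 : 0 < 4 / π := by positivity
  have h5 : ((4 ! : ℕ) : ℝ) / ((4 : ℕ) : ℝ) ^ 4 = 3 / 32 := by norm_num [Nat.factorial]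
  rw [pow_one, h5]
  have := Real.sqrt_nonneg |(discr K : ℝ)|
  nlinarith

/-- A prime ideal of norm `2` contains `θ`, of norm `2`, and is generated by it. There is none of norm `3`: it would contain
`θ³ - θ = θ (θ + 1) (θ - 1)`, whose factors have norms prime to `3`. -/
instance : IsPrincipalIdealRing (𝓞 K) := by
  apply RingOfIntegers.isPrincipalIdealRing_of_isPrincipal_of_norm_le_of_isPrime
  rintro ⟨P, hP0⟩ hP hle
  simp only at hP hle ⊢
  have hlt := hle.trans_lt minkowski_lt
  have hlt : Ideal.absNorm P < 4 := by exact_mod_cast hlt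
  have h0 : Ideal.absNorm P ≠ 0 := by
    rw [Ne, Ideal.absNorm_eq_zero_iff]; exact nonZeroDivisors.ne_zero hP0
  have h1 : Ideal.absNorm P ≠ 1 := by
    rw [Ne, Ideal.absNorm_eq_one_iff]; exact hP.ne_top
  have hmem := Ideal.absNorm_mem P
  interval_cases h : Ideal.absNorm P
  · exact absurd rfl h0
  · exact absurd rfl h1
  · have hθ : θO ∈ P := by
      apply hP.mem_of_pow_mem 4
      rw [θO_rel]
      have : (2 * θO ^ 3 - 2 * θO + 2 : 𝓞 K) = ((2 : ℕ) : 𝓞 K) * (θO ^ 3 - θO + 1) := by push_cast; ring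
      rw [this]; exact P.mul_mem_right _ hmem
    obtain ⟨J, hJ⟩ := Ideal.dvd_iff_le.2 ((Ideal.span_singleton_le_iff_mem P).2 hθ)
    have hn := congrArg Ideal.absNorm hJ
    rw [map_mul, h, absNorm_θ] at hn
    have : Ideal.absNorm J = 1 := by omega
    rw [Ideal.absNorm_eq_one_iff] at this
    rw [this, Ideal.mul_top] at hJ
    exact ⟨⟨θO, hJ.symm⟩⟩
  · exfalso
    have hd : ∀ x ∈ P, Ideal.absNorm P ∣ Ideal.absNorm (Ideal.span {x}) := fun x hx =>
      Ideal.absNorm_dvd_absNorm_of_le ((Ideal.span_singleton_le_iff_mem P).2 hx)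
    have hmax : P.IsMaximal := hP.isMaximal (nonZeroDivisors.ne_zero hP0)
    have hcard : Nat.card (𝓞 K ⧸ P) = 3 := h
    have hf : Finite (𝓞 K ⧸ P) := Nat.finite_of_card_ne_zero (by rw [hcard]; norm_num)
    let := Ideal.Quotient.field P
    have := Fintype.ofFinite (𝓞 K ⧸ P)
    have hpow := FiniteField.pow_card (Ideal.Quotient.mk P θO)
    rw [← Nat.card_eq_fintype_card, hcard, ← map_pow, Ideal.Quotient.eq] at hpow
    have : θO ^ 3 - θO = θO * ((θO + 1) * (θO - 1)) := by ring
    rw [this] at hpow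
    rcases hP.mem_or_mem hpow with hx | hx
    · have := hd _ hx; rw [h, absNorm_θ] at this; norm_num at this
    rcases hP.mem_or_mem hx with hx | hx
    · have := hd _ hx; rw [h, absNorm_θ1] at this; norm_num at this
    · have := hd _ hx; rw [h, absNorm_θ2] at this; norm_num at this

/-- The power basis of `θ` has discriminant `-688 = -2⁴ · 43` and its polynomial is Eisenstein at `2`, so multiplication by
`43` moves every algebraic integer into `ℤ[θ]`. -/
lemma int_mem (z : 𝓞 K) : ∃ a b c d : ℤ, 43 * (z : K) = el a b c d := by
  have hz : IsIntegral ℤ (z : K) := z.2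
  have hg : IsIntegral ℤ pbQ.gen := by rw [pbQ_gen]; exact θ_integral
  have h := Algebra.discr_mul_isIntegral_mem_adjoin ℚ (B := pbQ) hg hz
  rw [discr_pbQ] at h
  have h2 : (43 * (z : K)) ∈ Algebra.adjoin ℤ {pbQ.gen} := by
    refine mem_adjoin_of_smul_prime_pow_smul_of_minpoly_isEisensteinAt (K := ℚ) (p := 2) (n := 4) Int.prime_two hg ?_ ?_ ?_
    · have h43 : IsIntegral ℤ ((43 : ℤ) : K) := isIntegral_algebraMap
      exact_mod_cast h43.mul hz
    · have := Subalgebra.neg_mem _ h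
      convert this using 1
      rw [Algebra.smul_def, Algebra.smul_def]; simp; ring
    · rw [pbQ_gen, minpoly_θ]; exact quartic_eisenstein
  rw [pbQ_gen, Algebra.adjoin_singleton_eq_range_aeval] at h2
  obtain ⟨p, hp⟩ := h2
  have hp : aeval θ p = 43 * (z : K) := hp
  rw [← hp, ← aeval_modByMonic_eq_self_of_root aeval_quartic]
  have hdeg : (p %ₘ quartic).natDegree < 4 := by
    have := natDegree_modByMonic_lt p quartic_monic (by intro h; have := congrArg natDegree h; rw [quartic_natDegree] at this; simp at this)
    rwa [quartic_natDegree] at this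
  rw [aeval_eq_sum_range' hdeg]
  refine ⟨(p %ₘ quartic).coeff 0, (p %ₘ quartic).coeff 1, (p %ₘ quartic).coeff 2, (p %ₘ quartic).coeff 3, ?_⟩
  simp only [Finset.sum_range_succ, Finset.sum_range_zero, zsmul_eq_mul]
  simp [el]

end SR
end

/-! ### Rational numbers with odd denominator -/

noncomputable section
namespace SR
open Polynomial NumberField

/-- The ring of rationals with odd denominator. -/
def R : Subring ℚ := (PadicInt.subring 2).comap (algebraMap ℚ ℚ_[2])

lemma mem_R {x : ℚ} : x ∈ R ↔ padicNorm 2 x ≤ 1 := by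
  have : x ∈ R ↔ ‖(x : ℚ_[2])‖ ≤ 1 := by
    simp [R, Subring.mem_comap, PadicInt.subring]
  rw [this, Padic.eq_padicNorm]
  exact_mod_cast Iff.rfl

/-- The embedding of the odd-denominator rationals in the 2-adic integers. -/
def toZ2 : R →+* ℤ_[2] :=
  ((algebraMap ℚ ℚ_[2]).comp R.subtype).codRestrict (PadicInt.subring 2) (fun x => x.2)

lemma norm_toZ2 (x : R) : ‖toZ2 x‖ = padicNorm 2 (x : ℚ) := by
  rw [← Padic.eq_padicNorm]; rfl

@[simp, norm_cast] lemma coe_ofNat_R (n : ℕ) [n.AtLeastTwo] : ((ofNat(n) : R) : ℚ) = ofNat(n) := rfl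

lemma coe_two : ((2 : R) : ℚ) = 2 := rfl

lemma norm_two : padicNorm 2 (2 : ℚ) = (2 : ℚ)⁻¹ := by
  have := padicNorm.padicNorm_p (p := 2) (by norm_num)
  simpa using this

lemma norm_two_pow (n : ℕ) : padicNorm 2 ((2 : ℚ) ^ n) = (2 : ℚ) ^ (-(n : ℤ)) := by
  induction n with
  | zero => simp
  | succ n ih =>
    rw [pow_succ, padicNorm.mul, ih, norm_two, Nat.cast_succ, neg_add, zpow_add₀ (by norm_num)]; simp

/-- Reduction modulo `2 ^ n`. -/
def red (n : ℕ) : R →+* ZMod (2 ^ n) := (PadicInt.toZModPow n).comp toZ2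

lemma R_div {x y : R} (hy : (y : ℚ) ≠ 0) (h : padicNorm 2 (x:ℚ) ≤ padicNorm 2 (y:ℚ)) : ∃ z : R, x = y * z := by
  refine ⟨⟨(x:ℚ) / y, ?_⟩, ?_⟩
  · rw [mem_R, padicNorm.div]
    exact div_le_one_of_le₀ h (padicNorm.nonneg _)
  · apply Subtype.ext; simp; field_simp

lemma red_eq_zero {n : ℕ} {x : R} : red n x = 0 ↔ (2 : R) ^ n ∣ x := by
  constructor
  · intro h
    have h1 : toZ2 x ∈ RingHom.ker (PadicInt.toZModPow (p := 2) n) := h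
    rw [PadicInt.ker_toZModPow, ← PadicInt.norm_le_pow_iff_mem_span_pow, norm_toZ2] at h1
    obtain ⟨z, hz⟩ := R_div (x := x) (y := 2 ^ n) (by simp) (by
      have : padicNorm 2 (((2 : R) ^ n : R) : ℚ) = (2 : ℚ) ^ (-(n : ℤ)) := by
        rw [Subring.coe_pow, coe_two, norm_two_pow]
      rw [this]
      have h2 : ((padicNorm 2 (x : ℚ) : ℚ) : ℝ) ≤ (((2 : ℚ) ^ (-(n : ℤ)) : ℚ) : ℝ) := by
        push_cast; simpa using h1
      exact_mod_cast h2)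
    exact ⟨z, hz⟩
  · rintro ⟨z, rfl⟩
    rw [map_mul, map_pow, map_ofNat]
    have : (2 : ZMod (2 ^ n)) ^ n = 0 := by
      have := ZMod.natCast_self (2 ^ n); push_cast at this; exact this
    rw [this, zero_mul]

lemma even_or_odd (x : R) : (∃ y, x = 2 * y) ∨ ∃ y, x = 2 * y + 1 := by
  have h : ∀ a : ZMod (2 ^ 1), a = 0 ∨ a - 1 = 0 := by decide
  rcases h (red 1 x) with h | h
  · left; obtain ⟨y, hy⟩ := red_eq_zero.1 h; exact ⟨y, by simpa using hy⟩
  · right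
    have h : red 1 (x - 1) = 0 := by rw [map_sub, map_one]; exact h
    obtain ⟨y, hy⟩ := red_eq_zero.1 h; exact ⟨y, by simp at hy; linear_combination hy⟩

lemma two_mul_ne_odd (x y : R) : 2 * x ≠ 2 * y + 1 := by
  intro h
  have := congrArg (red 1) h
  simp only [map_mul, map_add, map_ofNat, map_one] at this
  revert this; generalize red 1 x = a; generalize red 1 y = b
  revert a b; decide

lemma odd_isUnit (y : R) : IsUnit (2 * y + 1) := by
  have h0 : ((2 * y + 1 : R) : ℚ) ≠ 0 := by
    intro h
    have h : (2 * y + 1 : R) = 0 := Subtype.ext h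
    exact two_mul_ne_odd (0) y (by rw [h]; ring)
  obtain ⟨z, hz⟩ := R_div (x := 1) (y := 2 * y + 1) h0 (by
    by_contra hlt
    push Not at hlt
    obtain ⟨z, hz⟩ := R_div (x := 2 * y + 1) (y := 2) (by norm_num) (by
      have h1 := norm_toZ2 (2 * y + 1)
      have h2 : ‖toZ2 (2 * y + 1)‖ < 1 := by
        rw [h1]; have : padicNorm 2 (((1 : R)) : ℚ) = 1 := by simp
        rw [this] at hlt; exact_mod_cast hlt
      have h3 := (PadicInt.norm_lt_one_iff_dvd _).1 h2
      have h4 : toZ2 (2 * y + 1) ∈ Ideal.span {((2:ℕ) : ℤ_[2]) ^ 1} := by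
        rw [pow_one]; exact Ideal.mem_span_singleton.2 h3
      rw [← PadicInt.norm_le_pow_iff_mem_span_pow, h1] at h4
      have : padicNorm 2 (((2 : R)) : ℚ) = (2 : ℚ)⁻¹ := by
        rw [coe_two, norm_two]
      rw [this]
      have h5 : ((padicNorm 2 ((2 * y + 1 : R) : ℚ) : ℚ) : ℝ) ≤ (((2 : ℚ)⁻¹ : ℚ) : ℝ) := by
        push_cast at *; simpa using h4
      exact_mod_cast h5)
    exact two_mul_ne_odd z y hz.symm)
  exact IsUnit.of_mul_eq_one _ hz.symm

lemma isUnit_iff_odd {x : R} : IsUnit x ↔ ∃ y, x = 2 * y + 1 := by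
  constructor
  · intro h
    rcases even_or_odd x with ⟨y, rfl⟩ | h'
    · obtain ⟨z, hz⟩ := h.exists_right_inv
      exact absurd (by rw [mul_zero, zero_add, ← hz]; ring) (two_mul_ne_odd (y * z) 0)
    · exact h'
  · rintro ⟨y, rfl⟩; exact odd_isUnit y

lemma prime_two : Prime (2 : R) := by
  refine ⟨by intro h; have := congrArg Subtype.val h; norm_num at this, ?_, ?_⟩
  · intro h
    obtain ⟨y, hy⟩ := isUnit_iff_odd.1 h
    exact two_mul_ne_odd 1 y (by rw [← hy]; ring)
  · intro a b h
    rcases even_or_odd a with ⟨y, rfl⟩ | ⟨y, rfl⟩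
    · left; exact ⟨y, rfl⟩
    · right; exact (odd_isUnit y).dvd_mul_left.1 h

lemma odd_iff_not_dvd {x : R} : (∃ y, x = 2 * y + 1) ↔ ¬ (2 : R) ∣ x := by
  constructor
  · rintro ⟨y, rfl⟩ ⟨z, hz⟩; exact two_mul_ne_odd z y hz.symm
  · intro h; rcases even_or_odd x with ⟨y, rfl⟩ | h'
    · exact absurd ⟨y, rfl⟩ h
    · exact h'

lemma mem_R_of_odd_mul {x : ℚ} {n m : ℤ} (h : n * x = 2 ^ 0 * m) (hn : Odd n) : x ∈ R := by
  obtain ⟨k, rfl⟩ := hn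
  have := odd_isUnit (k : R)
  obtain ⟨z, hz⟩ := this.exists_right_inv
  have hz := congrArg Subtype.val hz
  simp [coe_two] at hz h
  have : x = z * m := by linear_combination (-x) * hz + (z : ℚ) * h
  rw [this]; exact R.mul_mem z.2 (intCast_mem R m)

lemma exists_odd_mul (x : R) : ∃ n m : ℤ, Odd n ∧ (n : ℚ) * x = m := by
  refine ⟨(x : ℚ).den, (x : ℚ).num, ?_, ?_⟩
  · have h := mem_R.1 x.2
    rw [← Int.not_even_iff_odd]
    intro he
    have hx0 : (x : ℚ) ≠ 0 := by intro h; rw [h] at he; simp at he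
    have h1 : (2 : ℤ) ∣ ((x : ℚ).den : ℤ) := he.two_dvd
    have h3 : ¬ (2 : ℤ) ∣ (x : ℚ).num := by
      intro h4
      have h5 : 2 ∣ (x:ℚ).num.natAbs := Int.natCast_dvd.1 h4
      have := Nat.dvd_gcd h5 (Int.natCast_dvd_natCast.1 h1)
      rw [(x:ℚ).reduced] at this; norm_num at this
    have e : (x : ℚ) = (x:ℚ).num / ((x : ℚ).den : ℤ) := by
      push_cast; exact (Rat.num_div_den _).symm
    rw [e, padicNorm.div] at h
    have h6 : padicNorm 2 (((x:ℚ).num : ℤ) : ℚ) = 1 := by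
      have := (padicNorm.int_eq_one_iff (p := 2) (x:ℚ).num).2 (by exact_mod_cast h3); exact this
    have h7 : padicNorm 2 ((((x:ℚ).den : ℤ)) : ℚ) < 1 := (padicNorm.int_lt_one_iff (p := 2) _).2 (by exact_mod_cast h1)
    have h8 : 0 < padicNorm 2 ((((x:ℚ).den : ℤ)) : ℚ) := lt_of_le_of_ne (padicNorm.nonneg _) (padicNorm.nonzero (by exact_mod_cast (x:ℚ).den_nz)).symm
    rw [h6, div_le_one h8] at h
    linarith
  · push_cast; exact Rat.den_mul_eq_num _

/-- A nonzero rational scales into the ring by a nonzero scalar making one coordinate `1`. -/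
lemma exists_primitive {ι : Type*} [Fintype ι] (v : ι → ℚ) (h : v ≠ 0) :
    ∃ i, v i ≠ 0 ∧ ∀ j, v j / v i ∈ R := by
  obtain ⟨i0, hi0⟩ := Function.ne_iff.1 h
  obtain ⟨i, -, hi⟩ := Finset.exists_max_image Finset.univ (fun j => padicNorm 2 (v j)) ⟨i0, Finset.mem_univ _⟩
  have hpos : 0 < padicNorm 2 (v i) := lt_of_lt_of_le (lt_of_le_of_ne (padicNorm.nonneg _) (padicNorm.nonzero hi0).symm) (hi i0 (Finset.mem_univ _))
  refine ⟨i, fun h0 => by rw [h0] at hpos; simp at hpos, fun j => ?_⟩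
  rw [mem_R, padicNorm.div, div_le_one hpos]
  exact hi j (Finset.mem_univ _)

end SR
end

/-! ### Square classes modulo `8` -/

noncomputable section
namespace SR
open Polynomial NumberField

/-- Multiplication of coordinate vectors in the basis `1, θ, θ², θ³`, modulo `n`. -/
def cm {n : ℕ} (x y : ZMod n × ZMod n × ZMod n × ZMod n) : ZMod n × ZMod n × ZMod n × ZMod n :=
  let a := x.1; let b := x.2.1; let c := x.2.2.1; let d := x.2.2.2
  let a' := y.1; let b' := y.2.1; let c' := y.2.2.1; let d' := y.2.2.2
  let s := b*d'+c*c'+d*b'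
  let t := c*d'+d*c'
  let u := d*d'
  (a*a'+2*s+4*t+8*u, a*b'+b*a'-2*s-2*t-4*u, a*c'+b*b'+c*a'-2*t-2*u, a*d'+b*c'+c*b'+d*a'+2*s+4*t+6*u)

/-- Coordinates modulo `8` of `(-1)^e₁ (θ-1)^e₂ (θ³-θ+1)^e₃ (2θ+1)^e₄ θ^e₅`. -/
def cls (e : Fin 2 × Fin 2 × Fin 2 × Fin 2 × Fin 2) : ZMod 8 × ZMod 8 × ZMod 8 × ZMod 8 :=
  let p (i : Fin 2) (x : ZMod 8 × ZMod 8 × ZMod 8 × ZMod 8) := if i = 0 then (1,0,0,0) else x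
  cm (p e.1 (-1,0,0,0)) (cm (p e.2.1 (-1,1,0,0)) (cm (p e.2.2.1 (1,-1,0,1)) (cm (p e.2.2.2.1 (1,2,0,0)) (p e.2.2.2.2 (0,1,0,0)))))

/-- Coordinates modulo `8` of the square of a vector of residues modulo `4`. -/
def sq8 (f : Fin 4 × Fin 4 × Fin 4 × Fin 4) : ZMod 8 × ZMod 8 × ZMod 8 × ZMod 8 :=
  let x : ZMod 8 × ZMod 8 × ZMod 8 × ZMod 8 := ((f.1 : ℕ), (f.2.1 : ℕ), (f.2.2.1 : ℕ), (f.2.2.2 : ℕ))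
  cm x x

set_option maxRecDepth 100000 in
set_option synthInstance.maxHeartbeats 400000 in
set_option synthInstance.maxSize 2000 in
/-- If one of the `32` classes times a square is `1` modulo `8`, then the class is trivial and the square is that of an
element congruent to `1` modulo `2`. -/
lemma chk8 : ∀ e1 e2 e3 e4 e5 : Fin 2, ∀ a b c d : Fin 4, cm (cls (e1,e2,e3,e4,e5)) (sq8 (a,b,c,d)) = (1,0,0,0) → 
   e1 = 0 ∧ e2 = 0 ∧ e3 = 0 ∧ e4 = 0 ∧ e5 = 0 ∧ a.val % 2 = 1 ∧ b.val % 2 = 0 ∧ c.val % 2 = 0 ∧ d.val % 2 = 0 := by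
  decide +kernel

set_option maxRecDepth 100000 in
set_option synthInstance.maxHeartbeats 400000 in
set_option synthInstance.maxSize 2000 in
/-- If twice one of the `32` classes times a square vanishes modulo `8`, the element squared vanishes modulo `2`. -/
lemma chk4 : ∀ e1 e2 e3 e4 e5 : Fin 2, ∀ a b c d : Fin 2,
    (cm (cls (e1,e2,e3,e4,e5)) (sq8 (Fin.castLE (by norm_num) a,Fin.castLE (by norm_num) b,Fin.castLE (by norm_num) c,Fin.castLE (by norm_num) d))).map (fun x => 2 * x) (Prod.map (fun x => 2 * x) (Prod.map (fun x => 2 * x) (fun x => 2 * x))) = (0,0,0,0) →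
   a = 0 ∧ b = 0 ∧ c = 0 ∧ d = 0 := by
  decide +kernel

/-- Reduction modulo `8`. -/
def r8 : R →+* ZMod 8 := red 3

lemma r8_eq_zero {x : R} : r8 x = 0 ↔ 8 ∣ x := by
  have := red_eq_zero (n := 3) (x := x)
  norm_num at this; exact this

/-- `x` has coordinates with odd denominators, reducing to `t` modulo `8`. -/
def Rep (x : K) (t : ZMod 8 × ZMod 8 × ZMod 8 × ZMod 8) : Prop :=
  ∃ a b c d : R, x = el a b c d ∧ t = (r8 a, r8 b, r8 c, r8 d)

lemma Rep.mul {x y : K} {t u} (h : Rep x t) (h' : Rep y u) : Rep (x * y) (cm t u) := by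
  obtain ⟨a, b, c, d, rfl, rfl⟩ := h
  obtain ⟨a', b', c', d', rfl, rfl⟩ := h'
  refine ⟨a*a'+2*(b*d'+c*c'+d*b') +4*(c*d'+d*c')+8*(d*d'),
     a*b'+b*a' -2*(b*d'+c*c'+d*b') -2*(c*d'+d*c')-4*(d*d'),
     a*c'+b*b'+c*a'-2*(c*d'+d*c') - 2*(d*d'),
     a*d'+b*c'+c*b'+d*a'+2*(b*d'+c*c'+d*b')+4*(c*d'+d*c')+6*(d*d'), ?_, ?_⟩
  · rw [el_mul]; congr 1 <;> push_cast <;> ring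
  · simp only [cm, map_add, map_sub, map_mul, map_ofNat]

lemma Rep.uniq {x : K} {t u} (h : Rep x t) (h' : Rep x u) : t = u := by
  obtain ⟨a, b, c, d, rfl, rfl⟩ := h
  obtain ⟨a', b', c', d', h, rfl⟩ := h'
  obtain ⟨h1, h2, h3, h4⟩ := el_inj h
  rw [Subtype.ext h1, Subtype.ext h2, Subtype.ext h3, Subtype.ext h4]

lemma Rep_one : Rep 1 (1,0,0,0) := ⟨1, 0, 0, 0, by simp [el], by simp⟩

/-- The representative `(-1)^e₁ (θ-1)^e₂ (θ³-θ+1)^e₃ (2θ+1)^e₄ θ^e₅` of a square class. -/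
def sc (e1 e2 e3 e4 e5 : Fin 2) : K :=
  (-1) ^ (e1 : ℕ) * ((θ - 1) ^ (e2 : ℕ) * ((θ ^ 3 - θ + 1) ^ (e3 : ℕ) * ((2 * θ + 1) ^ (e4 : ℕ) * θ ^ (e5 : ℕ))))

lemma Rep_pow {x : K} {t} (h : Rep x t) (e : Fin 2) : Rep (x ^ (e : ℕ)) (if e = 0 then (1,0,0,0) else t) := by
  fin_cases e
  · simpa using Rep_one
  · simpa using h

lemma Rep_sc (e1 e2 e3 e4 e5 : Fin 2) : Rep (sc e1 e2 e3 e4 e5) (cls (e1, e2, e3, e4, e5)) := by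
  unfold sc cls
  refine (Rep_pow ?_ _).mul ((Rep_pow ?_ _).mul ((Rep_pow ?_ _).mul ((Rep_pow ?_ _).mul (Rep_pow ?_ _))))
  · exact ⟨-1, 0, 0, 0, by simp [el], by simp⟩
  · exact ⟨-1, 1, 0, 0, by simp [el]; ring, by simp⟩
  · exact ⟨1, -1, 0, 1, by simp [el]; ring, by simp⟩
  · exact ⟨1, 2, 0, 0, by simp [el]; ring, by simp [(map_ofNat r8 2).symm]⟩
  · exact ⟨0, 1, 0, 0, by simp [el], by simp⟩

lemma exists_residue (a : R) : ∃ f : Fin 4, ∃ t, a = (f : ℕ) + 4 * t := by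
  rcases even_or_odd a with ⟨b, rfl⟩ | ⟨b, rfl⟩ <;> rcases even_or_odd b with ⟨c, rfl⟩ | ⟨c, rfl⟩
  · exact ⟨0, c, by norm_num; ring⟩
  · exact ⟨2, c, by norm_num; ring⟩
  · exact ⟨1, c, by norm_num; ring⟩
  · exact ⟨3, c, by norm_num; ring⟩

lemma cm_sq (t u : ZMod 8 × ZMod 8 × ZMod 8 × ZMod 8) :
    cm (t + 4 * u) (t + 4 * u) = cm t t := by
  obtain ⟨a, b, c, d⟩ := t
  obtain ⟨a', b', c', d'⟩ := u
  have h8 : (8 : ZMod 8) = 0 := by decide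
  have h4 : (4 : ZMod 8 × ZMod 8 × ZMod 8 × ZMod 8) = (4,4,4,4) := rfl
  simp only [cm, h4, Prod.mk_add_mk, Prod.mk_mul_mk, Prod.mk.injEq]
  refine ⟨?_, ?_, ?_, ?_⟩
  · linear_combination ((a*a'+2*(b*d'+c*c'+d*b')+4*(c*d'+d*c')+8*(d*d')) + 2 * (a'*a'+2*(b'*d'+c'*c'+d'*b')+4*(c'*d'+d'*c')+8*(d'*d'))) * h8
  · linear_combination ((a*b'+b*a'-2*(b*d'+c*c'+d*b')-2*(c*d'+d*c')-4*(d*d')) + 2 * (a'*b'+b'*a'-2*(b'*d'+c'*c'+d'*b')-2*(c'*d'+d'*c')-4*(d'*d'))) * h8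
  · linear_combination ((a*c'+b*b'+c*a'-2*(c*d'+d*c')-2*(d*d')) + 2 * (a'*c'+b'*b'+c'*a'-2*(c'*d'+d'*c')-2*(d'*d'))) * h8
  · linear_combination ((a*d'+b*c'+c*b'+d*a'+2*(b*d'+c*c'+d*b')+4*(c*d'+d*c')+6*(d*d')) + 2 * (a'*d'+b'*c'+c'*b'+d'*a'+2*(b'*d'+c'*c'+d'*b')+4*(c'*d'+d'*c')+6*(d'*d'))) * h8

end SR
end

noncomputable section
namespace SR
open Polynomial NumberField

lemma Rep_zero : Rep 0 (0,0,0,0) := ⟨0, 0, 0, 0, by simp [el], by simp⟩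

lemma mem_or_inv_even (x : ℚ) (hx : x ≠ 0) : x ∈ R ∨ ∃ m : R, x⁻¹ = 2 * m := by
  by_cases h : x ∈ R
  · exact Or.inl h
  · right
    rw [mem_R, not_le] at h
    have h2 : x⁻¹ ∈ R := by
      rw [mem_R]
      have := padicNorm.div (p := 2) 1 x
      rw [one_div, padicNorm.one] at this
      rw [this, div_le_one (by linarith)]; exact h.le
    rcases even_or_odd ⟨x⁻¹, h2⟩ with ⟨y, hy⟩ | ⟨y, hy⟩
    · exact ⟨y, by simpa using congrArg Subtype.val hy⟩
    · exfalso
      obtain ⟨z, hz⟩ := (odd_isUnit y).exists_right_inv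
      rw [← hy] at hz
      have hz := congrArg Subtype.val hz
      simp at hz
      have : x = z := by field_simp at hz; exact hz.symm
      have h3 := mem_R.1 z.2
      rw [← this] at h3; linarith

lemma el_smul (l a b c d : ℚ) : algebraMap ℚ K l * el a b c d = el (l*a) (l*b) (l*c) (l*d) := by
  simp only [el, map_mul]; ring

lemma exists_scale (y : K) (hy : y ≠ 0) : ∃ l : ℚ, l ≠ 0 ∧ ∃ v : Fin 4 → R,
    y = algebraMap ℚ K l * el (v 0) (v 1) (v 2) (v 3) ∧ ∃ i, v i = 1 := by
  obtain ⟨a, b, c, d, rfl⟩ := exists_el y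
  have hv : (![a,b,c,d] : Fin 4 → ℚ) ≠ 0 := by
    intro h; apply hy
    have h0 := congrFun h 0; have h1 := congrFun h 1; have h2 := congrFun h 2; have h3 := congrFun h 3
    simp at h0 h1 h2 h3
    subst h0 h1 h2 h3; simp [el]
  obtain ⟨i, hi, hR⟩ := exists_primitive _ hv
  refine ⟨_, hi, fun j => ⟨_, hR j⟩, ?_, i, Subtype.ext (div_self hi)⟩
  rw [el_smul]
  simp only [mul_div_cancel₀ _ hi]
  rfl

lemma lift_sq {a b c d : R} : ∃ f1 f2 f3 f4 : Fin 4, ∃ a' b' c' d' : R,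
    a = (f1 : ℕ) + 4 * a' ∧ b = (f2 : ℕ) + 4 * b' ∧ c = (f3 : ℕ) + 4 * c' ∧ d = (f4 : ℕ) + 4 * d' ∧
    Rep (el a b c d ^ 2) (sq8 (f1, f2, f3, f4)) := by
  obtain ⟨f1, a', ha⟩ := exists_residue a
  obtain ⟨f2, b', hb⟩ := exists_residue b
  obtain ⟨f3, c', hc⟩ := exists_residue c
  obtain ⟨f4, d', hd⟩ := exists_residue d
  refine ⟨f1, f2, f3, f4, a', b', c', d', ha, hb, hc, hd, ?_⟩
  have h : Rep (el a b c d) ((((f1:ℕ):ZMod 8), ((f2:ℕ):ZMod 8), ((f3:ℕ):ZMod 8), ((f4:ℕ):ZMod 8)) + 4 * (r8 a', r8 b', r8 c', r8 d')) := by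
    refine ⟨a, b, c, d, rfl, ?_⟩
    rw [ha, hb, hc, hd]
    simp only [map_add, map_mul, map_natCast, map_ofNat]; rfl
  have h2 := h.mul h
  rw [cm_sq] at h2
  rw [pow_two]; exact h2

lemma even_of {f : Fin 4} {a a' : R} (h : a = (f : ℕ) + 4 * a') (hf : f.val % 2 = 0) : ∃ p, a = 2 * p := by
  refine ⟨((f.val / 2 : ℕ) : R) + 2 * a', ?_⟩
  have h2 : ((f : ℕ) : R) = 2 * ((f.val / 2 : ℕ) : R) := by
    exact_mod_cast congrArg (Nat.cast : ℕ → R) (show (f : ℕ) = 2 * (f.val / 2) by omega)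
  rw [h, h2]; ring

lemma odd_of {f : Fin 4} {a a' : R} (h : a = (f : ℕ) + 4 * a') (hf : f.val % 2 = 1) : ∃ p, a = 1 + 2 * p := by
  refine ⟨((f.val / 2 : ℕ) : R) + 2 * a', ?_⟩
  have h2 : ((f : ℕ) : R) = 1 + 2 * ((f.val / 2 : ℕ) : R) := by
    exact_mod_cast congrArg (Nat.cast : ℕ → R) (show (f : ℕ) = 1 + 2 * (f.val / 2) by omega)
  rw [h, h2]; ring

/-- The classes are independent modulo squares, even for squares of elements congruent to `1` modulo `8`. -/
lemma square_class {e1 e2 e3 e4 e5 : Fin 2} {x y : K} (hx : Rep x (1,0,0,0))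
    (h : x = sc e1 e2 e3 e4 e5 * y ^ 2) :
    (e1 = 0 ∧ e2 = 0 ∧ e3 = 0 ∧ e4 = 0 ∧ e5 = 0) ∧ ∃ a b c d : R, y = 1 + 2 * el a b c d := by
  have hy : y ≠ 0 := by
    rintro rfl
    have := hx.uniq (by rw [h]; simpa using Rep_zero)
    revert this; decide
  obtain ⟨l, hl, v, hv, i, hi⟩ := exists_scale y hy
  rcases mem_or_inv_even l hl with hlR | ⟨m, hm⟩
  · set L : R := ⟨l, hlR⟩
    have hy2 : y = el ((L * v 0 : R)) (L * v 1 : R) (L * v 2 : R) (L * v 3 : R) := by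
      rw [hv, el_smul]; rfl
    obtain ⟨f1, f2, f3, f4, a', b', c', d', ha, hb, hc, hd, hr⟩ := lift_sq (a := L * v 0) (b := L * v 1) (c := L * v 2) (d := L * v 3)
    rw [← hy2] at hr
    have h8 := hx.uniq (h ▸ (Rep_sc e1 e2 e3 e4 e5).mul hr)
    obtain ⟨k1, k2, k3, k4, k5, p1, p2, p3, p4⟩ := chk8 _ _ _ _ _ _ _ _ _ h8.symm
    refine ⟨⟨k1, k2, k3, k4, k5⟩, ?_⟩
    obtain ⟨a, ha⟩ := odd_of ha p1
    obtain ⟨b, hb⟩ := even_of hb p2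
    obtain ⟨c, hc⟩ := even_of hc p3
    obtain ⟨d, hd⟩ := even_of hd p4
    refine ⟨a, b, c, d, ?_⟩
    rw [hy2, ha, hb, hc, hd]
    simp [el]; ring
  · exfalso
    obtain ⟨g, hg⟩ : ∃ g : Fin 4 → Fin 2, ∃ w : Fin 4 → R, ∀ j, v j = ((g j : Fin 2) : ℕ) + 2 * w j := by
      have : ∀ j, ∃ g : Fin 2, ∃ w : R, v j = (g : ℕ) + 2 * w := by
        intro j
        rcases even_or_odd (v j) with ⟨y, hy⟩ | ⟨y, hy⟩
        · exact ⟨0, y, by rw [hy]; simp⟩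
        · exact ⟨1, y, by rw [hy]; simp [add_comm]⟩
      choose g w h using this
      exact ⟨g, w, h⟩
    obtain ⟨w, hw⟩ := hg
    -- work with the doubled class to read off the square modulo `4`
    set z : K := el ((g 0 : ℕ) : R) ((g 1 : ℕ) : R) ((g 2 : ℕ) : R) ((g 3 : ℕ) : R) with hz
    set u : K := el (w 0) (w 1) (w 2) (w 3) with hu
    have hvz : el (v 0) (v 1) (v 2) (v 3) = z + 2 * u := by
      rw [hz, hu, hw, hw, hw, hw]; simp [el]; ring
    have hzR : Rep (z ^ 2) (sq8 (Fin.castLE (by norm_num) (g 0),Fin.castLE (by norm_num) (g 1),Fin.castLE (by norm_num) (g 2),Fin.castLE (by norm_num) (g 3))) := by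
      rw [pow_two]
      have : Rep z (((g 0 : ℕ) : ZMod 8), ((g 1 : ℕ) : ZMod 8), ((g 2 : ℕ) : ZMod 8), ((g 3 : ℕ) : ZMod 8)) :=
        ⟨_, _, _, _, hz, by simp only [map_natCast]⟩
      exact this.mul this
    obtain ⟨tu, htu⟩ : ∃ t, Rep u t := ⟨_, _, _, _, _, hu, rfl⟩
    obtain ⟨tz, htz⟩ : ∃ t, Rep z t := ⟨_, _, _, _, _, hz, rfl⟩
    have hs := Rep_sc e1 e2 e3 e4 e5
    -- twice the class times `z ^ 2` is divisible by `8`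
    have e : 2 * (sc e1 e2 e3 e4 e5 * z ^ 2) = 8 * (algebraMap ℚ K m ^ 2 * x - sc e1 e2 e3 e4 e5 * (z * u + u * u)) := by
      have hlm : algebraMap ℚ K l * (2 * algebraMap ℚ K m) = 1 := by
        have : l * (2 * m) = 1 := by rw [← hm]; exact mul_inv_cancel₀ hl
        have := congrArg (algebraMap ℚ K) this
        simpa using this
      have : x * (2 * algebraMap ℚ K m) ^ 2 = sc e1 e2 e3 e4 e5 * (z + 2 * u) ^ 2 := by
        rw [h, hv, hvz]
        linear_combination (sc e1 e2 e3 e4 e5) * (z + 2 * u) ^ 2 * (algebraMap ℚ K l * (2 * algebraMap ℚ K m) + 1) * hlm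
      linear_combination -2 * this
    obtain ⟨r, hr⟩ : ∃ r, Rep (algebraMap ℚ K m ^ 2 * x - sc e1 e2 e3 e4 e5 * (z * u + u * u)) r := by
      have hm1 : Rep (algebraMap ℚ K m) (r8 m, 0, 0, 0) := ⟨m, 0, 0, 0, by simp [el], by simp⟩
      have hadd : ∀ {x y t u}, Rep x t → Rep y u → ∃ r, Rep (x + y) r := by
        rintro _ _ _ _ ⟨a, b, c, d, rfl, rfl⟩ ⟨a', b', c', d', rfl, rfl⟩
        exact ⟨_, a + a', b + b', c + c', d + d', by rw [el_add]; rfl, rfl⟩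
      have hneg : Rep (-1) (-1, 0, 0, 0) := ⟨-1, 0, 0, 0, by simp [el], by simp⟩
      obtain ⟨r1, hr1⟩ := hadd (htz.mul htu) (htu.mul htu)
      have h1 := (hm1.mul hm1).mul hx
      obtain ⟨r, hr⟩ := hadd h1 (hneg.mul (hs.mul hr1))
      refine ⟨r, ?_⟩
      convert hr using 1; ring
    have h2 := hs.mul hzR
    obtain ⟨a, b, c, d, h2, h2'⟩ := h2
    obtain ⟨a', b', c', d', hr, -⟩ := hr
    rw [h2, hr] at e
    have e1' : el (2 * a : R) (2 * b : R) (2 * c : R) (2 * d : R) = el (8 * a' : R) (8 * b' : R) (8 * c' : R) (8 * d' : R) := by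
      have t1 := el_smul 2 a b c d
      have t2 := el_smul 8 a' b' c' d'
      simp only [map_ofNat] at t1 t2
      push_cast
      rw [← t1, ← t2, e]
    obtain ⟨q1, q2, q3, q4⟩ := el_inj e1'
    have red8 : ∀ a a' : R, ((2 * a : R) : ℚ) = (8 * a' : R) → 2 * r8 a = 0 := by
      intro a a' h
      have h : 2 * a = 8 * a' := Subtype.ext h
      have := congrArg r8 h
      rw [map_mul, map_mul, map_ofNat, map_ofNat] at this
      rw [this]; have h8 : (8 : ZMod 8) = 0 := by decide
      rw [h8, zero_mul]
    have := chk4 e1 e2 e3 e4 e5 (g 0) (g 1) (g 2) (g 3) (by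
      rw [h2']
      simp only [Prod.map]
      rw [red8 _ _ q1, red8 _ _ q2, red8 _ _ q3, red8 _ _ q4])
    have hgi : g i = 0 := by
      obtain ⟨h0, h1, h2, h3⟩ := this
      fin_cases i <;> assumption
    have := hw i
    rw [hi, hgi] at this
    exact two_mul_ne_odd (w i) 0 (by simp at this; rw [← this]; ring)

end SR
end

/-! ### Units -/

noncomputable section
namespace SR
open Polynomial NumberField

lemma torsion_pm (x : Units.torsion K) : (x : (𝓞 K)ˣ) = 1 ∨ (x : (𝓞 K)ˣ) = -1 := by
  by_cases! hc : 2 < orderOf (x : (𝓞 K)ˣ)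
  · have h2 : orderOf (((x : (𝓞 K)ˣ) : 𝓞 K) : K) = orderOf (x : (𝓞 K)ˣ) := by
      rw [← orderOf_units]
      exact orderOf_injective (algebraMap (𝓞 K) K : 𝓞 K →* K) RingOfIntegers.coe_injective _
    rw [← h2] at hc
    have := NumberField.InfinitePlace.IsPrimitiveRoot.nrRealPlaces_eq_zero_of_two_lt hc (IsPrimitiveRoot.orderOf (((x : (𝓞 K)ˣ) : 𝓞 K) : K))
    rw [places.2] at this; norm_num at this
  · interval_cases hi : orderOf (x : (𝓞 K)ˣ)
    · exact absurd (orderOf_pos_iff.2 ((CommGroup.mem_torsion x.1).1 x.2)) (by rw [hi]; norm_num)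
    · exact Or.intro_left _ (orderOf_eq_one_iff.1 hi)
    · rw [← orderOf_units, CharP.orderOf_eq_two_iff 0 (by decide)] at hi
      right; exact Units.ext hi

lemma rank_eq : Units.rank K = 2 := by
  unfold Units.rank
  rw [InfinitePlace.card_eq_nrRealPlaces_add_nrComplexPlaces, places.1, places.2]

/-- The unit `θ - 1`. -/
def uA : (𝓞 K)ˣ where
  val := θO - 1
  inv := θO ^ 3 - θO ^ 2 - θO + 1
  val_inv := by linear_combination θO_rel
  inv_val := by linear_combination θO_rel
/-- The unit `θ ^ 3 - θ + 1`, equal to `θ ^ 4 / 2`. -/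
def uB : (𝓞 K)ˣ where
  val := θO ^ 3 - θO + 1
  inv := θO ^ 2 - θO - 1
  val_inv := by linear_combination (θO + 1) * θO_rel
  inv_val := by linear_combination (θO + 1) * θO_rel

/-- Products of the chosen units. -/
def un (e : Fin 2 × Fin 2 × Fin 2) : (𝓞 K)ˣ := (-1) ^ (e.1 : ℕ) * (uA ^ (e.2.1 : ℕ) * uB ^ (e.2.2 : ℕ))

lemma un_coe (e : Fin 2 × Fin 2 × Fin 2) : ((un e : 𝓞 K) : K) = sc e.1 e.2.1 e.2.2 0 0 := by
  simp [un, sc, uA, uB, θO_coe]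

lemma pow_fin {G : Type*} [CommGroup G] (x : G) (i j : Fin 2) (h : i ≠ j) : x ^ (i : ℕ) * x ^ (j : ℕ) = x := by
  fin_cases i <;> fin_cases j <;> simp at h ⊢

lemma un_inj {e f : Fin 2 × Fin 2 × Fin 2} {v : (𝓞 K)ˣ} (h : un e * un f = v ^ 2) : e = f := by
  have key : ∀ (x : (𝓞 K)ˣ) (i j : Fin 2), ∃ w : (𝓞 K)ˣ, x ^ (i : ℕ) * x ^ (j : ℕ) = x ^ ((i + j : Fin 2) : ℕ) * w ^ 2 := by
    intro x i j
    refine ⟨x ^ ((i : ℕ) * (j : ℕ)), ?_⟩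
    fin_cases i <;> fin_cases j <;> simp [pow_two]
  obtain ⟨w1, h1⟩ := key (-1) e.1 f.1
  obtain ⟨w2, h2⟩ := key uA e.2.1 f.2.1
  obtain ⟨w3, h3⟩ := key uB e.2.2 f.2.2
  have h4 : un (e + f) * (w1 * w2 * w3) ^ 2 = v ^ 2 := by
    rw [← h]; unfold un
    calc _ = ((-1) ^ ((e.1 + f.1 : Fin 2) : ℕ) * w1 ^ 2) * ((uA ^ ((e.2.1 + f.2.1 : Fin 2) : ℕ) * w2 ^ 2) * (uB ^ ((e.2.2 + f.2.2 : Fin 2) : ℕ) * w3 ^ 2)) := by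
          simp only [Prod.fst_add, Prod.snd_add, mul_pow]; ac_rfl
      _ = _ := by rw [← h1, ← h2, ← h3]; ac_rfl
  have h5 : (1 : K) = sc (e+f).1 (e+f).2.1 (e+f).2.2 0 0 * (((w1 * w2 * w3 * v⁻¹ : (𝓞 K)ˣ) : 𝓞 K) : K) ^ 2 := by
    rw [← un_coe]
    have : un (e + f) * (w1 * w2 * w3 * v⁻¹) ^ 2 = 1 := by
      rw [mul_pow, ← mul_assoc, h4]; group
    have := congrArg (fun u : (𝓞 K)ˣ => ((u : 𝓞 K) : K)) this
    simp only [Units.val_mul, Units.val_pow_eq_pow_val, map_mul, map_pow, Units.val_one, map_one] at this ⊢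
    exact this.symm
  obtain ⟨⟨a, b, c, -⟩, -⟩ := square_class Rep_one h5
  have e2 : ∀ i j : Fin 2, i + j = 0 → i = j := by decide
  exact Prod.ext (e2 _ _ a) (Prod.ext (e2 _ _ b) (e2 _ _ c))

/-- The unit group has rank two and torsion `±1`, so eight square classes, and the eight products of the chosen units are
pairwise inequivalent modulo squares. -/
lemma unit_class (u : (𝓞 K)ˣ) : ∃ e, ∃ v : (𝓞 K)ˣ, u = un e * v ^ 2 := by
  classical
  have hx : ∀ x : (𝓞 K)ˣ, ∃ c : Bool × (Fin (Units.rank K) → Bool), ∃ w : (𝓞 K)ˣ,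
      x = (if c.1 then -1 else 1) * (∏ i, Units.fundSystem K i ^ (if c.2 i then 1 else 0)) * w ^ 2 := by
    intro x
    obtain ⟨⟨z, m⟩, hx, -⟩ := Units.exist_unique_eq_mul_prod K x
    refine ⟨⟨(z : (𝓞 K)ˣ) ≠ 1, fun i => m i % 2 = 1⟩, ∏ i, Units.fundSystem K i ^ (m i / 2), ?_⟩
    rw [hx, mul_assoc, ← Finset.prod_pow, ← Finset.prod_mul_distrib]
    congr 1
    · rcases torsion_pm z with h | h <;> simp [h]
    · refine Finset.prod_congr rfl fun i _ => ?_
      rw [← zpow_natCast, ← zpow_natCast, ← zpow_mul, ← zpow_add]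
      congr 1
      by_cases h : m i % 2 = 1 <;> simp [h] <;> omega
  choose c w hc using hx
  have hsq : ∀ x y, c x = c y → ∃ v, x * y = v ^ 2 := by
    intro x y h
    refine ⟨(if (c x).1 then -1 else 1) * (∏ i, Units.fundSystem K i ^ (if (c x).2 i then 1 else 0)) * w x * w y, ?_⟩
    have h1 := hc x
    have h2 := hc y
    rw [← h] at h2
    conv_lhs => rw [h1, h2]
    simp only [pow_two]; ac_rfl
  have hinj : Function.Injective (fun e => c (un e)) := fun e f h => by
    obtain ⟨v, hv⟩ := hsq _ _ h
    exact un_inj hv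
  have hbij := (Fintype.bijective_iff_injective_and_card _).2 ⟨hinj, by simp [rank_eq]⟩
  obtain ⟨e, he⟩ := hbij.2 (c u)
  obtain ⟨v, hv⟩ := hsq _ _ he
  refine ⟨e, (un e)⁻¹ * v, ?_⟩
  rw [mul_pow, ← hv]; group

end SR
end

/-! ### Squares in the quartic field -/

noncomputable section
namespace SR
open Polynomial NumberField IsDedekindDomain

lemma prime_θO : Prime θO := by
  have h0 : θO ≠ 0 := by
    intro h; have := absNorm_θ; rw [h] at this; simp at this
  refine (Ideal.span_singleton_prime h0).1 (Ideal.isPrime_of_irreducible_absNorm ?_)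
  rw [absNorm_θ]; exact Nat.prime_two

/-- The generator `2θ + 1` of the prime above the odd ramified prime `43`. -/
def πO : 𝓞 K := 2 * θO + 1

lemma two_coe : ((2 : 𝓞 K) : K) = 2 := map_ofNat (algebraMap (𝓞 K) K) 2

lemma πO_coe : (πO : K) = 2 * θ + 1 := by
  change algebraMap (𝓞 K) K (2 * θO + 1) = _
  rw [map_add, map_mul, map_one, map_ofNat]
  exact congrArg (fun t => 2 * t + 1) θO_coe

lemma absNorm_π : Ideal.absNorm (Ideal.span {πO}) = 43 :=
  absNorm_of_norm (n := -43) (by rw [πO_coe, norm_c]; norm_num)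

lemma prime_πO : Prime πO := by
  have h0 : πO ≠ 0 := by
    intro h; have := absNorm_π; rw [h] at this; simp at this
  refine (Ideal.span_singleton_prime h0).1 (Ideal.isPrime_of_irreducible_absNorm ?_)
  rw [absNorm_π]; exact (by norm_num : Nat.Prime 43)

lemma two_eq : (2 : 𝓞 K) * uB = θO ^ 4 := by
  simp [uB]; linear_combination -θO_rel

/-- Every nonzero algebraic integer of the principal ideal domain `𝓞 K` is squarefree up to a square. -/
lemma sq_decomp (x : 𝓞 K) : x ≠ 0 → ∃ s y : 𝓞 K, x = s * y ^ 2 ∧ s ≠ 0 ∧ y ≠ 0 ∧ ∀ p, Prime p → ¬ p ^ 2 ∣ s := by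
  induction x using UniqueFactorizationMonoid.induction_on_prime with
  | h₁ => intro h; exact absurd rfl h
  | h₂ x hx =>
    intro _
    refine ⟨x, 1, by simp, hx.ne_zero, one_ne_zero, fun p hp h => ?_⟩
    exact hp.not_isUnit (isUnit_of_dvd_unit ((dvd_pow_self p two_ne_zero).trans h) hx)
  | h₃ a p ha hp ih =>
    intro _
    obtain ⟨s, y, rfl, hs, hy, hsq⟩ := ih ha
    by_cases h : p ∣ s
    · obtain ⟨t, rfl⟩ := h
      refine ⟨t, p * y, by ring, fun h => hs (by rw [h, mul_zero]), mul_ne_zero hp.ne_zero hy, fun q hq h => hsq q hq (h.mul_left p)⟩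
    · refine ⟨p * s, y, by ring, mul_ne_zero hp.ne_zero hs, hy, fun q hq hd => ?_⟩
      obtain ⟨t, ht⟩ := hd
      have hqp : q ∣ p * s := ⟨q * t, by rw [ht]; ring⟩
      rcases hq.dvd_or_dvd hqp with h1 | h1
      · obtain ⟨u, hu⟩ := (hq.dvd_prime_iff_associated hp).1 h1
        have : q * (u * s) = q * (q * t) := by rw [← mul_assoc, hu, ht]; ring
        have := mul_left_cancel₀ hq.ne_zero this
        have hqs : q ∣ u * s := ⟨t, this⟩
        rw [Units.dvd_mul_left] at hqs
        exact h ((hu ▸ (Units.mul_right_dvd.2 hqs)))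
      · obtain ⟨s', rfl⟩ := h1
        have : q * (p * s') = q * (q * t) := by linear_combination ht
        have := mul_left_cancel₀ hq.ne_zero this
        have hqs : q ∣ p * s' := ⟨t, this⟩
        rcases hq.dvd_or_dvd hqs with h2 | h2
        · have := ((hq.dvd_prime_iff_associated hp).1 h2).symm.dvd
          exact h (this.mul_right s')
        · exact hsq q hq (by rw [pow_two]; exact mul_dvd_mul_left q h2)

lemma parity {g h : WithZero (Multiplicative ℤ)} (hh : h ≠ 0) : WithZero.exp (-1 : ℤ) * h ^ 2 ≠ g ^ 2 := by
  intro e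
  have hg : g ≠ 0 := by
    rintro rfl
    rw [zero_pow two_ne_zero] at e
    exact mul_ne_zero WithZero.exp_ne_zero (pow_ne_zero 2 hh) e
  have := congrArg WithZero.log e
  rw [WithZero.log_mul WithZero.exp_ne_zero (pow_ne_zero 2 hh), WithZero.log_pow, WithZero.log_pow, WithZero.log_exp] at this
  simp only [nsmul_eq_mul] at this
  push_cast at this
  omega

/-- A prime dividing the squarefree part exactly once is detected by its valuation. -/
lemma prime_cases {x : K} (hv : ∀ v : HeightOneSpectrum (𝓞 K), v.valuation K 2 = 1 → v.valuation K (2 * θ + 1) = 1 → ∃ g, v.valuation K x = g ^ 2)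
    {s y z : 𝓞 K} (hy : y ≠ 0) (hxs : x * (z : K) ^ 2 = (s : K) * (y : K) ^ 2)
    (hsq : ∀ p, Prime p → ¬ p ^ 2 ∣ s) {p : 𝓞 K} (hp : Prime p) (hps : p ∣ s) :
    Associated p θO ∨ Associated p πO := by
  let v : HeightOneSpectrum (𝓞 K) := ⟨Ideal.span {p}, (Ideal.span_singleton_prime hp.ne_zero).2 hp, by simpa using hp.ne_zero⟩
  have lt (r : 𝓞 K) : v.valuation K (r : K) < 1 ↔ p ∣ r := by
    rw [HeightOneSpectrum.valuation_lt_one_iff_mem]; exact Ideal.mem_span_singleton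
  have eq1 (r : 𝓞 K) (h : v.valuation K (r : K) ≠ 1) : p ∣ r :=
    (lt r).1 (lt_of_le_of_ne (HeightOneSpectrum.valuation_le_one v r) h)
  have ne0 (r : 𝓞 K) (h : r ≠ 0) : v.valuation K (r : K) ≠ 0 := by
    rw [Valuation.ne_zero_iff]; exact RingOfIntegers.coe_ne_zero_iff.2 h
  by_cases h2 : v.valuation K 2 = 1
  · by_cases hπ : v.valuation K (2 * θ + 1) = 1
    · exfalso
      obtain ⟨g, hg⟩ := hv v h2 hπ
      obtain ⟨t, rfl⟩ := hps
      have e := congrArg (v.valuation K) hxs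
      simp only [map_mul, map_pow, hg] at e
      have hpv : v.valuation K (p : K) = WithZero.exp (-1) := by
        rw [HeightOneSpectrum.valuation_of_algebraMap]
        exact HeightOneSpectrum.intValuation_singleton v hp.ne_zero rfl
      have htv : v.valuation K (t : K) = 1 := by
        by_contra h
        exact hsq p hp (by rw [pow_two]; exact mul_dvd_mul_left p (eq1 t h))
      rw [hpv, htv, mul_one, ← mul_pow] at e
      exact parity (ne0 y hy) e.symm
    · right
      rw [← πO_coe] at hπ
      exact (hp.dvd_prime_iff_associated prime_πO).1 (eq1 _ hπ)
  · left
    have h2 : v.valuation K ((2 : 𝓞 K) : K) ≠ 1 := by rwa [two_coe]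
    have h3 : p ∣ θO ^ 4 := by rw [← two_eq]; exact (eq1 _ h2).mul_right _
    exact (hp.dvd_prime_iff_associated prime_θO).1 (hp.dvd_of_dvd_pow h3)

lemma split_prime {p s : 𝓞 K} (hp : ¬ p ^ 2 ∣ s) : ∃ i : Fin 2, ∃ t, s = t * p ^ (i : ℕ) ∧ ¬ p ∣ t := by
  by_cases h : p ∣ s
  · obtain ⟨t, rfl⟩ := h
    exact ⟨1, t, by simp [mul_comm], fun h => hp (by rw [pow_two]; exact mul_dvd_mul_left p h)⟩
  · exact ⟨0, s, by simp, h⟩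

/-- An element congruent to `1` modulo `8` with even valuations away from `2` and `2θ + 1` is the
square of an element congruent to `1` modulo `2`. -/
lemma nf_square {x : K} (h8 : Rep x (1,0,0,0))
    (hv : ∀ v : HeightOneSpectrum (𝓞 K), v.valuation K 2 = 1 → v.valuation K (2 * θ + 1) = 1 → ∃ g, v.valuation K x = g ^ 2) :
    ∃ a b c d : R, x = (1 + 2 * el a b c d) ^ 2 := by
  have hx : x ≠ 0 := by
    rintro rfl
    have := h8.uniq Rep_zero
    revert this; decide
  obtain ⟨a, b, hb, hab⟩ := IsFractionRing.div_surjective (A := 𝓞 K) x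
  have hb0 : b ≠ 0 := nonZeroDivisors.ne_zero hb
  have ha0 : a ≠ 0 := by rintro rfl; simp at hab; exact hx hab.symm
  obtain ⟨s, y, hsy, hs, hy, hsq⟩ := sq_decomp (a * b) (mul_ne_zero ha0 hb0)
  have hbK : (b : K) ≠ 0 := RingOfIntegers.coe_ne_zero_iff.2 hb0
  have hxs : x * (b : K) ^ 2 = (s : K) * (y : K) ^ 2 := by
    have := congrArg (algebraMap (𝓞 K) K) hsy
    simp only [map_mul, map_pow] at this
    rw [← this, ← hab]; field_simp
  have hpc := fun {p} => prime_cases hv hy hxs hsq (p := p)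
  obtain ⟨i, t, ht, hti⟩ := split_prime (hsq _ prime_θO)
  have htsq : ¬ πO ^ 2 ∣ t := fun h => hsq _ prime_πO (by rw [ht]; exact h.mul_right _)
  obtain ⟨j, u, hu, hui⟩ := split_prime htsq
  have hunit : IsUnit u := by
    by_contra hnu
    have hu0 : u ≠ 0 := by rintro rfl; rw [zero_mul] at hu; rw [hu, zero_mul] at ht; exact hs ht
    obtain ⟨q, hq, hqu⟩ := WfDvdMonoid.exists_irreducible_factor hnu hu0
    have hqt : q ∣ t := hu ▸ hqu.mul_right _
    rcases hpc hq.prime (ht ▸ hqt.mul_right _) with h | h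
    · exact hti (h.symm.dvd.trans hqt)
    · exact hui (h.symm.dvd.trans hqu)
  obtain ⟨u, rfl⟩ := hunit
  obtain ⟨e, w, hw⟩ := unit_class u
  have key : x = sc e.1 e.2.1 e.2.2 j i * ((w : 𝓞 K) * (y : K) / b) ^ 2 := by
    have hun := un_coe e
    have hsK : (s : K) = sc e.1 e.2.1 e.2.2 j i * ((w : 𝓞 K) : K) ^ 2 := by
      have e1 : (s : K) = ((un e : 𝓞 K) : K) * ((w : 𝓞 K) : K) ^ 2 * (πO : K) ^ (j : ℕ) * (θO : K) ^ (i : ℕ) := by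
        rw [ht, hu, hw]; simp
      rw [e1, hun, πO_coe, θO_coe]
      unfold sc; simp; ring
    rw [div_pow, mul_pow, mul_div_assoc', eq_div_iff (pow_ne_zero 2 hbK), hxs, hsK]; ring
  obtain ⟨⟨h1, h2, h3, h4, h5⟩, a', b', c', d', hy'⟩ := square_class h8 key
  refine ⟨a', b', c', d', ?_⟩
  rw [← hy', key, h1, h2, h3, h4, h5]; simp [sc]

/-- The unit `(θ - 1) ^ 3`, a root of `x⁴ + 8x³ - 12x² + 6x - 1`. -/
def χ : K := (θ - 1) ^ 3

lemma χ_rel : χ ^ 4 + 8 * χ ^ 3 - 12 * χ ^ 2 + 6 * χ - 1 = 0 := by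
  unfold χ
  linear_combination ((13)*θ^0 + (-62)*θ^1 + (148)*θ^2 + (-214)*θ^3 + (201)*θ^4 + (-122)*θ^5 + (46)*θ^6 + (-10)*θ^7 + (1)*θ^8) * θ_rel

lemma θ_eq : θ = 5 - 12 * χ + 8 * χ ^ 2 + χ ^ 3 := by
  unfold χ
  linear_combination ((12)*θ^0 + (-26)*θ^1 + (34)*θ^2 + (-22)*θ^3 + (7)*θ^4 + (-1)*θ^5) * θ_rel

lemma aeval_R (q : R[X]) (x : K) : aeval x q = eval₂ ((algebraMap ℚ K).comp R.subtype) x q := rfl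

lemma Rep_aeval (q : R[X]) : ∃ t, Rep (aeval χ q) t := by
  induction q using Polynomial.induction_on' with
  | add p q hp hq =>
    obtain ⟨_, a, b, c, d, h, -⟩ := hp
    obtain ⟨_, a', b', c', d', h', -⟩ := hq
    exact ⟨_, a + a', b + b', c + c', d + d', by rw [map_add, h, h', el_add]; rfl, rfl⟩
  | monomial n a =>
    have hχ : Rep χ (-1, 3, -3, 1) := ⟨-1, 3, -3, 1, by simp [el, χ]; ring, by simp [(map_ofNat r8 3).symm]⟩
    have hn : ∀ n : ℕ, ∃ t, Rep (χ ^ n) t := by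
      intro n
      induction n with
      | zero => exact ⟨_, by simpa using Rep_one⟩
      | succ n ih => obtain ⟨t, ht⟩ := ih; exact ⟨_, by rw [pow_succ]; exact ht.mul hχ⟩
    obtain ⟨t, ht⟩ := hn n
    have ha : Rep (algebraMap ℚ K (a : ℚ)) (r8 a, 0, 0, 0) := ⟨a, 0, 0, 0, by simp [el], by simp⟩
    exact ⟨_, by rw [aeval_monomial]; exact ha.mul ht⟩

lemma Rep_one_add (q : R[X]) : Rep (1 + 8 * aeval χ q) (1,0,0,0) := by
  obtain ⟨_, a, b, c, d, h, -⟩ := Rep_aeval q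
  have h0 (x : R) : r8 (8 * x) = 0 := r8_eq_zero.2 ⟨x, rfl⟩
  refine ⟨1 + 8 * a, 8 * b, 8 * c, 8 * d, by rw [h]; simp [el]; ring, ?_⟩
  rw [map_add, map_one, h0, h0, h0, h0, add_zero]

/-- The polynomial form of `nf_square`. -/
lemma nf_poly {x : K} (q : R[X]) (hx : x = 1 + 8 * aeval χ q)
    (hv : ∀ v : HeightOneSpectrum (𝓞 K), v.valuation K 2 = 1 → v.valuation K (2 * θ + 1) = 1 → ∃ g, v.valuation K x = g ^ 2) :
    ∃ p : R[X], x = (1 + 2 * aeval χ p) ^ 2 := by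
  obtain ⟨a, b, c, d, h⟩ := nf_square (hx ▸ Rep_one_add q) hv
  let T : R[X] := 5 - 12 * X + 8 * X ^ 2 + X ^ 3
  have hT : aeval χ T = θ := by
    simp only [T, map_add, map_sub, map_mul, map_pow, aeval_X, map_ofNat]
    rw [θ_eq]
  refine ⟨C a + C b * T + C c * T ^ 2 + C d * T ^ 3, ?_⟩
  rw [h]
  simp only [map_add, map_mul, map_pow, hT, aeval_C]
  rfl

end SR
end

/-! ### Even valuations on divisors -/

noncomputable section
namespace SR
open Polynomial

section sel
variable {F Γ : Type*} [Field F] [LinearOrderedCommGroupWithZero Γ] (v : Valuation F Γ)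

lemma lift_poly (p : F[X]) (h : ∀ n, v (p.coeff n) ≤ 1) :
    ∃ P : v.valuationSubring[X], P.map (algebraMap _ F) = p := by
  have : p ∈ Polynomial.lifts (algebraMap v.valuationSubring F) := by
    rw [Polynomial.lifts_iff_coeff_lifts]
    exact fun n => ⟨⟨p.coeff n, h n⟩, rfl⟩
  exact this

lemma unit_iff (x : v.valuationSubring) : IsUnit x ↔ v (x : F) = 1 := by
  refine ⟨fun h => ?_, fun h => ?_⟩
  · obtain ⟨y, hy⟩ := h.exists_right_inv
    have e : v (x : F) * v (y : F) = 1 := by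
      rw [← map_mul]
      have := congrArg (fun t : v.valuationSubring => (t : F)) hy
      simp only [MulMemClass.coe_mul, OneMemClass.coe_one] at this
      rw [this, map_one]
    refine le_antisymm x.2 ?_
    calc (1 : Γ) = v (x : F) * v (y : F) := e.symm
      _ ≤ v (x : F) * 1 := by gcongr; exact y.2
      _ = _ := mul_one _
  · have hx : (x : F) ≠ 0 := by intro h0; rw [h0, map_zero] at h; exact zero_ne_one h
    have hi : v (x : F)⁻¹ ≤ 1 := by rw [map_inv₀, h, inv_one]
    exact IsUnit.of_mul_eq_one ⟨(x : F)⁻¹, hi⟩ (Subtype.ext (mul_inv_cancel₀ hx))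

lemma nonunit_iff (x : v.valuationSubring) : ¬ IsUnit x ↔ IsLocalRing.residue _ x = 0 := by
  rw [IsLocalRing.residue_eq_zero_iff]; rfl

/-- Integral core of the descent lemma: on a divisor cut out by `u`, on which `f` is the square of
`g`, the value of `u` at a simple root of `f` modulo `v` has even valuation. -/
lemma sel_core (f u : v.valuationSubring[X]) (hu : u.Monic) (hd : u.natDegree = 2) (g : F[X])
    (hg : u.map (algebraMap _ F) ∣ f.map (algebraMap _ F) - g ^ 2) (α : v.valuationSubring)
    (h0 : f.eval α = 0) (h1 : IsUnit (f.derivative.eval α)) :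
    ∃ γ, v ((u.eval α : v.valuationSubring) : F) = γ ^ 2 := by
  set ι := algebraMap v.valuationSubring F
  have hι : Function.Injective ι := FaithfulSMul.algebraMap_injective _ _
  have hum : (u.map ι).Monic := hu.map _
  -- replace `g` by its remainder, a linear polynomial
  obtain ⟨g, hg, hgd⟩ : ∃ g : F[X], u.map ι ∣ f.map ι - g ^ 2 ∧ g.natDegree < 2 := by
    refine ⟨g %ₘ u.map ι, ?_, ?_⟩
    · have : g = g %ₘ u.map ι + u.map ι * (g /ₘ u.map ι) := (modByMonic_add_div g (u.map ι)).symm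
      obtain ⟨w, hw⟩ := hg
      refine ⟨w + (g /ₘ u.map ι) * (g + g %ₘ u.map ι), ?_⟩
      linear_combination hw + (g + g %ₘ u.map ι) * this
    · have := natDegree_modByMonic_lt g hum (by
        intro h; have := congrArg natDegree h; rw [natDegree_map_eq_of_injective hι, hd] at this; simp at this)
      rwa [natDegree_map_eq_of_injective hι, hd] at this
  by_cases hintg : ∀ n, v (g.coeff n) ≤ 1
  · obtain ⟨G, rfl⟩ := lift_poly v g hintg
    rw [← Polynomial.map_pow, ← Polynomial.map_sub, map_dvd_map ι hι hu] at hg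
    obtain ⟨w, hw⟩ := hg
    have e0 : G.eval α ^ 2 = - (u.eval α * w.eval α) := by
      have := congrArg (eval α) hw
      simp only [eval_sub, eval_pow, eval_mul, h0] at this
      linear_combination -this
    have e1 : f.derivative.eval α = 2 * G.eval α * G.derivative.eval α + u.derivative.eval α * w.eval α + u.eval α * w.derivative.eval α := by
      have := congrArg (fun p => eval α (derivative p)) hw
      simp only [eval_sub, eval_pow, eval_mul, derivative_sub, derivative_pow, derivative_mul, eval_add] at this
      simp at this
      linear_combination this
    by_cases hw1 : IsUnit (w.eval α)
    · refine ⟨v ((G.eval α : v.valuationSubring) : F), ?_⟩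
      have := congrArg (fun t : v.valuationSubring => v (t : F)) e0
      simp only [SubmonoidClass.coe_pow, NegMemClass.coe_neg, MulMemClass.coe_mul, map_pow, map_mul, Valuation.map_neg, (unit_iff v _).1 hw1, mul_one] at this
      exact this.symm
    · by_cases hu1 : IsUnit (u.eval α)
      · exact ⟨1, by rw [(unit_iff v _).1 hu1, one_pow]⟩
      · exfalso
        rw [nonunit_iff] at hw1 hu1
        have hG : IsLocalRing.residue _ (G.eval α) = 0 := by
          have := congrArg (IsLocalRing.residue _) e0
          rw [map_pow, map_neg, map_mul, hw1, mul_zero, neg_zero] at this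
          exact pow_eq_zero_iff two_ne_zero |>.1 this
        refine (nonunit_iff v _).2 ?_ h1
        rw [e1]; simp only [map_add, map_mul, hw1, hu1, hG]; ring
  · -- a non-integral `g` is divided by its coefficient of largest size
    obtain ⟨c, hc, hcle, n, hn⟩ : ∃ c, 1 < v c ∧ (∀ n, v (g.coeff n) ≤ v c) ∧ ∃ n, g.coeff n = c := by
      have hz : ∀ n, 2 ≤ n → g.coeff n = 0 := fun n h => coeff_eq_zero_of_natDegree_lt (lt_of_lt_of_le hgd h)
      rcases le_total (v (g.coeff 0)) (v (g.coeff 1)) with h | h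
      · refine ⟨g.coeff 1, ?_, ?_, 1, rfl⟩
        · by_contra! h'
          refine hintg fun n => ?_
          rcases n with _ | _ | n
          · exact h.trans h'
          · exact h'
          · rw [hz _ (by omega), map_zero]; exact zero_le_one
        · intro n
          rcases n with _ | _ | n
          · exact h
          · exact le_rfl
          · rw [hz _ (by omega), map_zero]; exact zero_le
      · refine ⟨g.coeff 0, ?_, ?_, 0, rfl⟩
        · by_contra! h'
          refine hintg fun n => ?_
          rcases n with _ | _ | n
          · exact h'
          · exact h.trans h'
          · rw [hz _ (by omega), map_zero]; exact zero_le_one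
        · intro n
          rcases n with _ | _ | n
          · exact le_rfl
          · exact h
          · rw [hz _ (by omega), map_zero]; exact zero_le
    have hc0 : c ≠ 0 := by rintro rfl; rw [map_zero] at hc; exact not_lt_of_ge zero_le_one hc
    have hvc : v c ≠ 0 := (Valuation.ne_zero_iff v).2 hc0
    obtain ⟨G, hG⟩ := lift_poly v (C c⁻¹ * g) (fun n => by
      rw [coeff_C_mul, map_mul, map_inv₀]
      calc (v c)⁻¹ * v (g.coeff n) ≤ (v c)⁻¹ * v c := by gcongr; exact hcle n
        _ = 1 := inv_mul_cancel₀ hvc)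
    have hci : v c⁻¹ < 1 := by rw [map_inv₀]; exact inv_lt_one_of_one_lt₀ hc
    let π : v.valuationSubring := ⟨c⁻¹, hci.le⟩
    have hπ : IsLocalRing.residue _ π = 0 := by
      rw [← nonunit_iff, unit_iff]; exact ne_of_lt hci
    have hdvd : u ∣ C (π ^ 2) * f - G ^ 2 := by
      rw [← map_dvd_map ι hι hu]
      obtain ⟨w, hw⟩ := hg
      refine ⟨C (c⁻¹ ^ 2) * w, ?_⟩
      rw [Polynomial.map_sub, Polynomial.map_mul, Polynomial.map_pow, hG, map_C]
      have : ι (π ^ 2) = c⁻¹ ^ 2 := rfl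
      rw [this, mul_pow, ← C_pow]
      linear_combination C (c⁻¹ ^ 2) * hw
    obtain ⟨w, hw⟩ := hdvd
    set r := IsLocalRing.residue v.valuationSubring
    have hw' : - (G.map r) ^ 2 = u.map r * w.map r := by
      have := congrArg (Polynomial.map r) hw
      rw [Polynomial.map_sub, Polynomial.map_mul, Polynomial.map_pow, Polynomial.map_mul, map_C, map_pow, hπ] at this
      rw [← this]; simp
    have hGn : G.coeff n = 1 := by
      apply hι
      rw [← coeff_map, hG, coeff_C_mul, hn, map_one, inv_mul_cancel₀ hc0]
    have hG0 : G.map r ≠ 0 := by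
      intro h
      have := congrArg (fun p => p.coeff n) h
      simp [hGn] at this
    have hGd : (G.map r).natDegree ≤ 1 := by
      refine natDegree_map_le.trans ?_
      rw [← natDegree_map_eq_of_injective hι, hG]
      exact (natDegree_C_mul_le _ _).trans (by omega)
    have hw0 : w.map r ≠ 0 := by
      intro h; rw [h, mul_zero, neg_eq_zero] at hw'; exact hG0 (pow_eq_zero_iff two_ne_zero |>.1 hw')
    have hud : (u.map r).natDegree = 2 := by rw [hu.natDegree_map, hd]
    have hwd : (w.map r).natDegree = 0 := by
      have := congrArg natDegree hw'
      rw [natDegree_neg, natDegree_pow, natDegree_mul (hu.map r).ne_zero hw0, hud] at this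
      omega
    have hwu : IsUnit (w.eval α) := by
      by_contra h
      rw [nonunit_iff] at h
      rw [eq_C_of_natDegree_eq_zero hwd] at hw0
      apply hw0
      have : (w.map r).eval (r α) = 0 := by rw [eval_map_apply]; exact h
      rw [eq_C_of_natDegree_eq_zero hwd, eval_C] at this
      rw [this, C_0]
    refine ⟨v ((G.eval α : v.valuationSubring) : F), ?_⟩
    have e0 : G.eval α ^ 2 = - (u.eval α * w.eval α) := by
      have := congrArg (eval α) hw
      simp only [eval_sub, eval_pow, eval_mul, h0] at this
      linear_combination -this
    have := congrArg (fun t : v.valuationSubring => v (t : F)) e0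
    simp only [SubmonoidClass.coe_pow, NegMemClass.coe_neg, MulMemClass.coe_mul, map_pow, map_mul, Valuation.map_neg, (unit_iff v _).1 hwu, mul_one] at this
    exact this.symm
end sel

end SR
end

noncomputable section
namespace SR
open Polynomial

section sel
variable {F Γ : Type*} [Field F] [LinearOrderedCommGroupWithZero Γ] (v : Valuation F Γ)

lemma sel_int {a6 a5 a4 a3 a2 a1 a0 u1 u0 α : F} (g w : F[X]) (h6 : v a6 ≤ 1) (h5 : v a5 ≤ 1) (h4 : v a4 ≤ 1)
    (h3 : v a3 ≤ 1) (h2 : v a2 ≤ 1) (h1 : v a1 ≤ 1) (h0 : v a0 ≤ 1) (hu1 : v u1 ≤ 1) (hu0 : v u0 ≤ 1)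
    (hα : v α ≤ 1)
    (e : C a6 * X ^ 6 + C a5 * X ^ 5 + C a4 * X ^ 4 + C a3 * X ^ 3 + C a2 * X ^ 2 + C a1 * X + C a0 - g ^ 2 = (X ^ 2 + C u1 * X + C u0) * w)
    (hr : a6 * α ^ 6 + a5 * α ^ 5 + a4 * α ^ 4 + a3 * α ^ 3 + a2 * α ^ 2 + a1 * α + a0 = 0)
    (hd : v (6 * a6 * α ^ 5 + 5 * a5 * α ^ 4 + 4 * a4 * α ^ 3 + 3 * a3 * α ^ 2 + 2 * a2 * α + a1) = 1) :
    ∃ γ, v (α ^ 2 + u1 * α + u0) = γ ^ 2 := by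
  let A := v.valuationSubring
  let f : A[X] := C (⟨a6, h6⟩ : A) * X ^ 6 + C (⟨a5, h5⟩ : A) * X ^ 5 + C (⟨a4, h4⟩ : A) * X ^ 4 + C (⟨a3, h3⟩ : A) * X ^ 3
    + C (⟨a2, h2⟩ : A) * X ^ 2 + C (⟨a1, h1⟩ : A) * X + C (⟨a0, h0⟩ : A)
  let u : A[X] := X ^ 2 + C (⟨u1, hu1⟩ : A) * X + C (⟨u0, hu0⟩ : A)
  have hA (x : F) (h : v x ≤ 1) : algebraMap A F ⟨x, h⟩ = x := rfl
  have hf : f.map (algebraMap A F) = C a6 * X ^ 6 + C a5 * X ^ 5 + C a4 * X ^ 4 + C a3 * X ^ 3 + C a2 * X ^ 2 + C a1 * X + C a0 := by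
    simp [f, hA]
  have hu : u.map (algebraMap A F) = X ^ 2 + C u1 * X + C u0 := by
    simp [u, hA]
  have hm : u.Monic := by simp only [u]; monicity!
  have hdeg : u.natDegree = 2 := by simp only [u]; compute_degree!
  obtain ⟨γ, hγ⟩ := sel_core v f u hm hdeg g ⟨w, by rw [hf, hu, e]⟩ ⟨α, hα⟩ (by
    apply Subtype.ext
    simp [f]; exact hr) (by
    rw [unit_iff, ← hd]
    congr 1
    have o2 : ((2 : A) : F) = 2 := map_ofNat (algebraMap A F) 2
    have o3 : ((3 : A) : F) = 3 := map_ofNat (algebraMap A F) 3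
    have o4 : ((4 : A) : F) = 4 := map_ofNat (algebraMap A F) 4
    have o5 : ((5 : A) : F) = 5 := map_ofNat (algebraMap A F) 5
    simp [f, o2, o3, o4, o5]; ring)
  refine ⟨γ, ?_⟩
  rw [← hγ]; congr 1
  simp [u]

/-- Let `f` be a quintic with integral coefficients and unit leading coefficient, and let the monic
quadratic `X ^ 2 + u1 X + u0` divide `f - g ^ 2` for some linear `g`.  At a root `α` of `f` which is
simple modulo `v`, the quadratic has even valuation. When the quadratic is not integral, the
substitution `X = c + 1 / X'` with `c = 0` or `c = 1` makes it so. -/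
lemma sel {a5 a4 a3 a2 a1 a0 g1 g0 u1 u0 w3 w2 w1 w0 α : F} (h5 : v a5 = 1) (h4 : v a4 ≤ 1)
    (h3 : v a3 ≤ 1) (h2 : v a2 ≤ 1) (h1 : v a1 ≤ 1) (h0 : v a0 ≤ 1)
    (e5 : a5 = w3) (e4 : a4 = w2 + u1 * w3) (e3 : a3 = w1 + u1 * w2 + u0 * w3)
    (e2 : a2 - g1 ^ 2 = w0 + u1 * w1 + u0 * w2) (e1 : a1 - 2 * g1 * g0 = u1 * w0 + u0 * w1)
    (e0 : a0 - g0 ^ 2 = u0 * w0)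
    (hr : a5 * α ^ 5 + a4 * α ^ 4 + a3 * α ^ 3 + a2 * α ^ 2 + a1 * α + a0 = 0)
    (hd : v (5 * a5 * α ^ 4 + 4 * a4 * α ^ 3 + 3 * a3 * α ^ 2 + 2 * a2 * α + a1) = 1)
    (hα : α = 0 ∨ v α = 1) (hα1 : v (α - 1) = 1) :
    ∃ γ, v (α ^ 2 + u1 * α + u0) = γ ^ 2 := by
  have hαi : v α ≤ 1 := by rcases hα with rfl | h <;> simp [*]
  have key (c : F) (hc : v c ≤ 1) (hac : α = c ∨ v (α - c) = 1) (hu : 1 ≤ v (c ^ 2 + u1 * c + u0))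
      (hu' : v (2 * c + u1) ≤ v (c ^ 2 + u1 * c + u0)) : ∃ γ, v (α ^ 2 + u1 * α + u0) = γ ^ 2 := by
    set D := c ^ 2 + u1 * c + u0 with hD
    have hvD : v D ≠ 0 := fun h => by rw [h] at hu; exact not_lt_of_ge hu zero_lt_one
    have hD0 : D ≠ 0 := (Valuation.ne_zero_iff v).1 hvD
    have b1 : v ((2 * c + u1) / D) ≤ 1 := by rw [map_div₀]; exact div_le_one_of_le₀ hu' zero_le
    have b0 : v (1 / D) ≤ 1 := by rw [map_div₀, map_one]; exact div_le_one_of_le₀ hu zero_le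
    have le (n : ℕ) (x : F) (hx : v x ≤ 1) : v (n * x) ≤ 1 := by
      rw [map_mul]; refine mul_le_one' ?_ hx
      induction n with
      | zero => simp
      | succ n ih => push_cast; exact (Valuation.map_add v _ _).trans (max_le ih (by simp))
    have lp (x : F) (i : ℕ) (hx : v x ≤ 1) : v (x * c ^ i) ≤ 1 := by
      rw [map_mul, map_pow]; exact mul_le_one' hx (pow_le_one' hc i)
    have la (x y : F) (hx : v x ≤ 1) (hy : v y ≤ 1) : v (x + y) ≤ 1 := (Valuation.map_add v _ _).trans (max_le hx hy)
    have s (α' : F) (hα' : v α' ≤ 1) hr hd := sel_int v (α := α') (u1 := (2 * c + u1) / D) (u0 := 1 / D)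
      (a6 := a0 + (a1 * c ^ 1 + (a2 * c ^ 2 + (a3 * c ^ 3 + (a4 * c ^ 4 + a5 * c ^ 5)))))
      (a5 := a1 + ((2 : ℕ) * (a2 * c ^ 1) + ((3 : ℕ) * (a3 * c ^ 2) + ((4 : ℕ) * (a4 * c ^ 3) + (5 : ℕ) * (a5 * c ^ 4)))))
      (a4 := a2 + ((3 : ℕ) * (a3 * c ^ 1) + ((6 : ℕ) * (a4 * c ^ 2) + (10 : ℕ) * (a5 * c ^ 3))))
      (a3 := a3 + ((4 : ℕ) * (a4 * c ^ 1) + (10 : ℕ) * (a5 * c ^ 2)))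
      (a2 := a4 + (5 : ℕ) * (a5 * c ^ 1)) (a1 := a5) (a0 := 0)
      (X ^ 2 * (C g1 * (C c * X + 1) + C g0 * X))
      (C D * X * (C w3 * (C c * X + 1) ^ 3 + C w2 * X * (C c * X + 1) ^ 2 + C w1 * X ^ 2 * (C c * X + 1) + C w0 * X ^ 3))
      (by repeat' first | exact h0 | exact lp _ _ h1 | exact lp _ _ h2 | exact lp _ _ h3 | exact lp _ _ h4 | exact lp _ _ h5.le | apply la)
      (by repeat' first | exact h1 | exact le _ _ (lp _ _ h2) | exact le _ _ (lp _ _ h3) | exact le _ _ (lp _ _ h4) | exact le _ _ (lp _ _ h5.le) | apply la)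
      (by repeat' first | exact h2 | exact le _ _ (lp _ _ h3) | exact le _ _ (lp _ _ h4) | exact le _ _ (lp _ _ h5.le) | apply la)
      (by repeat' first | exact h3 | exact le _ _ (lp _ _ h4) | exact le _ _ (lp _ _ h5.le) | apply la)
      (by repeat' first | exact h4 | exact le _ _ (lp _ _ h5.le) | apply la)
      h5.le (by simp) b1 b0 hα' (by
        have d1 : C D * C ((2 * c + u1) / D) = 2 * C c + C u1 := by
          rw [← C_mul, mul_div_cancel₀ _ hD0]; simp only [map_add, map_mul, C_ofNat]
        have d0 : C D * C (1 / D) = (1 : F[X]) := by rw [← C_mul, mul_one_div_cancel hD0, C_1]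
        have dd : C D = C c ^ 2 + C u1 * C c + C u0 := by rw [hD]; simp
        have f0 := congrArg C e0
        have f1 := congrArg C e1
        have f2 := congrArg C e2
        have f3 := congrArg C e3
        have f4 := congrArg C e4
        have f5 := congrArg C e5
        simp only [map_add, map_sub, map_mul, map_pow, C_ofNat] at f0 f1 f2 f3 f4 f5
        simp only [map_add, map_mul, map_pow, C_ofNat, Nat.cast_ofNat, C_0]
        linear_combination X ^ 6 * f0 + X ^ 5 * (C c * X + 1) * f1 + X ^ 4 * (C c * X + 1) ^ 2 * f2 + X ^ 3 * (C c * X + 1) ^ 3 * f3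
          + X ^ 2 * (C c * X + 1) ^ 4 * f4 + X * (C c * X + 1) ^ 5 * f5
          - (X * (C w3 * (C c * X + 1) ^ 3 + C w2 * X * (C c * X + 1) ^ 2 + C w1 * X ^ 2 * (C c * X + 1) + C w0 * X ^ 3)) * (X * d1 + d0 + X ^ 2 * dd)) hr hd
    obtain ⟨γ, hγ⟩ := s 0 (by simp) (by simp) (by simpa using h5)
    have hDsq : v D = (γ⁻¹) ^ 2 := by
      have : v (1 / D) = γ ^ 2 := by simpa using hγ
      rw [one_div, map_inv₀] at this
      rw [inv_pow, ← this, inv_inv]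
    rcases hac with h | hac
    · exact ⟨γ⁻¹, by rw [← hDsq, hD, h]⟩
    · have hne : α - c ≠ 0 := by
        intro h; rw [h, map_zero] at hac; exact zero_ne_one hac
      obtain ⟨γ', hγ'⟩ := s (α - c)⁻¹ (by rw [map_inv₀, hac, inv_one])
        (by
          push_cast
          field_simp
          linear_combination hr)
        (by
          rw [← hd, ← Valuation.map_neg v (5 * a5 * α ^ 4 + 4 * a4 * α ^ 3 + 3 * a3 * α ^ 2 + 2 * a2 * α + a1)]
          have hac4 : v ((α - c)⁻¹ ^ 4) = 1 := by rw [map_pow, map_inv₀, hac]; simp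
          rw [← one_mul (v (-_)), ← hac4, ← map_mul]
          congr 1
          push_cast
          field_simp
          linear_combination 6 * hr)
      refine ⟨γ⁻¹ * γ', ?_⟩
      rw [mul_pow, ← hDsq, ← hγ', ← map_mul, ← one_mul (v (α ^ 2 + _ + _))]
      have hac2 : v ((α - c)⁻¹ ^ 2) = 1 := by rw [map_pow, map_inv₀, hac]; simp
      rw [← hac2, ← map_mul]
      congr 1
      field_simp
      rw [hD]; ring
  by_cases hi : v u1 ≤ 1 ∧ v u0 ≤ 1
  · refine sel_int v (C g1 * X + C g0) (C w3 * X ^ 3 + C w2 * X ^ 2 + C w1 * X + C w0) (a6 := 0) (by simp) h5.le h4 h3 h2 h1 h0 hi.1 hi.2 hαi ?_ (by linear_combination hr) (by rw [← hd]; congr 1; ring)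
    have f0 := congrArg C e0
    have f1 := congrArg C e1
    have f2 := congrArg C e2
    have f3 := congrArg C e3
    have f4 := congrArg C e4
    have f5 := congrArg C e5
    simp only [map_add, map_sub, map_mul, map_pow, C_ofNat] at f0 f1 f2 f3 f4 f5
    simp only [C_0]
    linear_combination f0 + X * f1 + X ^ 2 * f2 + X ^ 3 * f3 + X ^ 4 * f4 + X ^ 5 * f5
  · have v2 : v 2 ≤ 1 := by
      have := Valuation.map_add v 1 1
      rw [one_add_one_eq_two] at this; simpa using this
    rcases le_or_gt (v u1) (v u0) with h | h
    · have : 1 < v u0 := by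
        by_contra! h'; exact hi ⟨h.trans h', h'⟩
      refine key 0 (by simp) (by simpa using hα) (by simpa using this.le) (by simpa using h)
    · have : 1 < v u1 := by
        by_contra! h'; exact hi ⟨h', h.le.trans h'⟩
      have e : v (1 ^ 2 + u1 * 1 + u0) = v u1 := by
        rw [show (1 : F) ^ 2 + u1 * 1 + u0 = u1 + (1 + u0) by ring]
        refine Valuation.map_add_eq_of_lt_left v ?_
        exact lt_of_le_of_lt (Valuation.map_add v _ _) (max_lt (by simpa using this) h)
      refine key 1 (by simp) (Or.inr hα1) (by rw [e]; exact this.le) ?_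
      rw [e]
      refine (Valuation.map_add v _ _).trans (max_le ?_ le_rfl)
      rw [mul_one]; exact v2.trans this.le
end sel

end SR
end

/-! ### Reduced divisors -/

noncomputable section
namespace SR
open Polynomial NumberField IsDedekindDomain

/-- Reduced divisors on the curve `y ^ 2 = 2 f(x)`, where `f = η x (x ^ 4 + 2 n3 x ^ 3 + 2 n2 x ^ 2 + 2 n1 x - 1)`.
The divisor is cut out by `U = V ^ 2 - 2 k ^ 2 S` and `y = V / k` with `V = x - b`, `S = s1 V + s0`; the
fields are the coefficients of the identity `f = S - ω U`, with `ω = w3 V ^ 3 + w2 V ^ 2 + w1 V + w0`. -/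
structure Dat {A : Type*} [CommRing A] (η n3 n2 n1 : ℤ) (b k s1 s0 w3 w2 w1 w0 : A) : Prop where
  e5 : -w3 = η
  e4 : -w2 + 2 * k ^ 2 * (s1 * w3) = η * (5 * b + 2 * n3)
  e3 : -w1 + 2 * k ^ 2 * (s1 * w2 + s0 * w3) = η * (10 * b ^ 2 + 8 * n3 * b + 2 * n2)
  e2 : -w0 + 2 * k ^ 2 * (s1 * w1 + s0 * w2) = η * (10 * b ^ 3 + 12 * n3 * b ^ 2 + 6 * n2 * b + 2 * n1)
  e1 : s1 + 2 * k ^ 2 * (s1 * w0 + s0 * w1) = η * (5 * b ^ 4 + 8 * n3 * b ^ 3 + 6 * n2 * b ^ 2 + 4 * n1 * b - 1)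
  e0 : s0 + 2 * k ^ 2 * (s0 * w0) = η * (b ^ 5 + 2 * n3 * b ^ 4 + 2 * n2 * b ^ 3 + 2 * n1 * b ^ 2 - b)

variable {η n3 n2 n1 : ℤ}

lemma Dat.map {A B : Type*} [CommRing A] [CommRing B] {b k s1 s0 w3 w2 w1 w0 : A} (H : Dat η n3 n2 n1 b k s1 s0 w3 w2 w1 w0)
    (φ : A →+* B) : Dat η n3 n2 n1 (φ b) (φ k) (φ s1) (φ s0) (φ w3) (φ w2) (φ w1) (φ w0) where
  e5 := by simpa [map_ofNat] using congrArg φ H.e5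
  e4 := by simpa [map_ofNat] using congrArg φ H.e4
  e3 := by simpa [map_ofNat] using congrArg φ H.e3
  e2 := by simpa [map_ofNat] using congrArg φ H.e2
  e1 := by simpa [map_ofNat] using congrArg φ H.e1
  e0 := by simpa [map_ofNat] using congrArg φ H.e0

lemma Dat.identity {A : Type*} [CommRing A] {b k s1 s0 w3 w2 w1 w0 : A} (H : Dat η n3 n2 n1 b k s1 s0 w3 w2 w1 w0) (x : A) :
    η * x * (x ^ 4 + 2 * n3 * x ^ 3 + 2 * n2 * x ^ 2 + 2 * n1 * x - 1) =
      s1 * (x - b) + s0 - (w3 * (x - b) ^ 3 + w2 * (x - b) ^ 2 + w1 * (x - b) + w0) * ((x - b) ^ 2 - 2 * k ^ 2 * (s1 * (x - b) + s0)) := by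
  linear_combination -(x - b) ^ 5 * H.e5 - (x - b) ^ 4 * H.e4 - (x - b) ^ 3 * H.e3 - (x - b) ^ 2 * H.e2 - (x - b) * H.e1 - H.e0

lemma val_int_le {F Γ : Type*} [Field F] [LinearOrderedCommGroupWithZero Γ] (v : Valuation F Γ) (n : ℤ) : v (n : F) ≤ 1 := by
  have h : ∀ n : ℕ, v (n : F) ≤ 1 := by
    intro n
    induction n with
    | zero => simp
    | succ n ih => push_cast; exact (Valuation.map_add v _ _).trans (max_le ih (by simp))
  obtain ⟨m, rfl | rfl⟩ := n.eq_nat_or_neg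
  · simpa using h m
  · simpa using h m

/-- `1 + 2 k ^ 2 ω`, which is `V ^ 2 / U` on the roots of `f`, has even valuation there. -/
lemma Dat.val_sq {F Γ : Type*} [Field F] [LinearOrderedCommGroupWithZero Γ] (v : Valuation F Γ) (h2 : v 2 = 1) (hη : v (η : F) = 1)
    {b k s1 s0 w3 w2 w1 w0 α : F} (H : Dat η n3 n2 n1 b k s1 s0 w3 w2 w1 w0) (hk : k ≠ 0)
    (hr : α * (α ^ 4 + 2 * n3 * α ^ 3 + 2 * n2 * α ^ 2 + 2 * n1 * α - 1) = 0)
    (hd : v (5 * α ^ 4 + 8 * n3 * α ^ 3 + 6 * n2 * α ^ 2 + 4 * n1 * α - 1) = 1)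
    (hα : α = 0 ∨ v α = 1) (hα1 : v (α - 1) = 1)
    (hU : (α - b) ^ 2 - 2 * k ^ 2 * (s1 * (α - b) + s0) ≠ 0) :
    ∃ γ, v (1 + 2 * k ^ 2 * (w3 * (α - b) ^ 3 + w2 * (α - b) ^ 2 + w1 * (α - b) + w0)) = γ ^ 2 := by
  have hi := H.identity α
  have b2 (n : ℤ) : v (2 * (η * (2 * n))) ≤ 1 := by
    have := val_int_le v (2 * (η * (2 * n)))
    push_cast at this; exact this
  obtain ⟨γ, hγ⟩ := sel v (a5 := 2 * η) (a4 := 2 * (η * (2 * n3))) (a3 := 2 * (η * (2 * n2))) (a2 := 2 * (η * (2 * n1))) (a1 := -(2 * η)) (a0 := 0)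
    (g1 := 1 / k) (g0 := - b / k) (u1 := -2 * b - 2 * k ^ 2 * s1) (u0 := b ^ 2 - 2 * k ^ 2 * (s0 - s1 * b))
    (w3 := -2 * w3) (w2 := -2 * (w2 - 3 * b * w3)) (w1 := -2 * (w1 - 2 * b * w2 + 3 * b ^ 2 * w3))
    (w0 := -1 / k ^ 2 - 2 * (w0 - b * w1 + b ^ 2 * w2 - b ^ 3 * w3)) (α := α)
    (by rw [map_mul, h2, hη, one_mul]) (b2 _) (b2 _) (b2 _) (by rw [Valuation.map_neg, map_mul, h2, hη, one_mul]) (by simp)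
    (by linear_combination -2 * H.e5)
    (by linear_combination -2 * H.e4 + 10 * b * H.e5)
    (by linear_combination -2 * H.e3 + 8 * b * H.e4 - 20 * b ^ 2 * H.e5)
    (by field_simp; linear_combination (-2 * H.e2 + 6 * b * H.e3 - 12 * b ^ 2 * H.e4 + 20 * b ^ 3 * H.e5) * k ^ 2)
    (by field_simp; linear_combination (-2 * H.e1 + 4 * b * H.e2 - 6 * b ^ 2 * H.e3 + 8 * b ^ 3 * H.e4 - 10 * b ^ 4 * H.e5) * k ^ 2)
    (by field_simp; linear_combination (-2 * H.e0 + 2 * b * H.e1 - 2 * b ^ 2 * H.e2 + 2 * b ^ 3 * H.e3 - 2 * b ^ 4 * H.e4 + 2 * b ^ 5 * H.e5) * k ^ 2)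
    (by linear_combination 2 * η * hr)
    (by
      have := congrArg (fun t => v (2 * η) * t) hd
      simp only [← map_mul] at this
      rw [map_mul _ 2, h2, hη, mul_one, mul_one] at this
      rw [← this]; congr 1; ring) hα hα1
  have hγ' : v ((α - b) ^ 2 - 2 * k ^ 2 * (s1 * (α - b) + s0)) = γ ^ 2 := by rw [← hγ]; congr 1; ring
  refine ⟨v (α - b) / γ, ?_⟩
  rw [div_pow, ← hγ', ← map_pow, eq_div_iff ((Valuation.ne_zero_iff v).2 hU), ← map_mul]
  congr 1
  linear_combination 2 * k ^ 2 * hi - 2 * k ^ 2 * η * hr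

/-- The rational analogue of `Dat.val_sq` at the root `0`, including divisors meeting it. -/
lemma Dat.val_sq_zero {F Γ : Type*} [Field F] [LinearOrderedCommGroupWithZero Γ] (v : Valuation F Γ) (h2 : v 2 = 1) (hη : η = 1 ∨ η = -1)
    {b k s1 s0 w3 w2 w1 w0 : F} (H : Dat η n3 n2 n1 b k s1 s0 w3 w2 w1 w0) (hk : k ≠ 0) :
    ∃ γ, v (1 + 2 * k ^ 2 * (w3 * (0 - b) ^ 3 + w2 * (0 - b) ^ 2 + w1 * (0 - b) + w0)) = γ ^ 2 := by
  have hη' : v (η : F) = 1 := by rcases hη with rfl | rfl <;> simp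
  have hη2 : (η : F) ^ 2 = 1 := by rcases hη with rfl | rfl <;> simp
  by_cases hU : ((0 - b) ^ 2 - 2 * k ^ 2 * (s1 * (0 - b) + s0)) = 0
  · have hi := H.identity 0
    rw [hU] at hi
    have hb : b = 0 := by
      have : b ^ 2 = 0 := by linear_combination hU - 2 * k ^ 2 * hi
      exact pow_eq_zero_iff two_ne_zero |>.1 this
    subst hb
    have hs0 : s0 = 0 := by linear_combination - hi
    subst hs0
    have e1 := H.e1
    have hs1 : s1 ≠ 0 := by
      rintro rfl
      have : (η : F) ^ 2 = 0 := by linear_combination η * e1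
      rw [hη2] at this; exact one_ne_zero this
    have h20 : (2 : F) ≠ 0 := by intro h; rw [h, map_zero] at h2; exact zero_ne_one h2
    set x := 2 * k ^ 2 * s1 with hx
    have hx0 : x ≠ 0 := mul_ne_zero (mul_ne_zero h20 (pow_ne_zero 2 hk)) hs1
    have hix := H.identity x
    have hmx : s1 = η * (x ^ 4 + 2 * n3 * x ^ 3 + 2 * n2 * x ^ 2 + 2 * n1 * x - 1) := by
      apply mul_left_cancel₀ hx0
      rw [hx] at hix ⊢
      linear_combination - hix
    have hvx : v x = v k ^ 2 * v s1 := by rw [hx]; simp [h2]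
    have hvk : v k ≠ 0 := (Valuation.ne_zero_iff v).2 hk
    have hvs : v s1 ≠ 0 := (Valuation.ne_zero_iff v).2 hs1
    have hvm : v s1 = v (x ^ 4 + 2 * n3 * x ^ 3 + 2 * n2 * x ^ 2 + 2 * n1 * x - 1) := by
      conv_lhs => rw [hmx, map_mul, hη', one_mul]
    have hb (n : ℤ) : v (2 * (n : F)) ≤ 1 := by rw [map_mul, h2, one_mul]; exact val_int_le v n
    have hsq : ∃ γ, v s1 = γ ^ 2 := by
      rcases lt_trichotomy (v x) 1 with h | h | h
      · refine ⟨1, ?_⟩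
        have lt (y : F) (hy : v y ≤ 1) : v (y * x) < 1 := by
          rw [map_mul]; exact mul_lt_one_of_nonneg_of_lt_one_right hy zero_le h
        have : v (x * (x ^ 3 + 2 * n3 * x ^ 2 + 2 * n2 * x + 2 * n1)) < v (-1) := by
          rw [Valuation.map_neg, map_one, mul_comm]
          refine lt _ ?_
          have p (i : ℕ) : v (x ^ i) ≤ 1 := by rw [map_pow]; exact pow_le_one' h.le i
          have hm (y z : F) (hy : v y ≤ 1) (hz : v z ≤ 1) : v (y * z) ≤ 1 := by rw [map_mul]; exact mul_le_one' hy hz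
          exact (Valuation.map_add v _ _).trans (max_le ((Valuation.map_add v _ _).trans (max_le ((Valuation.map_add v _ _).trans (max_le (p 3) (hm _ _ (hb _) (p 2)))) (hm _ _ (hb _) h.le))) (hb _))
        rw [hvm, show x ^ 4 + 2 * n3 * x ^ 3 + 2 * n2 * x ^ 2 + 2 * n1 * x - 1 = x * (x ^ 3 + 2 * n3 * x ^ 2 + 2 * n2 * x + 2 * n1) + -1 by ring,
          Valuation.map_add_eq_of_lt_right v this, Valuation.map_neg, map_one, one_pow]
      · refine ⟨(v k)⁻¹, ?_⟩
        rw [h] at hvx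
        rw [inv_pow, eq_inv_of_mul_eq_one_right hvx.symm]
      · refine ⟨v x ^ 2, ?_⟩
        have hx4 : v (x ^ 4) = (v x ^ 2) ^ 2 := by rw [map_pow, ← pow_mul]
        have lt (y : F) (hy : v y ≤ 1) (i : ℕ) (hi : i < 4) : v (y * x ^ i) < v (x ^ 4) := by
          rw [map_mul, map_pow, map_pow]
          calc v y * v x ^ i ≤ 1 * v x ^ i := by gcongr
            _ = v x ^ i := one_mul _
            _ < v x ^ 4 := pow_lt_pow_right₀ h hi
        have : v (2 * n3 * x ^ 3 + 2 * n2 * x ^ 2 + 2 * n1 * x ^ 1 + -1 * x ^ 0) < v (x ^ 4) :=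
          Valuation.map_add_lt v (Valuation.map_add_lt v (Valuation.map_add_lt v (lt _ (hb _) 3 (by norm_num)) (lt _ (hb _) 2 (by norm_num))) (lt _ (hb _) 1 (by norm_num))) (lt _ (by simp) 0 (by norm_num))
        rw [hvm, ← hx4, show x ^ 4 + 2 * n3 * x ^ 3 + 2 * n2 * x ^ 2 + 2 * n1 * x - 1 = x ^ 4 + (2 * n3 * x ^ 3 + 2 * n2 * x ^ 2 + 2 * n1 * x ^ 1 + -1 * x ^ 0) by ring,
          Valuation.map_add_eq_of_lt_left v this]
    obtain ⟨γ, hγ⟩ := hsq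
    refine ⟨γ⁻¹, ?_⟩
    have : v (s1 * (1 + 2 * k ^ 2 * (w3 * (0 - 0) ^ 3 + w2 * (0 - 0) ^ 2 + w1 * (0 - 0) + w0))) = 1 := by
      rw [← hη', ← Valuation.map_neg v (η : F)]; congr 1; linear_combination e1
    rw [map_mul, hγ] at this
    rw [inv_pow]; exact eq_inv_of_mul_eq_one_right this
  · exact H.val_sq v h2 hη' hk (by ring) (by simp) (Or.inl rfl) (by simp) hU

end SR
end

/-! ### The two models of the curve -/

noncomputable section
namespace SR
open Polynomial NumberField IsDedekindDomain

/-- A rational number with even valuation at every odd prime is `±1` or `±2` times a square. -/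
lemma rat_class {x : ℚ} (hx : x ≠ 0) (h : ∀ (p : ℕ) [Fact p.Prime], p ≠ 2 → ∃ g, Rat.padicValuation p x = g ^ 2) :
    ∃ e y : ℚ, (e = 1 ∨ e = -1 ∨ e = 2 ∨ e = -2) ∧ x = e * y ^ 2 := by
  have hN : x.num * x.den ≠ 0 := mul_ne_zero (Rat.num_ne_zero.2 hx) (by exact_mod_cast x.den_nz)
  have hxd : x * (x.den : ℚ) ^ 2 = ((x.num * x.den : ℤ) : ℚ) := by
    push_cast; nth_rewrite 1 [← Rat.num_div_den x]
    have : (x.den : ℚ) ≠ 0 := by exact_mod_cast x.den_nz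
    field_simp
  have hd : (x.den : ℚ) ≠ 0 := by exact_mod_cast x.den_nz
  set N := x.num * x.den
  obtain ⟨a, b, hab, ha⟩ := Nat.sq_mul_squarefree N.natAbs
  have hNa : N.natAbs ≠ 0 := Int.natAbs_ne_zero.2 hN
  have hb0 : b ≠ 0 := by rintro rfl; apply hNa; rw [← hab]; simp
  have hodd : ∀ p : ℕ, p.Prime → p ∣ a → p = 2 := by
    intro p hp hpa
    by_contra h2
    have := Fact.mk hp
    obtain ⟨g, hg⟩ := h p h2
    obtain ⟨a', rfl⟩ := hpa
    have hpa' : ¬ p ∣ a' := by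
      rintro ⟨c, rfl⟩
      have := ha p ⟨c, by ring⟩
      exact hp.one_lt.ne' (Nat.isUnit_iff.1 this)
    have e : Rat.padicValuation p (x * (x.den : ℚ) ^ 2) = Rat.padicValuation p ((p * a' : ℕ) * (b : ℚ) ^ 2) := by
      have e0 : (p * a' : ℕ) * (b : ℚ) ^ 2 = ((N.natAbs : ℕ) : ℚ) := by rw [← hab]; push_cast; ring
      rw [hxd, e0]
      rcases Int.natAbs_eq N with h' | h'
      · conv_lhs => rw [h', Int.cast_natCast]
      · conv_lhs => rw [h', Int.cast_neg, Int.cast_natCast, Valuation.map_neg]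
    have ha1 : Rat.padicValuation p (a' : ℚ) = 1 := by
      have h0 : a' ≠ 0 := by rintro rfl; simp at hpa'
      have : padicValRat p (a' : ℚ) = 0 := by
        rw [padicValRat.of_nat, padicValNat.eq_zero_of_not_dvd hpa']; rfl
      simp [Rat.padicValuation, h0, this]
    rw [map_mul, hg] at e
    push_cast at e
    rw [map_mul, map_mul, Rat.padicValuation_self, ha1, map_pow, map_pow, mul_one, ← mul_pow] at e
    exact parity ((Valuation.ne_zero_iff _).2 (by exact_mod_cast hb0)) e.symm
  have ha2 : a = 1 ∨ a = 2 := by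
    have ha0 : a ≠ 0 := ha.ne_zero
    have h1 : ∀ c, c ∣ a → ¬ 2 ∣ c → c = 1 := by
      intro c hc h2
      by_contra h1
      obtain ⟨p, hp, hpc⟩ := Nat.exists_prime_and_dvd h1
      exact h2 (hodd p hp (hpc.trans hc) ▸ hpc)
    by_cases h2 : 2 ∣ a
    · obtain ⟨c, rfl⟩ := h2
      right
      rw [h1 c (dvd_mul_left _ _), mul_one]
      rintro ⟨d, rfl⟩
      have := ha 2 ⟨d, by ring⟩
      simp at this
    · exact Or.inl (h1 a dvd_rfl h2)
  have hNe : ((N : ℤ) : ℚ) = a * (b : ℚ) ^ 2 ∨ ((N : ℤ) : ℚ) = -(a * (b : ℚ) ^ 2) := by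
    rcases Int.natAbs_eq N with h' | h'
    · left; rw [h', ← hab]; push_cast; ring
    · right; rw [h', ← hab]; push_cast; ring
  generalize (x.den : ℚ) = D at hxd hd
  rcases hNe with h1 | h1
  · refine ⟨a, b / D, ?_, by field_simp; rw [hxd, h1]⟩
    rcases ha2 with rfl | rfl <;> norm_num
  · refine ⟨-a, b / D, ?_, by field_simp; rw [hxd, h1]⟩
    rcases ha2 with rfl | rfl <;> norm_num

/-- The data attached to a model `y ^ 2 = 2 η x (x ^ 4 + 2 n3 x ^ 3 + 2 n2 x ^ 2 + 2 n1 x - 1)` of the curve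
whose quartic factor has the root `α` in the quartic field. The fields `toα` and `ofα` say that `R[χ] = R[α]`, and `sep` that
`0`, `1` and `α` stay distinct and `α` remains a simple root at the primes away from `2` and `2 θ + 1`. -/
structure Model (η n3 n2 n1 : ℤ) (α : K) : Prop where
  hη : η = 1 ∨ η = -1
  root : α ^ 4 + 2 * n3 * α ^ 3 + 2 * n2 * α ^ 2 + 2 * n1 * α - 1 = 0
  indep : ∀ a b c d : ℚ, algebraMap ℚ K a + algebraMap ℚ K b * α + algebraMap ℚ K c * α ^ 2 + algebraMap ℚ K d * α ^ 3 = 0 →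
    a = 0 ∧ b = 0 ∧ c = 0 ∧ d = 0
  toα : ∀ P : R[X], ∃ Q : R[X], aeval χ P = aeval α Q
  ofα : ∀ P : R[X], ∃ Q : R[X], aeval α P = aeval χ Q
  sep : ∀ v : HeightOneSpectrum (𝓞 K), v.valuation K 2 = 1 → v.valuation K (2 * θ + 1) = 1 →
    v.valuation K α = 1 ∧ v.valuation K (α - 1) = 1 ∧
    v.valuation K (5 * α ^ 4 + 8 * n3 * α ^ 3 + 6 * n2 * α ^ 2 + 4 * n1 * α - 1) = 1

lemma val_unit {v : HeightOneSpectrum (𝓞 K)} {x y : 𝓞 K} {z : K} (h : (x : K) * (y : K) = z) (hz : v.valuation K z = 1) :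
    v.valuation K (x : K) = 1 := by
  have e : v.valuation K (x : K) * v.valuation K (y : K) = 1 := by rw [← map_mul, h, hz]
  refine le_antisymm (HeightOneSpectrum.valuation_le_one v x) ?_
  calc 1 = v.valuation K (x : K) * v.valuation K (y : K) := e.symm
    _ ≤ v.valuation K (x : K) * 1 := by gcongr; exact HeightOneSpectrum.valuation_le_one v y
    _ = _ := mul_one _

lemma χ_inv : χ * (1 + θ) = 1 := by unfold χ; linear_combination θ_rel

/-- An integral element given by its coordinates. -/
def elO (a b c d : ℤ) : 𝓞 K := a + b * θO + c * θO ^ 2 + d * θO ^ 3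

lemma elO_coe (a b c d : ℤ) : (elO a b c d : K) = a + b * θ + c * θ ^ 2 + d * θ ^ 3 := by
  change algebraMap (𝓞 K) K (elO a b c d) = _
  simp only [elO, map_add, map_mul, map_pow, map_intCast]
  rfl

lemma model_χ : Model 1 4 (-6) 3 χ where
  hη := Or.inl rfl
  root := by push_cast; linear_combination χ_rel
  indep a b c d h := by
    have e : el (a - b + 15 * c - 137 * d) (3 * b - 28 * c + 261 * d) (-3 * b + 25 * c - 236 * d) (b - 8 * c + 76 * d) = el 0 0 0 0 := by
      rw [show el 0 0 0 0 = 0 by simp [el], ← h]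
      simp only [el, χ, map_add, map_sub, map_mul, map_ofNat, map_neg]
      linear_combination (-(algebraMap ℚ K c) * (θ ^ 2 - 4 * θ + 7) - (algebraMap ℚ K d) * (θ ^ 5 - 7 * θ ^ 4 + 22 * θ ^ 3 - 42 * θ ^ 2 + 58 * θ - 68)) * θ_rel
    obtain ⟨h1, h2, h3, h4⟩ := el_inj e
    refine ⟨?_, ?_, ?_, ?_⟩ <;> linarith
  toα P := ⟨P, rfl⟩
  ofα P := ⟨P, rfl⟩
  sep v h2 h3 := by
    refine ⟨?_, ?_, ?_⟩
    · have := val_unit (v := v) (x := elO (-1) 3 (-3) 1) (y := elO 1 1 0 0) (z := 1)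
        (by rw [elO_coe, elO_coe]; push_cast; linear_combination θ_rel) (map_one _)
      rwa [elO_coe, show ((-1 : ℤ) : K) + (3 : ℤ) * θ + (-3 : ℤ) * θ ^ 2 + (1 : ℤ) * θ ^ 3 = χ by unfold χ; push_cast; ring] at this
    · have := val_unit (v := v) (x := elO (-2) 3 (-3) 1) (y := elO (-4) 0 2 (-1)) (z := 2)
        (by rw [elO_coe, elO_coe]; push_cast; linear_combination (-θ ^ 2 + 3 * θ - 3) * θ_rel) h2
      rwa [elO_coe, show ((-2 : ℤ) : K) + (3 : ℤ) * θ + (-3 : ℤ) * θ ^ 2 + (1 : ℤ) * θ ^ 3 = χ - 1 by unfold χ; push_cast; ring] at this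
    · have := val_unit (v := v) (x := elO 1478 (-2814) 2542 (-818)) (y := elO 9 (-11) (-4) 12) (z := 2 * (2 * θ + 1))
        (by rw [elO_coe, elO_coe]; push_cast; linear_combination (-9816 * θ ^ 2 + 14144 * θ - 6650) * θ_rel) (by rw [map_mul, h2, h3, one_mul])
      rw [elO_coe] at this
      rw [← this]; congr 1
      unfold χ; push_cast
      linear_combination -(-777 + 870 * θ - 1100 * θ ^ 2 + 1246 * θ ^ 3 - 1061 * θ ^ 4 + 618 * θ ^ 5 - 230 * θ ^ 6 + 50 * θ ^ 7 - 5 * θ ^ 8) * θ_rel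

lemma model_inv : Model (-1) (-3) 6 (-4) (1 + θ) where
  hη := Or.inr rfl
  root := by push_cast; linear_combination θ_rel
  indep a b c d h := by
    have e : el (a + b + c + d) (b + 2 * c + 3 * d) (c + 3 * d) d = el 0 0 0 0 := by
      rw [show el 0 0 0 0 = 0 by simp [el], ← h]
      simp only [el, map_add, map_mul, map_ofNat]
      ring
    obtain ⟨h1, h2, h3, h4⟩ := el_inj e
    refine ⟨?_, ?_, ?_, ?_⟩ <;> linarith
  toα P := ⟨P.comp ((X - 2) ^ 3), by rw [aeval_comp]; congr 1; simp [χ, map_ofNat]; ring⟩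
  ofα P := ⟨P.comp (X ^ 3 + 8 * X ^ 2 - 12 * X + 6), by
    rw [aeval_comp]; congr 1
    simp [map_ofNat, θ_eq]; ring⟩
  sep v h2 h3 := by
    refine ⟨?_, ?_, ?_⟩
    · have := val_unit (v := v) (x := elO 1 1 0 0) (y := elO (-1) 3 (-3) 1) (z := 1)
        (by rw [elO_coe, elO_coe]; push_cast; linear_combination θ_rel) (map_one _)
      rwa [elO_coe, show ((1 : ℤ) : K) + (1 : ℤ) * θ + (0 : ℤ) * θ ^ 2 + (0 : ℤ) * θ ^ 3 = 1 + θ by push_cast; ring] at this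
    · have := val_unit (v := v) (x := elO 0 1 0 0) (y := elO 2 0 (-2) 1) (z := 2)
        (by rw [elO_coe, elO_coe]; push_cast; linear_combination θ_rel) h2
      rwa [elO_coe, show ((0 : ℤ) : K) + (1 : ℤ) * θ + (0 : ℤ) * θ ^ 2 + (0 : ℤ) * θ ^ 3 = 1 + θ - 1 by push_cast; ring] at this
    · have := val_unit (v := v) (x := elO 10 (-6) (-6) 6) (y := elO (-1) 1 0 0) (z := 2 * (2 * θ + 1))
        (by rw [elO_coe, elO_coe]; push_cast; linear_combination 6 * θ_rel) (by rw [map_mul, h2, h3, one_mul])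
      rw [elO_coe] at this
      rw [← this]; congr 1
      push_cast
      linear_combination 5 * θ_rel

end SR
end

/-! ### The ring `R[α]` -/

noncomputable section
namespace SR
open Polynomial NumberField IsDedekindDomain

/-- The ring `R[α]`. -/
abbrev RA (α : K) : Subalgebra R K := Algebra.adjoin R {α}

/-- The generator of `R[α]`. -/
def gen (α : K) : RA α := ⟨α, Algebra.subset_adjoin rfl⟩

lemma gen_coe (α : K) : (gen α : K) = α := rfl

/-- The structure map of `R[α]`. -/
abbrev ι (α : K) : R →+* RA α := algebraMap R (RA α)

lemma ι_coe (α : K) (x : R) : (ι α x : K) = algebraMap ℚ K (x : ℚ) := rfl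

lemma aeval_mem (α : K) (P : R[X]) : ∃ y : RA α, (y : K) = aeval α P :=
  ⟨⟨aeval α P, by rw [RA, Algebra.adjoin_singleton_eq_range_aeval]; exact ⟨P, rfl⟩⟩, rfl⟩

lemma mem_aeval {α : K} (y : RA α) : ∃ P : R[X], (y : K) = aeval α P := by
  have : (y : K) ∈ (aeval α : R[X] →ₐ[R] K).range := by
    rw [← Algebra.adjoin_singleton_eq_range_aeval]; exact y.2
  obtain ⟨P, hP⟩ := this
  exact ⟨P, hP.symm⟩

variable {η n3 n2 n1 : ℤ} {α : K}

lemma Model.rootA (h : Model η n3 n2 n1 α) :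
    (gen α) ^ 4 + 2 * n3 * (gen α) ^ 3 + 2 * n2 * (gen α) ^ 2 + 2 * n1 * (gen α) - 1 = 0 := by
  apply Subtype.ext
  push_cast
  exact h.root

lemma Model.indepA (h : Model η n3 n2 n1 α) {a b c d : R}
    (e : ι α a + ι α b * gen α + ι α c * gen α ^ 2 + ι α d * gen α ^ 3 = 0) : a = 0 ∧ b = 0 ∧ c = 0 ∧ d = 0 := by
  have := h.indep a b c d (by have := congrArg Subtype.val e; exact this)
  simpa using this

lemma Model.coords (h : Model η n3 n2 n1 α) (x : RA α) :
    ∃ a b c d : R, x = ι α a + ι α b * gen α + ι α c * gen α ^ 2 + ι α d * gen α ^ 3 := by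
  obtain ⟨x, hx⟩ := x
  induction hx using Algebra.adjoin_induction with
  | mem x hx =>
    obtain rfl : x = α := hx
    exact ⟨0, 1, 0, 0, by simp; rfl⟩
  | algebraMap r => exact ⟨r, 0, 0, 0, by simp⟩
  | add x y hx hy ihx ihy =>
    obtain ⟨a, b, c, d, e⟩ := ihx
    obtain ⟨a', b', c', d', e'⟩ := ihy
    refine ⟨a + a', b + b', c + c', d + d', ?_⟩
    rw [show (⟨x + y, _⟩ : RA α) = ⟨x, hx⟩ + ⟨y, hy⟩ from rfl, e, e']
    simp only [map_add]; ring
  | mul x y hx hy ihx ihy =>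
    obtain ⟨a, b, c, d, e⟩ := ihx
    obtain ⟨a', b', c', d', e'⟩ := ihy
    rw [show (⟨x * y, _⟩ : RA α) = ⟨x, hx⟩ * ⟨y, hy⟩ from rfl, e']
    have key : ∀ z : RA α, (∃ a b c d : R, z = ι α a + ι α b * gen α + ι α c * gen α ^ 2 + ι α d * gen α ^ 3) →
        ∃ a b c d : R, z * gen α = ι α a + ι α b * gen α + ι α c * gen α ^ 2 + ι α d * gen α ^ 3 := by
      rintro z ⟨a, b, c, d, rfl⟩
      refine ⟨d, a - 2 * n1 * d, b - 2 * n2 * d, c - 2 * n3 * d, ?_⟩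
      simp only [map_sub, map_mul, map_ofNat, map_intCast]
      linear_combination ι α d * h.rootA
    have hs : ∀ (r : R) (z w : RA α), (∃ a b c d : R, z = ι α a + ι α b * gen α + ι α c * gen α ^ 2 + ι α d * gen α ^ 3) →
      (∃ a b c d : R, w = ι α a + ι α b * gen α + ι α c * gen α ^ 2 + ι α d * gen α ^ 3) → ∃ a b c d : R, z + ι α r * w = ι α a + ι α b * gen α + ι α c * gen α ^ 2 + ι α d * gen α ^ 3 := by
      rintro r _ _ ⟨a, b, c, d, rfl⟩ ⟨a', b', c', d', rfl⟩
      refine ⟨a + r * a', b + r * b', c + r * c', d + r * d', ?_⟩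
      simp only [map_add, map_mul]; ring
    set X : RA α := ⟨x, hx⟩
    have e0 : ∃ a b c d : R, X = ι α a + ι α b * gen α + ι α c * gen α ^ 2 + ι α d * gen α ^ 3 := ⟨a, b, c, d, e⟩
    have e1 := key _ e0
    have e2 := key _ e1
    have e3 := key _ e2
    obtain ⟨p, q, r, s, f⟩ := hs d' _ _ (hs c' _ _ (hs b' _ _ (hs a' 0 _ ⟨0, 0, 0, 0, by simp⟩ e0) e1) e2) e3
    exact ⟨p, q, r, s, by rw [← f]; ring⟩

/-- Reduction modulo `2` of a quartic expression in the generator. -/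
lemma Model.quartic_even (h : Model η n3 n2 n1 α) {c4 c3 c2 c1 c0 : R} {y : RA α}
    (e : ι α c4 * gen α ^ 4 + ι α c3 * gen α ^ 3 + ι α c2 * gen α ^ 2 + ι α c1 * gen α + ι α c0 = 2 * y) :
    2 ∣ c3 ∧ 2 ∣ c2 ∧ 2 ∣ c1 ∧ 2 ∣ c0 + c4 := by
  obtain ⟨a, b, c, d, rfl⟩ := h.coords y
  obtain ⟨h0, h1, h2, h3⟩ := h.indepA (a := c0 + c4 - 2 * a) (b := c1 - 2 * n1 * c4 - 2 * b) (c := c2 - 2 * n2 * c4 - 2 * c)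
    (d := c3 - 2 * n3 * c4 - 2 * d) (by
      simp only [map_sub, map_mul, map_ofNat, map_intCast, map_add]
      linear_combination e - ι α c4 * h.rootA)
  exact ⟨⟨n3 * c4 + d, by linear_combination h3⟩, ⟨n2 * c4 + c, by linear_combination h2⟩, ⟨n1 * c4 + b, by linear_combination h1⟩,
    ⟨a, by linear_combination h0⟩⟩

/-- Modulo `2` the ring `R[α]` is local, so an idempotent is `0` or `1`. -/
lemma Model.idem (h : Model η n3 n2 n1 α) {p y : RA α} (e : p * (p + 1) = 2 * y) :
    ∃ q : RA α, p = 2 * q ∨ p = 2 * q - 1 := by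
  obtain ⟨a, b, c, d, rfl⟩ := h.coords p
  have hr := h.rootA
  set g := gen α
  obtain ⟨i3, i2, i1, i0⟩ := h.quartic_even (c4 := c ^ 2) (c3 := d) (c2 := c + b ^ 2 + d ^ 2) (c1 := b) (c0 := a + a ^ 2)
    (y := y - ι α d ^ 2 * (g ^ 2 * (-n3 * g ^ 3 - n2 * g ^ 2 - n1 * g)) - ι α a * ι α b * g - ι α a * ι α c * g ^ 2
      - ι α a * ι α d * g ^ 3 - ι α b * ι α c * g ^ 3 - ι α b * ι α d * g ^ 4 - ι α c * ι α d * g ^ 5) (by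
      simp only [map_pow, map_add]
      linear_combination e - ι α d ^ 2 * g ^ 2 * hr)
  obtain ⟨b', rfl⟩ := i1
  obtain ⟨d', rfl⟩ := i3
  obtain ⟨c', hc'⟩ : 2 ∣ c := by
    obtain ⟨t, ht⟩ := i2
    exact ⟨t - 2 * b' ^ 2 - 2 * d' ^ 2, by linear_combination ht⟩
  subst hc'
  rcases even_or_odd a with ⟨a', rfl⟩ | ⟨a', rfl⟩
  · refine ⟨ι α a' + ι α b' * g + ι α c' * g ^ 2 + ι α d' * g ^ 3, Or.inl ?_⟩
    simp only [map_mul, map_ofNat]; ring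
  · refine ⟨ι α (a' + 1) + ι α b' * g + ι α c' * g ^ 2 + ι α d' * g ^ 3, Or.inr ?_⟩
    simp only [map_mul, map_ofNat, map_add, map_one]; ring

lemma Model.two_not_unit (h : Model η n3 n2 n1 α) (y : RA α) : 2 * y ≠ 1 := by
  intro e
  obtain ⟨-, -, -, i⟩ := h.quartic_even (c4 := 0) (c3 := 0) (c2 := 0) (c1 := 0) (c0 := 1) (y := y) (by simp [e])
  obtain ⟨t, ht⟩ := i
  exact two_mul_ne_odd t 0 (by linear_combination -ht)

/-- `1 + 8 m ^ 2 ω` is a square at the root `α`. -/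
lemma Model.sqα (h : Model η n3 n2 n1 α) {b m s1 s0 w3 w2 w1 w0 : R} (hm : m ≠ 0)
    (H : Dat η n3 n2 n1 b (2 * m) s1 s0 w3 w2 w1 w0) :
    ∃ p : RA α, p * (1 + 2 * p) = ι α m ^ 2 * (ι α w3 * (gen α - ι α b) ^ 3 + ι α w2 * (gen α - ι α b) ^ 2 + ι α w1 * (gen α - ι α b) + ι α w0) := by
  have HK := H.map (algebraMap R K)
  set ω : RA α := ι α m ^ 2 * (ι α w3 * (gen α - ι α b) ^ 3 + ι α w2 * (gen α - ι α b) ^ 2 + ι α w1 * (gen α - ι α b) + ι α w0) with hω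
  obtain ⟨P, hP⟩ := mem_aeval ω
  obtain ⟨Q, hQ⟩ := h.ofα P
  have hωK : (ω : K) = algebraMap R K m ^ 2 * (algebraMap R K w3 * (α - algebraMap R K b) ^ 3 + algebraMap R K w2 * (α - algebraMap R K b) ^ 2 + algebraMap R K w1 * (α - algebraMap R K b) + algebraMap R K w0) := rfl
  obtain ⟨p, hp⟩ := nf_poly (x := 1 + 8 * (ω : K)) Q (by rw [← hQ, ← hP]) (by
    intro v h2 h3
    obtain ⟨i1, i2, i3⟩ := h.sep v h2 h3
    obtain ⟨γ, hγ⟩ := HK.val_sq (v.valuation K) h2 (by rcases h.hη with rfl | rfl <;> simp) (α := α)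
      (by rw [map_mul, map_ofNat]
          refine mul_ne_zero two_ne_zero ?_
          intro e
          have : algebraMap ℚ K (m : ℚ) = algebraMap ℚ K 0 := by rw [map_zero]; exact e
          exact hm (Subtype.ext ((algebraMap ℚ K).injective this)))
      (by rw [h.root, mul_zero]) i3 (Or.inr i1) i2 (by
        intro e
        have := h.indep (b ^ 2 - 2 * (2 * m) ^ 2 * (s0 - s1 * b)) (-2 * b - 2 * (2 * m) ^ 2 * s1) 1 0 (by
          rw [← e]
          simp only [map_sub, map_mul, map_pow, map_ofNat, map_neg, map_one, map_zero]
          change _ = (α - algebraMap ℚ K b) ^ 2 - 2 * (2 * algebraMap ℚ K m) ^ 2 * (algebraMap ℚ K s1 * (α - algebraMap ℚ K b) + algebraMap ℚ K s0)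
          ring)
        exact one_ne_zero this.2.2.1)
    refine ⟨γ, ?_⟩
    rw [← hγ, hωK]; congr 1; simp only [map_mul, map_ofNat]; ring)
  obtain ⟨Q', hQ'⟩ := h.toα p
  obtain ⟨y, hy⟩ := aeval_mem α Q'
  rw [hQ', ← hy] at hp
  have hp2 : 1 + 8 * ω = (1 + 2 * y) ^ 2 := Subtype.ext (by push_cast; exact hp)
  have h2 : y * (y + 1) = 2 * ω := by
    have : (4 : RA α) * (y * (y + 1)) = 4 * (2 * ω) := by linear_combination -hp2
    exact mul_left_cancel₀ (by norm_num) this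
  obtain ⟨q, hq | hq⟩ := h.idem h2
  · refine ⟨q, ?_⟩
    have : (2 : RA α) * (q * (1 + 2 * q)) = 2 * ω := by rw [← h2, hq]; ring
    exact mul_left_cancel₀ (by norm_num) this
  · refine ⟨-q, ?_⟩
    have : (2 : RA α) * (-q * (1 + 2 * -q)) = 2 * ω := by rw [← h2, hq]; ring
    exact mul_left_cancel₀ (by norm_num) this

end SR
end

noncomputable section
namespace SR
open Polynomial NumberField IsDedekindDomain

lemma coe_inj_R {x y : R} (h : (x : ℚ) = y) : x = y := Subtype.ext h

/-- A unit of `R` with even valuation at all odd primes is plus or minus the square of some `1 + 4 t`. -/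
lemma unit_class_R {M N : R} (hM : M = 2 * N + 1) (h : ∀ (p : ℕ) [Fact p.Prime], p ≠ 2 → ∃ g, Rat.padicValuation p (M : ℚ) = g ^ 2) :
    ∃ t : R, M = (1 + 4 * t) ^ 2 ∨ M = -(1 + 4 * t) ^ 2 := by
  have hM0 : (M : ℚ) ≠ 0 := by
    intro h0
    have : M = 0 := coe_inj_R h0
    exact two_mul_ne_odd 0 N (by rw [← hM, this, mul_zero])
  obtain ⟨e, y, he, hy⟩ := rat_class hM0 h
  have hy0 : y ≠ 0 := by rintro rfl; apply hM0; rw [hy]; ring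
  have he' : ∃ e' : R, (e' : ℚ) = e ∧ (e' = 1 ∨ e' = -1 ∨ e' = 2 ∨ e' = -2) := by
    rcases he with rfl | rfl | rfl | rfl
    · exact ⟨1, by simp, by simp⟩
    · exact ⟨-1, by simp, by simp⟩
    · exact ⟨2, by simp, by simp⟩
    · exact ⟨-2, by simp, by simp⟩
  obtain ⟨e', rfl, he'⟩ := he'
  rcases mem_or_inv_even y hy0 with hyR | ⟨m, hm⟩
  · lift y to R using hyR
    have hy : M = e' * y ^ 2 := coe_inj_R (by push_cast; exact hy)
    rw [hM] at hy
    have hev : ∀ t, e' = 2 * t → False := by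
      rintro t rfl
      exact two_mul_ne_odd (t * y ^ 2) N (by rw [hy]; ring)
    obtain ⟨t, ht⟩ : ∃ t, y ^ 2 = (1 + 4 * t) ^ 2 := by
      rcases even_or_odd y with ⟨z, rfl⟩ | ⟨z, rfl⟩
      · exact absurd (by rw [hy]; ring) (two_mul_ne_odd (2 * e' * z ^ 2) N)
      · rcases even_or_odd z with ⟨w, rfl⟩ | ⟨w, rfl⟩
        · exact ⟨w, by ring⟩
        · exact ⟨-w - 1, by ring⟩
    refine ⟨t, ?_⟩
    rw [hM, hy, ht]
    rcases he' with rfl | rfl | rfl | rfl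
    · left; ring
    · right; ring
    · exact (hev 1 (by ring)).elim
    · exact (hev (-1) (by ring)).elim
  · exfalso
    have : M * (2 * m) ^ 2 = e' := coe_inj_R (by push_cast; rw [hy, ← hm]; field_simp)
    rcases he' with rfl | rfl | rfl | rfl
    · exact two_mul_ne_odd (2 * M * m ^ 2) 0 (by linear_combination this)
    · exact two_mul_ne_odd (2 * M * m ^ 2) (-1) (by linear_combination this)
    · have : (2 : R) * (2 * M * m ^ 2) = 2 * (2 * 0 + 1) := by linear_combination this
      exact two_mul_ne_odd (M * m ^ 2) 0 (by linear_combination mul_left_cancel₀ prime_two.ne_zero this)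
    · have : (2 : R) * (2 * M * m ^ 2) = 2 * (2 * (-1) + 1) := by linear_combination this
      exact two_mul_ne_odd (M * m ^ 2) (-1) (by linear_combination mul_left_cancel₀ prime_two.ne_zero this)

lemma padic_two {p : ℕ} [hp : Fact p.Prime] (h : p ≠ 2) : Rat.padicValuation p (2 : ℚ) = 1 := by
  have : padicValRat p (2 : ℚ) = 0 := by
    have e : padicValRat p ((2 : ℕ) : ℚ) = 0 := by
      rw [padicValRat.of_nat, padicValNat.eq_zero_of_not_dvd]; rfl
      intro hd
      exact h ((Nat.prime_dvd_prime_iff_eq hp.out Nat.prime_two).1 hd)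
    exact_mod_cast e
  simp [Rat.padicValuation, this]

variable {η n3 n2 n1 : ℤ} {α : K}

/-- `1 + 2 k ^ 2 ω` is, up to sign, a square at the rational root `0`. -/
lemma Dat.sq_zero (hη : η = 1 ∨ η = -1) {b k s1 s0 w3 w2 w1 w0 : R} (hk : k ≠ 0) (H : Dat η n3 n2 n1 b k s1 s0 w3 w2 w1 w0) :
    ∃ t : R, 1 + 2 * k ^ 2 * (-w3 * b ^ 3 + w2 * b ^ 2 - w1 * b + w0) = (1 + 4 * t) ^ 2 ∨
      1 + 2 * k ^ 2 * (-w3 * b ^ 3 + w2 * b ^ 2 - w1 * b + w0) = -(1 + 4 * t) ^ 2 := by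
  refine unit_class_R (N := k ^ 2 * (-w3 * b ^ 3 + w2 * b ^ 2 - w1 * b + w0)) (by ring) ?_
  intro p hp h2
  obtain ⟨γ, hγ⟩ := (H.map R.subtype).val_sq_zero (Rat.padicValuation p) (padic_two h2) hη (by simpa using hk)
  refine ⟨γ, ?_⟩
  rw [← hγ]; congr 1
  push_cast [Subring.subtype_apply]; ring

lemma red3_one_add_sq (t : R) : red 3 ((1 + 4 * t) ^ 2) = 1 := by
  have : ∀ a : ZMod (2 ^ 3), (1 + 4 * a) ^ 2 = 1 := by decide
  rw [map_pow, map_add, map_mul, map_one, map_ofNat, this]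

/-- `1 + 8 m ^ 2 ω` is a square at the rational root `0`. -/
lemma Dat.sq0 (hη : η = 1 ∨ η = -1) {b m s1 s0 w3 w2 w1 w0 : R} (hm : m ≠ 0) (H : Dat η n3 n2 n1 b (2 * m) s1 s0 w3 w2 w1 w0) :
    ∃ p : R, p * (1 + 2 * p) = m ^ 2 * (-w3 * b ^ 3 + w2 * b ^ 2 - w1 * b + w0) := by
  obtain ⟨t, ht | ht⟩ := H.sq_zero hη (mul_ne_zero prime_two.ne_zero hm)
  · refine ⟨t, ?_⟩
    have : (8 : R) * (t * (1 + 2 * t)) = 8 * (m ^ 2 * (-w3 * b ^ 3 + w2 * b ^ 2 - w1 * b + w0)) := by linear_combination -ht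
    exact mul_left_cancel₀ (by norm_num) this
  · exfalso
    have h1 := congrArg (red 3) ht
    rw [map_neg, red3_one_add_sq] at h1
    simp only [map_add, map_mul, map_one, map_pow, map_ofNat, map_neg, map_sub] at h1
    have h8 : (2 : ZMod (2 ^ 3)) * (2 * red 3 m) ^ 2 = 0 := by
      have : (8 : ZMod (2 ^ 3)) = 0 := by decide
      linear_combination (red 3 m) ^ 2 * this
    rw [h8, zero_mul, add_zero] at h1
    exact absurd h1 (by decide)

/-- There are no divisors with `k` odd on the first model. -/
lemma Dat.not_odd {b k s1 s0 w3 w2 w1 w0 : R} (H : Dat 1 4 (-6) 3 b (2 * k + 1) s1 s0 w3 w2 w1 w0) : False := by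
  obtain ⟨t, ht⟩ := H.sq_zero (Or.inl rfl) (fun h => two_mul_ne_odd 0 k (by rw [h, mul_zero]))
  have h1 : red 3 (1 + 2 * (2 * k + 1) ^ 2 * (-w3 * b ^ 3 + w2 * b ^ 2 - w1 * b + w0)) = 1 ∨
    red 3 (1 + 2 * (2 * k + 1) ^ 2 * (-w3 * b ^ 3 + w2 * b ^ 2 - w1 * b + w0)) = -1 := by
    rcases ht with ht | ht
    · left; rw [ht, red3_one_add_sq]
    · right; rw [ht, map_neg, red3_one_add_sq]
  have HH := H.map (red 3)
  simp only [map_add, map_mul, map_one, map_pow, map_ofNat, map_neg, map_sub] at h1 HH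
  have hk : 2 * (2 * red 3 k + 1) ^ 2 = 2 := by
    have : ∀ a : ZMod (2 ^ 3), 2 * (2 * a + 1) ^ 2 = 2 := by decide
    exact this _
  obtain ⟨e5, e4, e3, e2, e1, e0⟩ := HH
  rw [hk] at h1 e4 e3 e2 e1 e0
  revert h1 e5 e4 e3 e2 e1 e0
  generalize red 3 b = b; generalize red 3 s1 = s1; generalize red 3 s0 = s0
  generalize red 3 w3 = w3; generalize red 3 w2 = w2; generalize red 3 w1 = w1; generalize red 3 w0 = w0
  intro h1 e5 e4 e3 e2 e1 e0
  push_cast at e5 e4 e3 e2 e1 e0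
  obtain rfl : w3 = -1 := by linear_combination -e5
  obtain rfl : w2 = 2 * (s1 * -1) - 1 * (5 * b + 2 * 4) := by linear_combination -e4
  obtain rfl : w1 = 2 * (s1 * (2 * (s1 * -1) - 1 * (5 * b + 2 * 4)) + s0 * -1) - 1 * (10 * b ^ 2 + 8 * 4 * b + 2 * -6) := by linear_combination -e3
  obtain rfl : w0 = 2 * (s1 * (2 * (s1 * (2 * (s1 * -1) - 1 * (5 * b + 2 * 4)) + s0 * -1) - 1 * (10 * b ^ 2 + 8 * 4 * b + 2 * -6)) + s0 * (2 * (s1 * -1) - 1 * (5 * b + 2 * 4)))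
    - 1 * (10 * b ^ 3 + 12 * 4 * b ^ 2 + 6 * -6 * b + 2 * 3) := by linear_combination -e2
  clear e5 e4 e3 e2
  revert b s1 s0
  decide

end SR
end

/-! ### Halving -/

noncomputable section
namespace SR
open Polynomial NumberField IsDedekindDomain

variable {η n3 n2 n1 : ℤ} {α : K}

lemma exists_pow_unit {m : R} (hm : m ≠ 0) : ∃ (n : ℕ) (u : R), IsUnit u ∧ m = 2 ^ n * u := by
  obtain ⟨n, k, hn, h⟩ := exists_odd_mul m
  have hn' : IsUnit (n : R) := by
    obtain ⟨t, rfl⟩ := hn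
    push_cast; exact odd_isUnit _
  obtain ⟨c, hc⟩ := hn'.exists_right_inv
  have h : (n : R) * m = k := coe_inj_R (by push_cast; exact h)
  have hk : k ≠ 0 := by
    rintro rfl
    rw [Int.cast_zero, mul_eq_zero] at h
    exact h.elim hn'.ne_zero hm
  obtain ⟨j, o, ho, e⟩ := Nat.exists_eq_two_pow_mul_odd (Int.natAbs_ne_zero.2 hk)
  have ho' : IsUnit (o : R) := by
    obtain ⟨t, rfl⟩ := ho
    push_cast; exact odd_isUnit _
  have hmc : m = c * k := by linear_combination c * h - m * hc
  have hcu : IsUnit c := IsUnit.of_mul_eq_one (n : R) (by rw [mul_comm]; exact hc)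
  rcases Int.natAbs_eq k with h' | h'
  · refine ⟨j, c * o, hcu.mul ho', ?_⟩
    rw [hmc, h', e]; push_cast; ring
  · refine ⟨j, -(c * o), (hcu.mul ho').neg, ?_⟩
    rw [hmc, h', e]; push_cast; ring

lemma sq_mem_R {x : ℚ} (h : x ^ 2 ∈ R) : x ∈ R := by
  rw [mem_R] at *
  rw [pow_two, padicNorm.mul, ← pow_two] at h
  exact (sq_le_one_iff₀ (padicNorm.nonneg _)).1 h

lemma even_of_sq {x y z : R} (h : x ^ 2 = y ^ 2 + 2 * z) : ∃ e, x = y + 2 * e := by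
  obtain ⟨e, he⟩ : (2 : R) ∣ x - y := by
    refine prime_two.dvd_of_dvd_pow (n := 2) ⟨z + y ^ 2 - x * y, ?_⟩
    linear_combination h
  exact ⟨e, by linear_combination he⟩

/-- Gauss's lemma in the form used for halving: if `E (E + G)` is divisible by `2 m ^ 2` and `G` is
primitive then one of the factors is. -/
lemma gauss {m : R} (hm : m ≠ 0) {E G T : R[X]} (h : E * (E + G) = C (2 * m ^ 2) * T) (hG : ¬ C 2 ∣ G) :
    C (2 * m ^ 2) ∣ E ∨ C (2 * m ^ 2) ∣ E + G := by
  obtain ⟨n, u, hu, rfl⟩ := exists_pow_unit hm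
  have hp : Prime (C (2 : R)) := prime_C_iff.2 prime_two
  have hass : C (2 * (2 ^ n * u) ^ 2) = C (2 : R) ^ (2 * n + 1) * C (u ^ 2) := by
    rw [← map_pow, ← map_mul]; congr 1; ring
  have hU : IsUnit (C (u ^ 2) : R[X]) := (hu.pow 2).map C
  have h1 : C (2 : R) ^ (2 * n + 1) ∣ E * (E + G) := by
    rw [h, hass, mul_assoc]; exact dvd_mul_right _ _
  rw [hass, hU.mul_right_dvd, hU.mul_right_dvd]
  by_cases hE : C 2 ∣ E
  · left
    refine hp.pow_dvd_of_dvd_mul_right _ (fun hh => hG ?_) h1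
    exact (dvd_add_right hE).1 hh
  · right
    exact hp.pow_dvd_of_dvd_mul_left _ hE h1

lemma C_dvd_quad {d e2 e1 e0 : R} (h : C d ∣ C e2 * X ^ 2 + C e1 * X + C e0) : d ∣ e2 ∧ d ∣ e1 ∧ d ∣ e0 := by
  rw [C_dvd_iff_dvd_coeff] at h
  have h0 := h 0
  have h1 := h 1
  have h2 := h 2
  simp [coeff_X, coeff_C] at h0 h1 h2
  exact ⟨h2, h1, h0⟩

/-- A quartic in `x - b` which is even at both `α` and `0` has even coefficients. -/
lemma Model.quarticV_even (h : Model η n3 n2 n1 α) {b c4 c3 c2 c1 c0 z : R} {y : RA α}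
    (e : ι α c4 * (gen α - ι α b) ^ 4 + ι α c3 * (gen α - ι α b) ^ 3 + ι α c2 * (gen α - ι α b) ^ 2 + ι α c1 * (gen α - ι α b) + ι α c0 = 2 * y)
    (e0 : c4 * (0 - b) ^ 4 + c3 * (0 - b) ^ 3 + c2 * (0 - b) ^ 2 + c1 * (0 - b) + c0 = 2 * z) :
    2 ∣ c4 ∧ 2 ∣ c3 ∧ 2 ∣ c2 := by
  obtain ⟨⟨t3, h3⟩, ⟨t2, h2⟩, ⟨t1, h1⟩, ⟨t0, h0⟩⟩ := h.quartic_even (c4 := c4) (c3 := c3 - 4 * b * c4) (c2 := c2 - 3 * b * c3 + 6 * b ^ 2 * c4)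
    (c1 := c1 - 2 * b * c2 + 3 * b ^ 2 * c3 - 4 * b ^ 3 * c4) (c0 := c0 - b * c1 + b ^ 2 * c2 - b ^ 3 * c3 + b ^ 4 * c4) (y := y) (by
      simp only [map_add, map_sub, map_mul, map_pow, map_ofNat]
      linear_combination e)
  have i4 : c4 = 2 * (t0 - z) := by linear_combination h0 - e0
  have i3 : c3 = 2 * (t3 + 2 * b * c4) := by linear_combination h3
  refine ⟨⟨_, i4⟩, ⟨_, i3⟩, ⟨t2 + 3 * b * (t3 + 2 * b * c4) - 3 * b ^ 2 * c4, ?_⟩⟩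
  linear_combination h2 + 3 * b * i3

lemma Model.quartic_zero (h : Model η n3 n2 n1 α) {b c4 c3 c2 c1 c0 : ℚ}
    (e : algebraMap ℚ K c4 * (α - algebraMap ℚ K b) ^ 4 + algebraMap ℚ K c3 * (α - algebraMap ℚ K b) ^ 3 + algebraMap ℚ K c2 * (α - algebraMap ℚ K b) ^ 2 + algebraMap ℚ K c1 * (α - algebraMap ℚ K b) + algebraMap ℚ K c0 = 0)
    (e0 : c4 * (0 - b) ^ 4 + c3 * (0 - b) ^ 3 + c2 * (0 - b) ^ 2 + c1 * (0 - b) + c0 = 0) :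
    c4 = 0 ∧ c3 = 0 ∧ c2 = 0 ∧ c1 = 0 ∧ c0 = 0 := by
  obtain ⟨h0, h1, h2, h3⟩ := h.indep (c0 - b * c1 + b ^ 2 * c2 - b ^ 3 * c3 + b ^ 4 * c4 + c4) (c1 - 2 * b * c2 + 3 * b ^ 2 * c3 - 4 * b ^ 3 * c4 - 2 * n1 * c4)
    (c2 - 3 * b * c3 + 6 * b ^ 2 * c4 - 2 * n2 * c4) (c3 - 4 * b * c4 - 2 * n3 * c4) (by
      simp only [map_add, map_sub, map_mul, map_pow, map_ofNat, map_intCast]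
      linear_combination e - algebraMap ℚ K c4 * h.root)
  have i4 : c4 = 0 := by linear_combination h0 - e0
  have i3 : c3 = 0 := by rw [i4] at h3; linear_combination h3
  have i2 : c2 = 0 := by rw [i4, i3] at h2; linear_combination h2
  have i1 : c1 = 0 := by rw [i4, i3, i2] at h1; linear_combination h1
  exact ⟨i4, i3, i2, i1, by rw [i4, i3, i2, i1] at e0; linear_combination e0⟩

/-- At a root `a` of `f`, the equation `β u' = V L + M ρ` with `β = 1 + 4 p` makes `ω (l0 V + ρ) + e + l1 S` even. -/
lemma Dat.core_even {A : Type*} [CommRing A] [IsDomain A] (h2 : (2 : A) ≠ 0) {a b m s1 s0 w3 w2 w1 w0 p l1 l0 ρ e2 e1 e0 : A} (hm : m ≠ 0)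
    (H : Dat η n3 n2 n1 b (2 * m) s1 s0 w3 w2 w1 w0)
    (ha : η * a * (a ^ 4 + 2 * n3 * a ^ 3 + 2 * n2 * a ^ 2 + 2 * n1 * a - 1) = 0)
    (hp : p * (1 + 2 * p) = m ^ 2 * (w3 * (a - b) ^ 3 + w2 * (a - b) ^ 2 + w1 * (a - b) + w0))
    (hu : (1 + 4 * p) * ((l1 + 2 * (2 * m ^ 2 * e2)) * (a - b) ^ 2 + (l0 + 2 * (2 * m ^ 2 * e1)) * (a - b) + (ρ + 2 * (2 * m ^ 2 * e0))) =
      (a - b) * (l1 * (a - b) + l0) + (1 + 8 * (p * (1 + 2 * p))) * ρ) :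
    ∃ y, (w3 * l0) * (a - b) ^ 4 + (w2 * l0 + w3 * ρ) * (a - b) ^ 3 + (w1 * l0 + w2 * ρ + e2) * (a - b) ^ 2 +
      (w0 * l0 + w1 * ρ + e1 + l1 * s1) * (a - b) + (w0 * ρ + e0 + l1 * s0) = 2 * y := by
  have hi := H.identity a
  rw [ha] at hi
  set V := a - b
  set ω := w3 * V ^ 3 + w2 * V ^ 2 + w1 * V + w0 with hω
  refine ⟨(1 + 2 * p) * ω * ρ - (3 * p + 4 * p ^ 2) * (e2 * V ^ 2 + e1 * V + e0) - 4 * l1 * m ^ 2 * ω * (s1 * V + s0), ?_⟩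
  have h4 : (4 * m ^ 2 : A) ≠ 0 := mul_ne_zero (by rw [show (4 : A) = 2 * 2 by norm_num]; exact mul_ne_zero h2 h2) (pow_ne_zero 2 hm)
  apply mul_left_cancel₀ h4
  rw [← sub_eq_zero]
  have hσ : 4 * m ^ 2 * (ω * (l1 * V ^ 2 + l0 * V + ρ) + (1 + 2 * p) * (1 + 4 * p) * (e2 * V ^ 2 + e1 * V + e0) - 2 * (1 + 2 * p) * ω * ρ) = 0 := by
    linear_combination (1 + 2 * p) * hu + (-4 * (l1 * V ^ 2 + l0 * V + ρ) + 8 * (1 + 2 * p) * ρ) * hp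
  linear_combination hσ - 4 * m ^ 2 * l1 * hi

/-- The other sign in the halving equation is impossible: it would make `σ` even. -/
lemma Dat.sigma_even {A : Type*} [CommRing A] [IsDomain A] (h2 : (2 : A) ≠ 0) {V m p l1 l0 ρ e2 e1 e0 g2 g1 g0 : A}
    (hu : (1 + 4 * p) * ((l1 + 2 * e2) * V ^ 2 + (l0 + 2 * e1) * V + (ρ + 2 * e0)) =
      V * (l1 * V + l0) + (1 + 8 * (p * (1 + 2 * p))) * ρ)
    (h2' : e2 + l1 = 2 * m ^ 2 * g2) (h1 : e1 + l0 = 2 * m ^ 2 * g1) (h0 : e0 + ρ = 2 * m ^ 2 * g0) :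
    ∃ y, l1 * V ^ 2 + l0 * V + ρ = 2 * y := by
  obtain rfl : e2 = 2 * m ^ 2 * g2 - l1 := by linear_combination h2'
  obtain rfl : e1 = 2 * m ^ 2 * g1 - l0 := by linear_combination h1
  obtain rfl : e0 = 2 * m ^ 2 * g0 - ρ := by linear_combination h0
  refine ⟨-p * (l1 * V ^ 2 + l0 * V + ρ) + (1 + 4 * p) * m ^ 2 * (g2 * V ^ 2 + g1 * V + g0) - 2 * p * (1 + 2 * p) * ρ, ?_⟩
  apply mul_left_cancel₀ h2
  linear_combination -hu

/-- The linear algebra in the halving step: six unknowns, five conditions. -/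
lemma Model.solve (h : Model η n3 n2 n1 α) (β M V : K) (β0 M0 V0 : ℚ) (b : ℚ) (hV : V = α - algebraMap ℚ K b) (hβ : β ≠ 0) :
    ∃ (u2 u1 u0 : ℚ) (l1 l0 ρ : R), ¬ (2 ∣ l1 ∧ 2 ∣ l0 ∧ 2 ∣ ρ) ∧
      β * (algebraMap ℚ K u2 * V ^ 2 + algebraMap ℚ K u1 * V + algebraMap ℚ K u0) = V * (algebraMap ℚ K l1 * V + algebraMap ℚ K l0) + M * algebraMap ℚ K ρ ∧
      β0 * (u2 * V0 ^ 2 + u1 * V0 + u0) = V0 * (l1 * V0 + l0) + M0 * ρ := by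
  let c : Fin 6 → K × ℚ := ![(β * V ^ 2, β0 * V0 ^ 2), (β * V, β0 * V0), (β, β0), (-V ^ 2, -V0 ^ 2), (-V, -V0), (-M, -M0)]
  have hc : ¬ LinearIndependent ℚ c := by
    intro hc
    have := hc.fintype_card_le_finrank
    rw [Module.finrank_prod, finrank_K] at this
    simp at this
  obtain ⟨g, hg, i, hi⟩ := Fintype.not_linearIndependent_iff.1 hc
  simp only [Fin.sum_univ_succ, c, Fin.isValue] at hg
  have hg1 := congrArg Prod.fst hg
  have hg2 := congrArg Prod.snd hg
  simp [Algebra.smul_def, -map_ratCast, -eq_ratCast] at hg1 hg2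
  have hg1 : β * (algebraMap ℚ K (g 0) * V ^ 2 + algebraMap ℚ K (g 1) * V + algebraMap ℚ K (g 2)) = V * (algebraMap ℚ K (g 3) * V + algebraMap ℚ K (g 4)) + M * algebraMap ℚ K (g 5) := by
    linear_combination hg1
  have hg2 : β0 * (g 0 * V0 ^ 2 + g 1 * V0 + g 2) = V0 * (g 3 * V0 + g 4) + M0 * g 5 := by
    linear_combination hg2
  have hne : (![g 3, g 4, g 5] : Fin 3 → ℚ) ≠ 0 := by
    intro h0
    have h3 : g 3 = 0 := congrFun h0 0
    have h4 : g 4 = 0 := congrFun h0 1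
    have h5 : g 5 = 0 := congrFun h0 2
    rw [h3, h4, h5] at hg1
    simp only [map_zero, zero_mul, add_zero, mul_zero, mul_eq_zero, hβ, false_or, hV] at hg1
    obtain ⟨i0, i1, i2, -⟩ := h.indep (g 2 - g 1 * b + g 0 * b ^ 2) (g 1 - 2 * b * g 0) (g 0) 0 (by
      simp only [map_sub, map_mul, map_add, map_pow, map_ofNat, map_zero]
      linear_combination hg1)
    rw [i2] at i1 i0
    have i1 : g 1 = 0 := by linear_combination i1
    rw [i1] at i0
    have i0 : g 2 = 0 := by linear_combination i0
    apply hi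
    fin_cases i <;> assumption
  obtain ⟨j, hj, hR⟩ := exists_primitive _ hne
  set d := (![g 3, g 4, g 5] : Fin 3 → ℚ) j with hd
  refine ⟨g 0 / d, g 1 / d, g 2 / d, ⟨_, hR 0⟩, ⟨_, hR 1⟩, ⟨_, hR 2⟩, ?_, ?_, ?_⟩
  · have key : ∀ i, (2 : R) ∣ ⟨_, hR i⟩ → i ≠ j := by
      rintro i ⟨t, ht⟩ rfl
      have := congrArg Subtype.val ht
      have h1 : (1 : R) = 2 * t := coe_inj_R (by rw [← this]; push_cast; exact (div_self hj).symm)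
      exact two_mul_ne_odd t 0 (by rw [← h1]; ring)
    rintro ⟨k0, k1, k2⟩
    have := key 0 k0; have := key 1 k1; have := key 2 k2
    fin_cases j <;> simp_all
  · have hd0 : algebraMap ℚ K d ≠ 0 := by simpa [-map_ratCast, -eq_ratCast] using hj
    simp only [map_div₀, Matrix.cons_val_zero, Matrix.cons_val_one, Matrix.cons_val]
    field_simp
    linear_combination hg1
  · simp only [Matrix.cons_val_zero, Matrix.cons_val_one, Matrix.cons_val]
    field_simp
    linear_combination hg2

end SR
end

noncomputable section
namespace SR
open Polynomial NumberField IsDedekindDomain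

variable {η n3 n2 n1 : ℤ} {α : K}

/-- The output of the halving step: `- S L ^ 2 + ω ρ ^ 2 = e σ + 2 m ^ 2 e ^ 2` with `L = V + l`,
`σ = V L + ρ` and `e = e1 V + e0`, where `l` and `ρ` are even. -/
structure Half (m s1 s0 w3 w2 w1 w0 l ρ e1 e0 : R) : Prop where
  hl : 2 ∣ l
  hρ : 2 ∣ ρ
  f3 : -s1 + w3 * ρ ^ 2 = e1
  f2 : -s0 - 2 * l * s1 + w2 * ρ ^ 2 = e0 + l * e1 + 2 * m ^ 2 * e1 ^ 2
  f1 : -2 * l * s0 - l ^ 2 * s1 + w1 * ρ ^ 2 = l * e0 + ρ * e1 + 4 * m ^ 2 * e0 * e1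
  f0 : -l ^ 2 * s0 + w0 * ρ ^ 2 = ρ * e0 + 2 * m ^ 2 * e0 ^ 2

lemma ι_ne {α : K} {m : R} (hm : m ≠ 0) : ι α m ≠ 0 := by
  intro h
  have h1 : algebraMap ℚ K (m : ℚ) = algebraMap ℚ K 0 := by
    rw [map_zero, ← ι_coe α, h]; rfl
  exact hm (Subtype.ext ((algebraMap ℚ K).injective h1))

/-- `U L ^ 2 + 2 V L ρ + M ρ ^ 2 - u' ^ 2` vanishes at a root of `f` where `β u' = V L + M ρ` with `β ^ 2 = M`. -/
lemma quartic_id {F : Type*} [Field F] {V m s1 s0 w3 w2 w1 w0 l1 l0 ρ u2 u1 u0 p : F} (hβ : 1 + 4 * p ≠ 0)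
    (hp : p * (1 + 2 * p) = m ^ 2 * (w3 * V ^ 3 + w2 * V ^ 2 + w1 * V + w0))
    (hi : 0 = s1 * V + s0 - (w3 * V ^ 3 + w2 * V ^ 2 + w1 * V + w0) * (V ^ 2 - 2 * (2 * m) ^ 2 * (s1 * V + s0)))
    (hu : (1 + 4 * p) * (u2 * V ^ 2 + u1 * V + u0) = V * (l1 * V + l0) + (1 + 8 * (p * (1 + 2 * p))) * ρ) :
    (l1 ^ 2 - u2 ^ 2) * V ^ 4 + (2 * l1 * l0 - 8 * m ^ 2 * s1 * l1 ^ 2 + 8 * m ^ 2 * w3 * ρ ^ 2 - 2 * u2 * u1) * V ^ 3 +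
      (l0 ^ 2 - 16 * m ^ 2 * s1 * l1 * l0 - 8 * m ^ 2 * s0 * l1 ^ 2 + 2 * l1 * ρ + 8 * m ^ 2 * w2 * ρ ^ 2 - u1 ^ 2 - 2 * u2 * u0) * V ^ 2 +
      (-8 * m ^ 2 * s1 * l0 ^ 2 - 16 * m ^ 2 * s0 * l1 * l0 + 2 * l0 * ρ + 8 * m ^ 2 * w1 * ρ ^ 2 - 2 * u1 * u0) * V +
      (-8 * m ^ 2 * s0 * l0 ^ 2 + ρ ^ 2 + 8 * m ^ 2 * w0 * ρ ^ 2 - u0 ^ 2) = 0 := by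
  apply (mul_eq_zero.1 (_ : (1 + 4 * p) ^ 2 * _ = 0)).resolve_left (pow_ne_zero 2 hβ)
  linear_combination (8 * (V ^ 2 - 8 * m ^ 2 * (s1 * V + s0)) * (l1 * V + l0) ^ 2 - 8 * (1 + 4 * p) ^ 2 * ρ ^ 2) * hp
    + 8 * m ^ 2 * (l1 * V + l0) ^ 2 * hi
    - ((1 + 4 * p) * (u2 * V ^ 2 + u1 * V + u0) + V * (l1 * V + l0) + (1 + 8 * (p * (1 + 2 * p))) * ρ) * hu

theorem Model.half (h : Model η n3 n2 n1 α) {b m s1 s0 w3 w2 w1 w0 : R} (hm : m ≠ 0)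
    (H : Dat η n3 n2 n1 b (2 * m) s1 s0 w3 w2 w1 w0) : ∃ l ρ e1 e0, Half m s1 s0 w3 w2 w1 w0 l ρ e1 e0 := by
  obtain ⟨p, hp⟩ := h.sqα hm H
  obtain ⟨q, hq⟩ := H.sq0 h.hη hm
  set V : RA α := gen α - ι α b with hV
  have hβ : (1 + 4 * p : RA α) ≠ 0 := by
    intro e
    exact h.two_not_unit (-2 * p) (by linear_combination -e)
  have hβq : (1 + 4 * q : R) ≠ 0 := by
    intro e
    exact two_mul_ne_odd 0 (2 * q) (by linear_combination -e)
  obtain ⟨u2, u1, u0, l1, l0, ρ, hprim, E1, E2⟩ := h.solve ((1 + 4 * p : RA α) : K) ((1 + 8 * (p * (1 + 2 * p)) : RA α) : K) (V : K)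
    ((1 + 4 * q : R) : ℚ) ((1 + 8 * (q * (1 + 2 * q)) : R) : ℚ) (-b : ℚ) b rfl (by exact fun e => hβ (Subtype.ext e))
  -- the polynomial `U L ^ 2 + 2 V L ρ + M ρ ^ 2 - u' ^ 2` vanishes at both roots
  have HK := H.map (algebraMap R K)
  have HQ := H.map R.subtype
  have hiK := HK.identity α
  have hiQ := HQ.identity 0
  obtain ⟨c4, c3, c2, c1, c0⟩ := h.quartic_zero (b := b) (c4 := l1 ^ 2 - u2 ^ 2)
    (c3 := 2 * l1 * l0 - 8 * m ^ 2 * s1 * l1 ^ 2 + 8 * m ^ 2 * w3 * ρ ^ 2 - 2 * u2 * u1)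
    (c2 := l0 ^ 2 - 16 * m ^ 2 * s1 * l1 * l0 - 8 * m ^ 2 * s0 * l1 ^ 2 + 2 * l1 * ρ + 8 * m ^ 2 * w2 * ρ ^ 2 - u1 ^ 2 - 2 * u2 * u0)
    (c1 := -8 * m ^ 2 * s1 * l0 ^ 2 - 16 * m ^ 2 * s0 * l1 * l0 + 2 * l0 * ρ + 8 * m ^ 2 * w1 * ρ ^ 2 - 2 * u1 * u0)
    (c0 := -8 * m ^ 2 * s0 * l0 ^ 2 + ρ ^ 2 + 8 * m ^ 2 * w0 * ρ ^ 2 - u0 ^ 2) (by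
      have hpK := congrArg (Subtype.val : RA α → K) hp
      have hβK : ((1 + 4 * p : RA α) : K) ≠ 0 := fun e => hβ (Subtype.ext e)
      have hr : η * α * (α ^ 4 + 2 * n3 * α ^ 3 + 2 * n2 * α ^ 2 + 2 * n1 * α - 1) = 0 := by rw [h.root, mul_zero]
      have hVK : (V : K) = α - algebraMap ℚ K b := rfl
      change (p : K) * (1 + 2 * (p : K)) = algebraMap ℚ K m ^ 2 * (algebraMap ℚ K w3 * (α - algebraMap ℚ K b) ^ 3 + algebraMap ℚ K w2 * (α - algebraMap ℚ K b) ^ 2 + algebraMap ℚ K w1 * (α - algebraMap ℚ K b) + algebraMap ℚ K w0) at hpK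
      change η * α * (α ^ 4 + 2 * n3 * α ^ 3 + 2 * n2 * α ^ 2 + 2 * n1 * α - 1) = algebraMap ℚ K s1 * (α - algebraMap ℚ K b) + algebraMap ℚ K s0 - (algebraMap ℚ K w3 * (α - algebraMap ℚ K b) ^ 3 + algebraMap ℚ K w2 * (α - algebraMap ℚ K b) ^ 2 + algebraMap ℚ K w1 * (α - algebraMap ℚ K b) + algebraMap ℚ K w0) * ((α - algebraMap ℚ K b) ^ 2 - 2 * algebraMap ℚ K ((2 * m : R) : ℚ) ^ 2 * (algebraMap ℚ K s1 * (α - algebraMap ℚ K b) + algebraMap ℚ K s0)) at hiK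
      rw [hr] at hiK
      rw [hVK] at E1
      change (1 + 4 * (p : K)) * _ = _ + (1 + 8 * ((p : K) * (1 + 2 * (p : K)))) * _ at E1
      change 1 + 4 * (p : K) ≠ 0 at hβK
      have hm2 : algebraMap ℚ K ((2 * m : R) : ℚ) = 2 * algebraMap ℚ K m := by
        rw [Subring.coe_mul, map_mul, coe_two, map_ofNat]
      rw [hm2] at hiK
      have := quartic_id hβK hpK hiK E1
      simp only [map_add, map_sub, map_mul, map_pow, map_ofNat, map_neg]
      linear_combination this) (by
      have hβQ : (1 + 4 * q : ℚ) ≠ 0 := fun e => hβq (Subtype.ext e)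
      have hqQ := congrArg (Subtype.val : R → ℚ) hq
      simp only [Subring.subtype_apply, mul_zero, zero_mul] at hiQ
      push_cast at E2 hiQ hqQ
      have := quartic_id (V := (-b : ℚ)) hβQ (m := (m : ℚ)) (s1 := (s1 : ℚ)) (s0 := (s0 : ℚ)) (w3 := (w3 : ℚ)) (w2 := (w2 : ℚ)) (w1 := (w1 : ℚ)) (w0 := (w0 : ℚ))
        (by linear_combination hqQ) (by linear_combination hiQ) E2
      linear_combination this)
  have hu2 : u2 ∈ R := sq_mem_R (by
    rw [show u2 ^ 2 = ((l1 ^ 2 : R) : ℚ) by push_cast; linear_combination -c4]; exact Subtype.coe_prop _)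
  have hu0 : u0 ∈ R := sq_mem_R (by
    rw [show u0 ^ 2 = ((-8 * m ^ 2 * s0 * l0 ^ 2 + ρ ^ 2 + 8 * m ^ 2 * w0 * ρ ^ 2 : R) : ℚ) by push_cast; linear_combination -c0]; exact Subtype.coe_prop _)
  lift u2 to R using hu2
  lift u0 to R using hu0
  have hu1 : u1 ∈ R := sq_mem_R (by
    rw [show u1 ^ 2 = ((l0 ^ 2 - 16 * m ^ 2 * s1 * l1 * l0 - 8 * m ^ 2 * s0 * l1 ^ 2 + 2 * l1 * ρ + 8 * m ^ 2 * w2 * ρ ^ 2 - 2 * u2 * u0 : R) : ℚ) by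
      push_cast; linear_combination -c2]
    exact Subtype.coe_prop _)
  lift u1 to R using hu1
  have d4 : l1 ^ 2 - u2 ^ 2 = 0 := coe_inj_R (by push_cast; exact c4)
  have d3 : 2 * l1 * l0 - 8 * m ^ 2 * s1 * l1 ^ 2 + 8 * m ^ 2 * w3 * ρ ^ 2 - 2 * u2 * u1 = 0 := coe_inj_R (by push_cast; exact c3)
  have d2 : l0 ^ 2 - 16 * m ^ 2 * s1 * l1 * l0 - 8 * m ^ 2 * s0 * l1 ^ 2 + 2 * l1 * ρ + 8 * m ^ 2 * w2 * ρ ^ 2 - u1 ^ 2 - 2 * u2 * u0 = 0 :=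
    coe_inj_R (by push_cast; exact c2)
  have d1 : -8 * m ^ 2 * s1 * l0 ^ 2 - 16 * m ^ 2 * s0 * l1 * l0 + 2 * l0 * ρ + 8 * m ^ 2 * w1 * ρ ^ 2 - 2 * u1 * u0 = 0 :=
    coe_inj_R (by push_cast; exact c1)
  have d0 : -8 * m ^ 2 * s0 * l0 ^ 2 + ρ ^ 2 + 8 * m ^ 2 * w0 * ρ ^ 2 - u0 ^ 2 = 0 := coe_inj_R (by push_cast; exact c0)
  clear c4 c3 c2 c1 c0
  -- modulo `2` the quadratics `u'` and `σ` agree, because their squares do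
  obtain ⟨e2, rfl⟩ := even_of_sq (x := u2) (y := l1) (z := 0) (by linear_combination -d4)
  obtain ⟨e0, rfl⟩ := even_of_sq (x := u0) (y := ρ) (z := -4 * m ^ 2 * s0 * l0 ^ 2 + 4 * m ^ 2 * w0 * ρ ^ 2) (by linear_combination -d0)
  obtain ⟨e1, rfl⟩ := even_of_sq (x := u1) (y := l0) (z := -8 * m ^ 2 * s1 * l1 * l0 - 4 * m ^ 2 * s0 * l1 ^ 2 + l1 * ρ + 4 * m ^ 2 * w2 * ρ ^ 2 - (l1 + 2 * e2) * (ρ + 2 * e0))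
    (by linear_combination -d2)
  have h4 : (4 : R) ≠ 0 := by norm_num
  have g4 : e2 * (e2 + l1) = 0 := mul_left_cancel₀ h4 (by linear_combination -d4)
  have g3 : e2 * (e1 + l0) + e1 * (e2 + l1) = 2 * m ^ 2 * (w3 * ρ ^ 2 - s1 * l1 ^ 2) := mul_left_cancel₀ h4 (by linear_combination -d3)
  have g2 : e2 * (e0 + ρ) + e1 * (e1 + l0) + e0 * (e2 + l1) = 2 * m ^ 2 * (w2 * ρ ^ 2 - s0 * l1 ^ 2 - 2 * s1 * l1 * l0) :=
    mul_left_cancel₀ h4 (by linear_combination -d2)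
  have g1 : e1 * (e0 + ρ) + e0 * (e1 + l0) = 2 * m ^ 2 * (w1 * ρ ^ 2 - s1 * l0 ^ 2 - 2 * s0 * l1 * l0) :=
    mul_left_cancel₀ h4 (by linear_combination -d1)
  have g0 : e0 * (e0 + ρ) = 2 * m ^ 2 * (w0 * ρ ^ 2 - s0 * l0 ^ 2) := mul_left_cancel₀ h4 (by linear_combination -d0)
  clear d4 d3 d2 d1 d0
  have E1 : (1 + 4 * p) * ((ι α l1 + 2 * ι α e2) * V ^ 2 + (ι α l0 + 2 * ι α e1) * V + (ι α ρ + 2 * ι α e0)) =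
      V * (ι α l1 * V + ι α l0) + (1 + 8 * (p * (1 + 2 * p))) * ι α ρ := by
    have : (1 + 4 * p) * (ι α (l1 + 2 * e2) * V ^ 2 + ι α (l0 + 2 * e1) * V + ι α (ρ + 2 * e0)) =
      V * (ι α l1 * V + ι α l0) + (1 + 8 * (p * (1 + 2 * p))) * ι α ρ := Subtype.ext E1
    simp only [map_add, map_mul, map_ofNat] at this
    exact this
  have E2 : (1 + 4 * q) * ((l1 + 2 * e2) * (0 - b) ^ 2 + (l0 + 2 * e1) * (0 - b) + (ρ + 2 * e0)) =
      (0 - b) * (l1 * (0 - b) + l0) + (1 + 8 * (q * (1 + 2 * q))) * ρ := coe_inj_R (by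
    push_cast at E2 ⊢
    linear_combination E2)
  have hA2 : (2 : RA α) ≠ 0 := two_ne_zero
  have hgauss := gauss hm (E := C e2 * X ^ 2 + C e1 * X + C e0) (G := C l1 * X ^ 2 + C l0 * X + C ρ)
    (T := C (w3 * ρ ^ 2 - s1 * l1 ^ 2) * X ^ 3 + C (w2 * ρ ^ 2 - s0 * l1 ^ 2 - 2 * s1 * l1 * l0) * X ^ 2 + C (w1 * ρ ^ 2 - s1 * l0 ^ 2 - 2 * s0 * l1 * l0) * X
      + C (w0 * ρ ^ 2 - s0 * l0 ^ 2)) (by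
      have g4 := congrArg C g4
      have g3 := congrArg C g3
      have g2 := congrArg C g2
      have g1 := congrArg C g1
      have g0 := congrArg C g0
      rw [C_mul (a := 2 * m ^ 2)] at g3 g2 g1 g0
      simp only [C_add, C_0, C_mul (a := e2), C_mul (a := e1), C_mul (a := e0)] at g4 g3 g2 g1 g0
      linear_combination X ^ 4 * g4 + X ^ 3 * g3 + X ^ 2 * g2 + X * g1 + g0)
    (fun hd => hprim (C_dvd_quad hd))
  rcases hgauss with hd | hd
  swap
  · exfalso
    obtain ⟨⟨i2, h2⟩, ⟨i1, h1⟩, ⟨i0, h0⟩⟩ := C_dvd_quad (d := 2 * m ^ 2) (e2 := e2 + l1) (e1 := e1 + l0) (e0 := e0 + ρ) (by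
      convert hd using 1
      simp only [C_add]; ring)
    have h2 := congrArg (ι α) h2
    have h1 := congrArg (ι α) h1
    have h0 := congrArg (ι α) h0
    simp only [map_add, map_mul, map_pow, map_ofNat] at h2 h1 h0
    obtain ⟨y, hy⟩ := Dat.sigma_even hA2 E1 h2 h1 h0
    obtain ⟨-, t2, t1, t0⟩ := h.quartic_even (c4 := 0) (c3 := 0) (c2 := l1) (c1 := l0 - 2 * b * l1) (c0 := ρ - l0 * b + l1 * b ^ 2) (y := y) (by
      rw [← hy, hV]
      simp only [map_add, map_mul, map_pow, map_ofNat, map_sub, map_zero]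
      ring)
    have s1' : 2 ∣ l0 := (dvd_sub_left ⟨b * l1, by ring⟩).1 t1
    refine hprim ⟨t2, s1', ?_⟩
    obtain ⟨a, ha⟩ := t2
    obtain ⟨c, hc⟩ := s1'
    obtain ⟨d, hd⟩ := t0
    exact ⟨d + c * b - a * b ^ 2, by linear_combination hd + b * hc - b ^ 2 * ha⟩
  obtain ⟨⟨i2, rfl⟩, ⟨i1, rfl⟩, ⟨i0, rfl⟩⟩ := C_dvd_quad hd
  simp only [map_mul, map_pow, map_ofNat] at E1
  have HA := H.map (ι α)
  rw [map_mul, map_ofNat] at HA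
  obtain ⟨y, hy⟩ := HA.core_even hA2 (ι_ne hm) (by rw [mul_assoc, h.rootA, mul_zero, mul_zero]) hp E1
  obtain ⟨z, hz⟩ := H.core_even (a := 0) prime_two.ne_zero hm (by ring) (by linear_combination hq) E2
  obtain ⟨t4, t3, t2⟩ := h.quarticV_even (c4 := w3 * l0) (c3 := w2 * l0 + w3 * ρ) (c2 := w1 * l0 + w2 * ρ + i2)
    (c1 := w0 * l0 + w1 * ρ + i1 + l1 * s1) (c0 := w0 * ρ + i0 + l1 * s0) (b := b) (y := y) (z := z)
    (by rw [← hy]; simp only [map_add, map_mul]) hz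
  have hw3 : IsUnit w3 := by
    rw [show w3 = -(η : R) by linear_combination -H.e5]
    rcases h.hη with rfl | rfl <;> simp
  have t4 : 2 ∣ l0 := hw3.dvd_mul_left.1 t4
  have t3 : 2 ∣ ρ := hw3.dvd_mul_left.1 ((dvd_add_right (t4.mul_left w2)).1 t3)
  have hl1 : ∃ t, l1 = 2 * t + 1 := odd_iff_not_dvd.2 (fun hh => hprim ⟨hh, t4, t3⟩)
  have hδ : (2 * m ^ 2 : R) ≠ 0 := mul_ne_zero prime_two.ne_zero (pow_ne_zero 2 hm)
  have hi2 : i2 = 0 := by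
    rcases mul_eq_zero.1 g4 with hh | hh
    · exact (mul_eq_zero.1 hh).resolve_left hδ
    · obtain ⟨t, rfl⟩ := hl1
      exact (two_mul_ne_odd (-(m ^ 2 * i2)) t (by linear_combination -hh)).elim
  subst hi2
  obtain ⟨c, hc⟩ := (isUnit_iff_odd.2 hl1).exists_right_inv
  refine ⟨c * l0, c * ρ, c * i1, c * i0, ?_⟩
  have c1 : l1 * c - 1 = 0 := by linear_combination hc
  refine ⟨t4.mul_left c, t3.mul_left c, ?_, ?_, ?_, ?_⟩
  all_goals apply mul_left_cancel₀ hδ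
  · linear_combination -c ^ 2 * g3 + 2 * m ^ 2 * (i1 * c + s1 * (l1 * c + 1)) * c1
  · linear_combination -c ^ 2 * g2 + 2 * m ^ 2 * (i0 * c + s0 * (l1 * c + 1) + 2 * s1 * c * l0) * c1
  · linear_combination -c ^ 2 * g1 + 2 * m ^ 2 * (2 * s0 * c * l0) * c1
  · linear_combination -c ^ 2 * g0

end SR
end

/-! ### Constructing reduced divisors -/

noncomputable section
namespace SR
open Polynomial

variable {η n3 n2 n1 : ℤ}

/-- The quintic `η x (x ^ 4 + 2 n3 x ^ 3 + 2 n2 x ^ 2 + 2 n1 x - 1)`. -/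
def quintic (η n3 n2 n1 : ℤ) : R[X] :=
  C (η : R) * (X * (X ^ 4 + C (2 * n3 : R) * X ^ 3 + C (2 * n2 : R) * X ^ 2 + C (2 * n1 : R) * X - 1))

lemma dvd_of_dvd_C_mul {u P : R[X]} (hu : u.Monic) {c : R} (hc : c ≠ 0) (h : u ∣ C c * P) : u ∣ P := by
  rw [← modByMonic_eq_zero_iff_dvd hu] at h ⊢
  rw [← smul_eq_C_mul, smul_modByMonic] at h
  exact (smul_eq_zero.1 h).resolve_left hc

lemma quad_eq (b a1 a0 : R) : (X - C b) ^ 2 + C a1 * (X - C b) + C a0 = C 1 * X ^ 2 + C (a1 - 2 * b) * X + C (b ^ 2 - a1 * b + a0) := by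
  simp only [C_1, C_sub, C_add, C_mul, C_pow, C_ofNat]; ring

lemma degree_monic_quad (b a1 a0 : R) : ((X - C b) ^ 2 + C a1 * (X - C b) + C a0).degree = 2 := by
  rw [quad_eq]
  exact degree_quadratic one_ne_zero

lemma monic_quad (b a1 a0 : R) : ((X - C b) ^ 2 + C a1 * (X - C b) + C a0).Monic := by
  rw [quad_eq]
  exact leadingCoeff_quadratic one_ne_zero

lemma linear_coeffs {a c : R} (h : C a * X + C c = 0) : a = 0 ∧ c = 0 :=
  ⟨by simpa using congrArg (fun p => coeff p 1) h, by simpa using congrArg (fun p => coeff p 0) h⟩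

/-- A monic quadratic `U` dividing `V ^ 2 - 2 k ^ 2 f` is a reduced divisor. -/
theorem mk_dat {b k a1 a0 : R} (h : (X - C b) ^ 2 + C a1 * (X - C b) + C a0 ∣ (X - C b) ^ 2 - C (2 * k ^ 2) * quintic η n3 n2 n1) :
    ∃ s1 s0 w3 w2 w1 w0, Dat η n3 n2 n1 b k s1 s0 w3 w2 w1 w0 ∧ a1 = -2 * k ^ 2 * s1 ∧ a0 = -2 * k ^ 2 * s0 := by
  obtain ⟨f5, hf5⟩ : ∃ f5 : R, f5 = η := ⟨_, rfl⟩
  obtain ⟨f4, hf4⟩ : ∃ f4 : R, f4 = η * (5 * b + 2 * n3) := ⟨_, rfl⟩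
  obtain ⟨f3, hf3⟩ : ∃ f3 : R, f3 = η * (10 * b ^ 2 + 8 * n3 * b + 2 * n2) := ⟨_, rfl⟩
  obtain ⟨f2, hf2⟩ : ∃ f2 : R, f2 = η * (10 * b ^ 3 + 12 * n3 * b ^ 2 + 6 * n2 * b + 2 * n1) := ⟨_, rfl⟩
  obtain ⟨f1, hf1⟩ : ∃ f1 : R, f1 = η * (5 * b ^ 4 + 8 * n3 * b ^ 3 + 6 * n2 * b ^ 2 + 4 * n1 * b - 1) := ⟨_, rfl⟩
  obtain ⟨f0, hf0⟩ : ∃ f0 : R, f0 = η * (b ^ 5 + 2 * n3 * b ^ 4 + 2 * n2 * b ^ 3 + 2 * n1 * b ^ 2 - b) := ⟨_, rfl⟩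
  obtain ⟨V, hV⟩ : ∃ V : R[X], V = X - C b := ⟨_, rfl⟩
  have hf : quintic η n3 n2 n1 = C f5 * V ^ 5 + C f4 * V ^ 4 + C f3 * V ^ 3 + C f2 * V ^ 2 + C f1 * V + C f0 := by
    rw [quintic, hf5, hf4, hf3, hf2, hf1, hf0, hV]
    simp only [C_sub, C_add, C_mul, C_pow, C_ofNat, C_1]
    ring
  -- division of the quintic by `U`
  obtain ⟨w3, hw3⟩ : ∃ w3, w3 = -f5 := ⟨_, rfl⟩
  obtain ⟨w2, hw2⟩ : ∃ w2, w2 = -f4 - a1 * w3 := ⟨_, rfl⟩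
  obtain ⟨w1, hw1⟩ : ∃ w1, w1 = -f3 - a1 * w2 - a0 * w3 := ⟨_, rfl⟩
  obtain ⟨w0, hw0⟩ : ∃ w0, w0 = -f2 - a1 * w1 - a0 * w2 := ⟨_, rfl⟩
  obtain ⟨s1, hs1⟩ : ∃ s1, s1 = f1 + a1 * w0 + a0 * w1 := ⟨_, rfl⟩
  obtain ⟨s0, hs0⟩ : ∃ s0, s0 = f0 + a0 * w0 := ⟨_, rfl⟩
  have hdiv : quintic η n3 n2 n1 = C s1 * V + C s0 - (C w3 * V ^ 3 + C w2 * V ^ 2 + C w1 * V + C w0) * (V ^ 2 + C a1 * V + C a0) := by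
    rw [hf, hs1, hs0, hw0, hw1, hw2, hw3]
    simp only [C_sub, C_add, C_mul, C_neg]
    ring
  have hU := monic_quad b a1 a0
  have hrem : (X - C b) ^ 2 + C a1 * (X - C b) + C a0 ∣ C (a1 + 2 * k ^ 2 * s1) * X + C (a0 + 2 * k ^ 2 * s0 - b * (a1 + 2 * k ^ 2 * s1)) := by
    have h2 := (dvd_refl ((X - C b) ^ 2 + C a1 * (X - C b) + C a0)).mul_left (1 + C (2 * k ^ 2) * (C w3 * V ^ 3 + C w2 * V ^ 2 + C w1 * V + C w0))
    have h3 := dvd_sub h2 h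
    convert h3 using 1
    rw [hdiv, hV]
    simp only [C_sub, C_add, C_mul, C_pow, C_ofNat]
    ring
  have hz : C (a1 + 2 * k ^ 2 * s1) * X + C (a0 + 2 * k ^ 2 * s0 - b * (a1 + 2 * k ^ 2 * s1)) = 0 := by
    by_contra hne
    refine hU.not_dvd_of_degree_lt hne (degree_linear_lt.trans_le ?_) hrem
    rw [degree_monic_quad]
  obtain ⟨z1, z0⟩ := linear_coeffs hz
  rw [z1, mul_zero, sub_zero] at z0
  clear hdiv hU hrem hz hf
  refine ⟨s1, s0, w3, w2, w1, w0, ⟨?_, ?_, ?_, ?_, ?_, ?_⟩, by linear_combination z1, by linear_combination z0⟩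
  · rw [hw3, hf5, neg_neg]
  · linear_combination w3 * z1 - hw2 + hf4
  · linear_combination w2 * z1 + w3 * z0 - hw1 + hf3
  · linear_combination w1 * z1 + w2 * z0 - hw0 + hf2
  · linear_combination hs1 + w0 * z1 + w1 * z0 + hf1
  · linear_combination hs0 + w0 * z0 + hf0

/-- `U u' ^ 2 = (U L + V ρ) ^ 2 - 4 δ f ρ ^ 2`: the quadratic `u'` cut out by a halving step is a reduced
divisor, with `V' / k' = - y`, where `U L + V ρ ≡ - 2 δ (c1 V + c0)` modulo `u'`. -/
theorem Half.dat {b m s1 s0 w3 w2 w1 w0 l ρ e1 e0 t k : R} (hm : m ≠ 0) (H : Dat η n3 n2 n1 b (2 * m) s1 s0 w3 w2 w1 w0)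
    (G : Half m s1 s0 w3 w2 w1 w0 l ρ e1 e0) {c1 c0 : R} (hc1 : c1 = 2 * s0 + 2 * s1 * l + e0 - (2 * s1 + e1) * (l + 4 * m ^ 2 * e1))
    (hc0 : c0 = 2 * s0 * l - (2 * s1 + e1) * (ρ + 4 * m ^ 2 * e0)) (hne : c1 ≠ 0) (ht : c1 * t = c0) (hk : 2 * m * c1 * k = ρ) :
    ∃ s1 s0 w3 w2 w1 w0, Dat η n3 n2 n1 (b - t) k s1 s0 w3 w2 w1 w0 := by
  obtain ⟨V, hV⟩ : ∃ V : R[X], V = X - C b := ⟨_, rfl⟩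
  have hf : quintic η n3 n2 n1 = C s1 * V + C s0 - (C w3 * V ^ 3 + C w2 * V ^ 2 + C w1 * V + C w0) * (V ^ 2 - 2 * (2 * C m) ^ 2 * (C s1 * V + C s0)) := by
    have := (H.map C).identity X
    rw [← hV] at this
    rw [C_mul, C_ofNat] at this
    rw [← this, quintic]
    simp only [C_mul, C_ofNat, map_intCast]
    ring
  have hu : (X - C (b - t)) ^ 2 + C (l + 4 * m ^ 2 * e1 - 2 * t) * (X - C (b - t)) + C (ρ + 4 * m ^ 2 * e0 - (l + 4 * m ^ 2 * e1) * t + t ^ 2) =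
      V ^ 2 + C (l + 4 * m ^ 2 * e1) * V + C (ρ + 4 * m ^ 2 * e0) := by
    rw [hV]
    simp only [C_sub, C_add, C_mul, C_pow, C_ofNat]
    ring
  have hmon := monic_quad (b - t) (l + 4 * m ^ 2 * e1 - 2 * t) (ρ + 4 * m ^ 2 * e0 - (l + 4 * m ^ 2 * e1) * t + t ^ 2)
  suffices hd : (X - C (b - t)) ^ 2 + C (l + 4 * m ^ 2 * e1 - 2 * t) * (X - C (b - t)) + C (ρ + 4 * m ^ 2 * e0 - (l + 4 * m ^ 2 * e1) * t + t ^ 2) ∣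
      (X - C (b - t)) ^ 2 - C (2 * k ^ 2) * quintic η n3 n2 n1 by
    obtain ⟨r1, r0, v3, v2, v1, v0, h, -⟩ := mk_dat hd
    exact ⟨r1, r0, v3, v2, v1, v0, h⟩
  have hcn : 16 * m ^ 4 * c1 ^ 2 ≠ 0 := by
    have : (16 : R) ≠ 0 := by norm_num
    exact mul_ne_zero (mul_ne_zero this (pow_ne_zero _ hm)) (pow_ne_zero _ hne)
  apply dvd_of_dvd_C_mul hmon hcn
  rw [hu, hf]
  have hV' : X - C (b - t) = V + C t := by rw [hV, C_sub]; ring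
  rw [hV']
  have f3 := congrArg C G.f3
  have f2 := congrArg C G.f2
  have f1 := congrArg C G.f1
  have f0 := congrArg C G.f0
  have hc1 := congrArg C hc1
  have hc0 := congrArg C hc0
  have ht := congrArg C ht
  have hk := congrArg C hk
  simp only [C_sub, C_add, C_mul, C_pow, C_ofNat, C_neg] at f3 f2 f1 f0 hc1 hc0 ht hk ⊢
  generalize C m = m at *
  generalize C s1 = s1 at *
  generalize C s0 = s0 at *
  generalize C l = l at *
  generalize C ρ = ρ at *
  generalize C e1 = e1 at *
  generalize C e0 = e0 at *
  generalize C w3 = w3 at *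
  generalize C w2 = w2 at *
  generalize C w1 = w1 at *
  generalize C w0 = w0 at *
  generalize C t = t at *
  generalize C k = k at *
  generalize C c1 = c1 at *
  generalize C c0 = c0 at *
  set ω := w3 * V ^ 3 + w2 * V ^ 2 + w1 * V + w0 with hω
  set S := s1 * V + s0 with hS
  have F : -S * (V + l) ^ 2 + ω * ρ ^ 2 = (e1 * V + e0) * (V * (V + l) + ρ) + 2 * m ^ 2 * (e1 * V + e0) ^ 2 := by
    linear_combination V ^ 3 * f3 + V ^ 2 * f2 + V * f1 + f0
  -- the cofactor comes from `U L + V ρ + 2 δ (c1 V + c0) = q u'`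
  obtain ⟨q, hq⟩ : ∃ q, (V ^ 2 - 2 * (2 * m) ^ 2 * S) * (V + l) + V * ρ = q * (V ^ 2 + (l + 4 * m ^ 2 * e1) * V + (ρ + 4 * m ^ 2 * e0)) - 4 * m ^ 2 * (c1 * V + c0) := by
    refine ⟨V - 4 * m ^ 2 * (2 * s1 + e1), ?_⟩
    linear_combination 4 * m ^ 2 * (V * hc1 + hc0)
  set u := V ^ 2 + (l + 4 * m ^ 2 * e1) * V + (ρ + 4 * m ^ 2 * e0) with hu'
  have hmain : (V ^ 2 - 2 * (2 * m) ^ 2 * S) * u ^ 2 = ((V ^ 2 - 2 * (2 * m) ^ 2 * S) * (V + l) + V * ρ) ^ 2 -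
      8 * m ^ 2 * (S - ω * (V ^ 2 - 2 * (2 * m) ^ 2 * S)) * ρ ^ 2 := by
    rw [hu']
    linear_combination -8 * m ^ 2 * (V ^ 2 - 2 * (2 * m) ^ 2 * S) * F
  refine ⟨(V ^ 2 - 2 * (2 * m) ^ 2 * S) * u - q ^ 2 * u + 2 * q * (4 * m ^ 2 * (c1 * V + c0)), ?_⟩
  have e1' : 4 * m ^ 2 * (c1 * V + c0) = 4 * m ^ 2 * c1 * (V + t) := by linear_combination -4 * m ^ 2 * ht
  rw [hq, e1', ← hk] at hmain
  rw [e1']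
  linear_combination -hmain

end SR
end

noncomputable section
namespace SR
open Polynomial

variable {η n3 n2 n1 : ℤ}

/-- The halving equations after elimination of `e`; here `h = s0 + 2 m ^ 2 s1 ^ 2`. The last four
clauses control the numbers `c1`, `c0` of `Half.dat`. -/
lemma Half.elim {m s1 s0 w3 w2 w1 w0 l ρ e1 e0 : R} (G : Half m s1 s0 w3 w2 w1 w0 l ρ e1 e0) :
    ∃ B E D : R,
      (s0 + 2 * m ^ 2 * s1 ^ 2) * (l + 4 * m ^ 2 * s1) = ρ * (s1 + ρ * B) ∧
      -ρ * (s0 + 2 * m ^ 2 * s1 ^ 2 + l * s1) + 2 * m ^ 2 * (s0 + 2 * m ^ 2 * s1 ^ 2) ^ 2 +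
        4 * m ^ 2 * (s0 + 2 * m ^ 2 * s1 ^ 2) * l * s1 + l ^ 2 * (s0 + 2 * m ^ 2 * s1 ^ 2) +
        ρ ^ 2 * (ρ * E - w0 - 4 * m ^ 2 * (s0 + 2 * m ^ 2 * s1 ^ 2 + l * s1) * E + 2 * m ^ 2 * ρ ^ 2 * E ^ 2) = 0 ∧
      2 * s0 + 2 * s1 * l + e0 - (2 * s1 + e1) * (l + 4 * m ^ 2 * e1) = s0 + 2 * m ^ 2 * s1 ^ 2 + ρ ^ 2 * D ∧
      2 * s0 * l - (2 * s1 + e1) * (ρ + 4 * m ^ 2 * e0) = (s0 + 2 * m ^ 2 * s1 ^ 2) * (2 * l + 4 * m ^ 2 * s1) - s1 * ρ -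
        ρ ^ 2 * (4 * m ^ 2 * s1 * E + w3 * (ρ + 4 * m ^ 2 * e0)) := by
  obtain ⟨-, -, f3, f2, f1, f0⟩ := G
  have h1 : e1 = -s1 + w3 * ρ ^ 2 := f3.symm
  subst h1
  obtain ⟨E, hE⟩ : ∃ E : R, E = w2 - l * w3 + 2 * m ^ 2 * (2 * s1 * w3 - w3 ^ 2 * ρ ^ 2) := ⟨_, rfl⟩
  have h0 : e0 = -(s0 + 2 * m ^ 2 * s1 ^ 2) - l * s1 + ρ ^ 2 * E := by rw [hE]; linear_combination -f2
  subst h0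
  obtain ⟨h, hh⟩ : ∃ h : R, s0 = h - 2 * m ^ 2 * s1 ^ 2 := ⟨s0 + 2 * m ^ 2 * s1 ^ 2, by ring⟩
  subst hh
  refine ⟨-(l * E + w3 * ρ - w1 - 4 * m ^ 2 * (E * s1 + w3 * (h + l * s1)) + 4 * m ^ 2 * ρ ^ 2 * E * w3), E,
    E - 4 * m ^ 2 * s1 * w3 - w3 * (l + 4 * m ^ 2 * (-s1 + w3 * ρ ^ 2)), ?_, ?_, ?_, ?_⟩
  · linear_combination -f1
  · linear_combination -f0
  · ring
  · ring

lemma η_odd (hη : η = 1 ∨ η = -1) : ∃ t : R, (η : R) = 2 * t + 1 := by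
  rcases hη with rfl | rfl
  · exact ⟨0, by simp⟩
  · exact ⟨-1, by push_cast; ring⟩

/-- Halving when the divisor reduces to twice the Weierstrass point `0`. -/
theorem Half.even (hη : η = 1 ∨ η = -1) {b m s1 s0 w3 w2 w1 w0 l ρ e1 e0 : R} (hm : m ≠ 0)
    (H : Dat η n3 n2 n1 (2 * b) (2 * m) s1 s0 w3 w2 w1 w0) (G : Half m s1 s0 w3 w2 w1 w0 l ρ e1 e0) (hh : s0 + 2 * m ^ 2 * s1 ^ 2 ≠ 0) :
    ∃ b' u, IsUnit u ∧ 8 ∣ b' - 2 * b - 2 * m ^ 2 * s1 ∧ ∃ s1 s0 w3 w2 w1 w0, Dat η n3 n2 n1 b' (m * u) s1 s0 w3 w2 w1 w0 := by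
  obtain ⟨B, E, D, q1, q0, p1, p0⟩ := G.elim
  obtain ⟨l', rfl⟩ := G.hl
  obtain ⟨ρ', rfl⟩ := G.hρ
  obtain ⟨T, hT⟩ := η_odd hη
  have hs1 : ∃ t, s1 = 2 * t + 1 :=
    ⟨-4 * m ^ 2 * (s1 * w0 + s0 * w1) + η * (40 * b ^ 4 + 32 * n3 * b ^ 3 + 12 * n2 * b ^ 2 + 4 * n1 * b) - T - 1, by linear_combination H.e1 - hT⟩
  obtain ⟨s0', hs0⟩ : ∃ t, s0 = 2 * t :=
    ⟨-4 * m ^ 2 * (s0 * w0) + η * (16 * b ^ 5 + 16 * n3 * b ^ 4 + 8 * n2 * b ^ 3 + 4 * n1 * b ^ 2 - b), by linear_combination H.e0⟩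
  obtain ⟨w0', hw0⟩ : ∃ t, w0 = 2 * t :=
    ⟨4 * m ^ 2 * (s1 * w1 + s0 * w2) - η * (40 * b ^ 3 + 24 * n3 * b ^ 2 + 6 * n2 * b + n1), by linear_combination -H.e2⟩
  obtain ⟨v1, hv1⟩ : ∃ v, v = s1 + 2 * ρ' * B := ⟨_, rfl⟩
  have hv1u : IsUnit v1 := by
    obtain ⟨t, ht⟩ := hs1
    exact isUnit_iff_odd.2 ⟨t + ρ' * B, by rw [hv1, ht]; ring⟩
  obtain ⟨v1', hv1'⟩ := hv1u.exists_right_inv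
  obtain ⟨h, hhdef⟩ : ∃ h, h = s0 + 2 * m ^ 2 * s1 ^ 2 := ⟨_, rfl⟩
  rw [← hhdef] at q1 q0 p1 p0 hh
  rw [← hv1] at q1
  obtain ⟨μ, hμ⟩ : ∃ μ, μ = (2 * l' + 4 * m ^ 2 * s1) * v1' := ⟨_, rfl⟩
  have hμ1 : μ * v1 = 2 * l' + 4 * m ^ 2 * s1 := by rw [hμ]; linear_combination (2 * l' + 4 * m ^ 2 * s1) * hv1'
  have hμρ : h * μ = 2 * ρ' := by rw [hμ]; linear_combination v1' * q1 + 2 * ρ' * hv1'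
  obtain ⟨Y, hY⟩ : ∃ Y, l' * B + (ρ' * E - w0' - 2 * m ^ 2 * (h + 2 * l' * s1) * E + 4 * m ^ 2 * ρ' ^ 2 * E ^ 2) = Y := ⟨_, rfl⟩
  have hμδ : μ - 2 * μ ^ 2 * Y = 2 * m ^ 2 := by
    apply mul_left_cancel₀ (pow_ne_zero 2 hh)
    rw [← hY]
    have hq := q0
    rw [hw0] at hq
    linear_combination -hq + 2 * l' * h * μ * hv1 - 2 * l' * h * hμ1 +
      ((h + 2 * l' * s1) - 2 * h * l' * μ * B - (2 * ρ' + h * μ) * (2 * ρ' * E - 2 * w0' - 4 * m ^ 2 * (h + 2 * l' * s1) * E + 2 * m ^ 2 * (2 * ρ') ^ 2 * E ^ 2)) * hμρ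
  have hz : IsUnit (1 - 2 * μ * Y) := isUnit_iff_odd.2 ⟨-(μ * Y), by ring⟩
  obtain ⟨z, hz'⟩ := hz.exists_right_inv
  have hμz : μ = 2 * m ^ 2 * z := by linear_combination z * hμδ - μ * hz'
  have hzu : IsUnit z := IsUnit.of_mul_eq_one_right _ hz'
  have hν : IsUnit (1 + h * μ ^ 2 * D) := isUnit_iff_odd.2 ⟨m ^ 2 * z * (h * μ * D), by linear_combination h * μ * D * hμz⟩
  obtain ⟨ν, hν'⟩ := hν.exists_right_inv
  have hνu : IsUnit ν := IsUnit.of_mul_eq_one_right _ hν'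
  obtain ⟨t0, ht0⟩ : ∃ t, t = 2 * (2 * l') + 4 * m ^ 2 * s1 - s1 * μ - h * μ ^ 2 * (4 * m ^ 2 * s1 * E + w3 * (2 * ρ' + 4 * m ^ 2 * e0)) := ⟨_, rfl⟩
  refine ⟨2 * b - t0 * ν, z * ν, hzu.mul hνu, ?_, ?_⟩
  · obtain ⟨W, hW⟩ : ∃ W, W = 4 * m ^ 2 * s1 * E + w3 * (2 * ρ' + 4 * m ^ 2 * e0) := ⟨_, rfl⟩
    rw [← hW] at ht0
    obtain ⟨μ', rfl⟩ : ∃ t, μ = 2 * t := ⟨m ^ 2 * z, by linear_combination hμz⟩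
    obtain ⟨h', rfl⟩ : ∃ t, h = 2 * t := ⟨s0' + m ^ 2 * s1 ^ 2, by linear_combination hhdef + hs0⟩
    rw [hv1, ← hμρ] at hμ1
    refine ⟨-(ν * (s1 * μ' ^ 2 * Y + h' * μ' ^ 2 * (2 * B - W)) + 2 * m ^ 2 * s1 * h' * μ' ^ 2 * D * ν), ?_⟩
    linear_combination -ν * ht0 + 2 * ν * hμ1 - ν * s1 * hμδ + 2 * m ^ 2 * s1 * hν'
  · refine G.dat hm H rfl rfl ?_ ?_ ?_
    · rw [p1, ← hμρ]
      rw [show h + (h * μ) ^ 2 * D = h * (1 + h * μ ^ 2 * D) by ring]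
      exact mul_ne_zero hh hν.ne_zero
    · rw [p1, p0, ht0, ← hμρ]
      linear_combination h * (2 * (2 * l') + 4 * m ^ 2 * s1 - s1 * μ - h * μ ^ 2 * (4 * m ^ 2 * s1 * E + w3 * (h * μ + 4 * m ^ 2 * e0))) * hν'
    · rw [p1, ← hμρ]
      linear_combination 2 * m ^ 2 * h * z * hν' - h * hμz

/-- The divisor `0 + x`, where `(x, x / k)` is a point of the curve. -/
lemma dat_of_point {x k : R} (h : x = 2 * k ^ 2 * (η * (x ^ 4 + 2 * n3 * x ^ 3 + 2 * n2 * x ^ 2 + 2 * n1 * x - 1))) :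
    ∃ s1 s0 w3 w2 w1 w0, Dat η n3 n2 n1 0 k s1 s0 w3 w2 w1 w0 := by
  have hd : (X - C (0 : R)) ^ 2 + C (-x) * (X - C (0 : R)) + C 0 ∣ (X - C (0 : R)) ^ 2 - C (2 * k ^ 2) * quintic η n3 n2 n1 := by
    have hr : X - C x ∣ X - C (2 * k ^ 2 * η : R) * (X ^ 4 + C (2 * n3 : R) * X ^ 3 + C (2 * n2 : R) * X ^ 2 + C (2 * n1 : R) * X - 1) := by
      rw [dvd_iff_isRoot, IsRoot.def]
      simp only [eval_sub, eval_add, eval_mul, eval_pow, eval_X, eval_C, eval_one]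
      linear_combination h
    obtain ⟨Q, hQ⟩ := hr
    refine ⟨Q, ?_⟩
    rw [quintic]
    simp only [C_mul, C_neg, C_0] at hQ ⊢
    linear_combination X * hQ
  obtain ⟨s1, s0, w3, w2, w1, w0, H, -⟩ := mk_dat hd
  exact ⟨s1, s0, w3, w2, w1, w0, H⟩

/-- If `h = 0` then `U` is the square of `X - x` with `f x = 2 m ^ 2 s1 ^ 2`, and half of the divisor is `x` itself. -/
lemma Dat.tangent (hη : η = 1 ∨ η = -1) {b m s1 s0 w3 w2 w1 w0 : R}
    (H : Dat η n3 n2 n1 (2 * b) (2 * m) s1 s0 w3 w2 w1 w0) (hh : s0 + 2 * m ^ 2 * s1 ^ 2 = 0) :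
    ∃ u x, IsUnit u ∧ x = 2 * b + 4 * m ^ 2 * s1 ∧ η * x * (x ^ 4 + 2 * n3 * x ^ 3 + 2 * n2 * x ^ 2 + 2 * n1 * x - 1) = 2 * m ^ 2 * s1 ^ 2 ∧
      ∃ s1 s0 w3 w2 w1 w0, Dat η n3 n2 n1 0 (m * u) s1 s0 w3 w2 w1 w0 := by
  obtain ⟨x, hx⟩ : ∃ x, x = 2 * b + 4 * m ^ 2 * s1 := ⟨_, rfl⟩
  have hf : η * x * (x ^ 4 + 2 * n3 * x ^ 3 + 2 * n2 * x ^ 2 + 2 * n1 * x - 1) = 2 * m ^ 2 * s1 ^ 2 := by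
    rw [H.identity x, hx]
    have h0 : s0 = -(2 * m ^ 2 * s1 ^ 2) := by linear_combination hh
    rw [h0]; ring
  obtain ⟨x', rfl⟩ : ∃ x', x = 2 * x' := ⟨b + 2 * m ^ 2 * s1, by rw [hx]; ring⟩
  obtain ⟨T, hT⟩ := η_odd hη
  have hη2 : (η : R) ^ 2 = 1 := by rcases hη with rfl | rfl <;> norm_num
  have hs1 : IsUnit s1 := isUnit_iff_odd.2
    ⟨-4 * m ^ 2 * (s1 * w0 + s0 * w1) + η * (40 * b ^ 4 + 32 * n3 * b ^ 3 + 12 * n2 * b ^ 2 + 4 * n1 * b) - T - 1, by linear_combination H.e1 - hT⟩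
  have hg : IsUnit ((2 * x') ^ 4 + 2 * n3 * (2 * x') ^ 3 + 2 * n2 * (2 * x') ^ 2 + 2 * n1 * (2 * x') - 1 : R) :=
    isUnit_iff_odd.2 ⟨8 * x' ^ 4 + 8 * n3 * x' ^ 3 + 4 * n2 * x' ^ 2 + 2 * n1 * x' - 1, by ring⟩
  obtain ⟨g, hg'⟩ := hg.exists_right_inv
  have hgu : IsUnit g := IsUnit.of_mul_eq_one_right _ hg'
  have hηu : IsUnit (η : R) := by rcases hη with rfl | rfl <;> simp
  refine ⟨s1 * (η * g), 2 * x', hs1.mul (hηu.mul hgu), hx, hf, dat_of_point (x := 2 * x') ?_⟩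
  generalize (2 * x') ^ 4 + 2 * n3 * (2 * x') ^ 3 + 2 * n2 * (2 * x') ^ 2 + 2 * n1 * (2 * x') - 1 = G at *
  linear_combination (η * g) * hf - 2 * x' * η ^ 2 * hg' - 2 * x' * hη2 - 2 * m ^ 2 * s1 ^ 2 * η * g * hη2 - 2 * m ^ 2 * s1 ^ 2 * η ^ 3 * g * hg'

/-- Halving on the model with root `1 + θ`; the last clause keeps track of the position of the divisor. -/
theorem halve_inv {b m s1 s0 w3 w2 w1 w0 : R} (hm : m ≠ 0) (H : Dat (-1) (-3) 6 (-4) (2 * b) (2 * m) s1 s0 w3 w2 w1 w0) :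
    ∃ b' u, IsUnit u ∧ 8 ∣ b' - 2 * b - 2 * m ^ 2 ∧ ∃ s1 s0 w3 w2 w1 w0, Dat (-1) (-3) 6 (-4) b' (m * u) s1 s0 w3 w2 w1 w0 := by
  have hη : (-1 : ℤ) = 1 ∨ (-1 : ℤ) = -1 := Or.inr rfl
  obtain ⟨t, ht⟩ : ∃ t, s1 = 4 * t + 1 := by
    refine ⟨-2 * m ^ 2 * (s1 * w0 + s0 * w1) - (20 * b ^ 4 - 48 * b ^ 3 + 36 * b ^ 2 - 8 * b), ?_⟩
    have := H.e1
    push_cast at this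
    linear_combination this
  by_cases hh : s0 + 2 * m ^ 2 * s1 ^ 2 = 0
  · obtain ⟨u, x, hu, hx, hf, D⟩ := H.tangent hη hh
    refine ⟨0, u, hu, ?_, D⟩
    obtain ⟨x', hx'⟩ : ∃ x', x = 2 * x' := ⟨b + 2 * m ^ 2 * s1, by rw [hx]; ring⟩
    rw [hx'] at hf hx
    push_cast at hf
    obtain ⟨q, hq⟩ : ∃ q, q = 4 * x' ^ 4 - 12 * x' ^ 3 + 12 * x' ^ 2 - 4 * x' := ⟨_, rfl⟩
    refine ⟨-x' * q - 4 * m ^ 2 * t ^ 2, ?_⟩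
    linear_combination hx - hf + 8 * x' * hq - 2 * m ^ 2 * (s1 - 1 + 4 * t) * ht
  · obtain ⟨l, ρ, e1, e0, G⟩ := model_inv.half hm H
    obtain ⟨b', u, hu, ⟨c, hc⟩, D⟩ := G.even hη hm H hh
    exact ⟨b', u, hu, ⟨c + m ^ 2 * t, by linear_combination hc + 2 * m ^ 2 * ht⟩, D⟩

end SR
end

/-! ### Infinite descent -/

noncomputable section
namespace SR
open Polynomial

/-- Halving on the curve `y ^ 2 = 2 x (x ^ 4 + 8 x ^ 3 - 12 x ^ 2 + 6 x - 1)` for divisors reducing to twice the point `x = 1`. -/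
theorem Half.odd {b m s1 s0 w3 w2 w1 w0 l ρ e1 e0 : R} (hm : m ≠ 0)
    (H : Dat 1 4 (-6) 3 (2 * b + 1) (2 * m) s1 s0 w3 w2 w1 w0) (G : Half m s1 s0 w3 w2 w1 w0 l ρ e1 e0) :
    ∃ b' u, IsUnit u ∧ ∃ s1 s0 w3 w2 w1 w0, Dat 1 4 (-6) 3 b' (m * u) s1 s0 w3 w2 w1 w0 := by
  obtain ⟨B, E, D, q1, q0, p1, p0⟩ := G.elim
  obtain ⟨l', rfl⟩ := G.hl
  obtain ⟨r, rfl⟩ := G.hρ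
  have E2 := H.e2
  have E1 := H.e1
  have E0 := H.e0
  push_cast at E2 E1 E0
  obtain ⟨t, ht⟩ : ∃ t, s1 = 4 * t :=
    ⟨-2 * m ^ 2 * (s1 * w0 + s0 * w1) + (3 + 28 * b + 90 * b ^ 2 + 104 * b ^ 3 + 20 * b ^ 4), by linear_combination E1⟩
  obtain ⟨s', hs0, hs'⟩ : ∃ s', s0 = 2 * s' ∧ ∃ q, s' = 2 * q + 1 :=
    ⟨-4 * m ^ 2 * (s0 * w0) + (2 * b + 1) * (1 + 10 * b + 36 * b ^ 2 + 48 * b ^ 3 + 8 * b ^ 4), by linear_combination E0,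
      -2 * m ^ 2 * (s0 * w0) + b * (1 + 10 * b + 36 * b ^ 2 + 48 * b ^ 3 + 8 * b ^ 4) + 5 * b + 18 * b ^ 2 + 24 * b ^ 3 + 4 * b ^ 4, by ring⟩
  obtain ⟨w0', hw0⟩ : ∃ t, w0 = 2 * t :=
    ⟨4 * m ^ 2 * (s1 * w1 + s0 * w2) - (40 * b ^ 3 + 156 * b ^ 2 + 90 * b + 14), by linear_combination -E2⟩
  obtain ⟨h, hhdef⟩ : ∃ h, h = s' + m ^ 2 * s1 ^ 2 := ⟨_, rfl⟩
  have hh2 : s0 + 2 * m ^ 2 * s1 ^ 2 = 2 * h := by rw [hhdef, hs0]; ring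
  rw [hh2] at q1 q0 p1 p0
  have hhu : IsUnit h := by
    obtain ⟨q, hq⟩ := hs'
    exact isUnit_iff_odd.2 ⟨q + 8 * m ^ 2 * t ^ 2, by rw [hhdef, hq, ht]; ring⟩
  obtain ⟨g, hg⟩ := hhu.exists_right_inv
  -- `l + 4 m ^ 2 s1 = r κ`
  have hκ : h * (2 * l' + 4 * m ^ 2 * s1) = r * (s1 + 2 * r * B) := mul_left_cancel₀ prime_two.ne_zero (by linear_combination q1)
  obtain ⟨Y, hY⟩ : ∃ Y, l' * B + (r * E - w0' - 2 * m ^ 2 * (2 * h + 2 * l' * s1) * E + 4 * m ^ 2 * r ^ 2 * E ^ 2) = Y := ⟨_, rfl⟩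
  have hr : r * (h - 2 * r * Y) = 2 * m ^ 2 * h ^ 2 := by
    apply mul_left_cancel₀ prime_two.ne_zero
    apply mul_left_cancel₀ prime_two.ne_zero
    rw [← hY]
    rw [hw0] at q0
    linear_combination -q0 + 4 * l' * hκ
  have hz : IsUnit (h - 2 * r * Y) := by
    obtain ⟨c, hc⟩ := isUnit_iff_odd.1 hhu
    exact isUnit_iff_odd.2 ⟨c - r * Y, by linear_combination hc⟩
  obtain ⟨z, hz'⟩ := hz.exists_right_inv
  have hrz : r = 2 * m ^ 2 * (h ^ 2 * z) := by linear_combination z * hr - r * hz'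
  have hzu : IsUnit z := IsUnit.of_mul_eq_one_right _ hz'
  have hν : IsUnit (h + 2 * r ^ 2 * D) := by
    obtain ⟨c, hc⟩ := isUnit_iff_odd.1 hhu
    exact isUnit_iff_odd.2 ⟨c + r ^ 2 * D, by linear_combination hc⟩
  obtain ⟨ν, hν'⟩ := hν.exists_right_inv
  have hνu : IsUnit ν := IsUnit.of_mul_eq_one_right _ hν'
  obtain ⟨t0, ht0⟩ : ∃ t0, t0 = h * (2 * (2 * l') + 4 * m ^ 2 * s1) - 4 * t * r - 2 * r ^ 2 * (4 * m ^ 2 * s1 * E + w3 * (2 * r + 4 * m ^ 2 * e0)) :=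
    ⟨_, rfl⟩
  refine ⟨2 * b + 1 - t0 * ν, h ^ 2 * z * ν, ((hhu.pow 2).mul hzu).mul hνu, G.dat hm H rfl rfl ?_ ?_ ?_⟩
  · rw [p1, show 2 * h + (2 * r) ^ 2 * D = 2 * (h + 2 * r ^ 2 * D) by ring]
    exact mul_ne_zero prime_two.ne_zero hν.ne_zero
  · rw [p1, p0]
    linear_combination 2 * t0 * hν' + 2 * ht0 + 2 * r * ht
  · rw [p1]
    linear_combination 4 * m ^ 2 * h ^ 2 * z * hν' - 2 * hrz

/-- Over the odd-denominator rationals this curve carries no reduced divisor with `k ≠ 0`: repeated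
halving makes `k` odd, which is impossible. -/
theorem no_dat_χ (n : ℕ) : ∀ b k u s1 s0 w3 w2 w1 w0 : R, IsUnit u → k = 2 ^ n * u → ¬ Dat 1 4 (-6) 3 b k s1 s0 w3 w2 w1 w0 := by
  induction n with
  | zero =>
    intro b k u s1 s0 w3 w2 w1 w0 hu hk H
    obtain ⟨t, ht⟩ := isUnit_iff_odd.1 hu
    rw [pow_zero, one_mul, ht] at hk
    rw [hk] at H
    exact H.not_odd
  | succ n ih =>
    intro b k u s1 s0 w3 w2 w1 w0 hu hk H
    obtain ⟨m, hm⟩ : ∃ m, m = 2 ^ n * u := ⟨_, rfl⟩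
    have hm0 : m ≠ 0 := by rw [hm]; exact mul_ne_zero (pow_ne_zero _ prime_two.ne_zero) hu.ne_zero
    rw [show k = 2 * m by rw [hk, hm, pow_succ]; ring] at H
    have key : ∃ b' u', IsUnit u' ∧ ∃ s1 s0 w3 w2 w1 w0, Dat 1 4 (-6) 3 b' (m * u') s1 s0 w3 w2 w1 w0 := by
      obtain ⟨c, rfl⟩ | ⟨c, rfl⟩ := even_or_odd b
      · by_cases hh : s0 + 2 * m ^ 2 * s1 ^ 2 = 0
        · obtain ⟨u', x, hu', -, -, D⟩ := H.tangent (Or.inl rfl) hh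
          exact ⟨0, u', hu', D⟩
        · obtain ⟨l, ρ, e1, e0, G⟩ := model_χ.half hm0 H
          obtain ⟨b', u', hu', -, D⟩ := G.even (Or.inl rfl) hm0 H hh
          exact ⟨b', u', hu', D⟩
      · obtain ⟨l, ρ, e1, e0, G⟩ := model_χ.half hm0 H
        exact G.odd hm0 H
    obtain ⟨b', u', hu', t1, t0, v3, v2, v1, v0, D⟩ := key
    exact ih b' (m * u') (u * u') t1 t0 v3 v2 v1 v0 (hu.mul hu') (by rw [hm]; ring) D

theorem no_dat {b k s1 s0 w3 w2 w1 w0 : R} (hk : k ≠ 0) : ¬ Dat 1 4 (-6) 3 b k s1 s0 w3 w2 w1 w0 := by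
  obtain ⟨n, u, hu, h⟩ := exists_pow_unit hk
  exact no_dat_χ n b k u s1 s0 w3 w2 w1 w0 hu h

/-- Repeated halving on the other model makes `k` odd; `b / 2` grows by `m ^ 2` modulo `4` at each step. -/
theorem chain_inv (n : ℕ) : ∀ b k u s1 s0 w3 w2 w1 w0 : R, IsUnit u → k = 2 ^ (n + 1) * u → Dat (-1) (-3) 6 (-4) (2 * b) k s1 s0 w3 w2 w1 w0 →
    ∃ b' k', 4 ∣ b' - b - 1 ∧ IsUnit k' ∧ ∃ s1 s0 w3 w2 w1 w0, Dat (-1) (-3) 6 (-4) (2 * b') k' s1 s0 w3 w2 w1 w0 := by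
  induction n with
  | zero =>
    intro b k u s1 s0 w3 w2 w1 w0 hu hk H
    rw [show k = 2 * u by rw [hk]; ring] at H
    obtain ⟨b', u', hu', ⟨c, hc⟩, D⟩ := halve_inv hu.ne_zero H
    obtain ⟨t, ht⟩ := isUnit_iff_odd.1 hu
    have hb : b' = 2 * (b + u ^ 2 + 4 * c) := by linear_combination hc
    rw [hb] at D
    exact ⟨_, _, ⟨t ^ 2 + t + c, by rw [ht]; ring⟩, hu.mul hu', D⟩
  | succ n ih =>
    intro b k u s1 s0 w3 w2 w1 w0 hu hk H
    obtain ⟨m, hm⟩ : ∃ m, m = 2 ^ (n + 1) * u := ⟨_, rfl⟩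
    have hm0 : m ≠ 0 := by rw [hm]; exact mul_ne_zero (pow_ne_zero _ prime_two.ne_zero) hu.ne_zero
    rw [show k = 2 * m by rw [hk, hm, pow_succ _ (n + 1)]; ring] at H
    obtain ⟨b', u', hu', ⟨c, hc⟩, t1, t0, v3, v2, v1, v0, D⟩ := halve_inv hm0 H
    have hb : b' = 2 * (b + m ^ 2 + 4 * c) := by linear_combination hc
    rw [hb] at D
    obtain ⟨b'', k'', ⟨d, hd⟩, h⟩ := ih _ (m * u') (u * u') t1 t0 v3 v2 v1 v0 (hu.mul hu') (by rw [hm]; ring) D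
    exact ⟨b'', k'', ⟨d + (2 ^ n * u) ^ 2 + c, by rw [hm, pow_succ] at hd; linear_combination hd⟩, h⟩

end SR
end

/-! ### Passing between the models -/

noncomputable section
namespace SR
open Polynomial

/-- A reduced divisor on `2 a ^ 2 = - q (q ^ 4 - 6 q ^ 3 + 12 q ^ 2 - 8 q - 1)`, with `k` a unit, is moved by the
substitution `ζ = 1 / q` and by adding the rational point `ζ = 1 / 2` to a reduced divisor on the other integral model. The
quadratic `W = ρ0 + (ρ1 + 2 U1 ρ0) ζ + 2 Y2 ζ ^ 2` interpolates the divisor and that point, and the residual zeros of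
`W ^ 2 - 8 g ^ 2 f`, which are those of `ζ ^ 2 + 2 E1 ζ + E0`, form the new divisor. -/
theorem transition {b k g b' d' s1 s0 w3 w2 w1 w0 : R} (H : Dat (-1) (-3) 6 (-4) (2 * b) k s1 s0 w3 w2 w1 w0) (hk : IsUnit k)
    (hg : g ≠ 0) (hb' : IsUnit b') (hd' : IsUnit d') (hb : b = g * b') (hd : 1 - b - k = g * d') : False := by
  obtain ⟨κ, hκ⟩ := hk.exists_right_inv
  obtain ⟨β, hβ⟩ := hb'.exists_right_inv
  obtain ⟨γ, hγ⟩ := hd'.exists_right_inv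
  have hκu := IsUnit.of_mul_eq_one_right _ hκ
  have hβu := IsUnit.of_mul_eq_one_right _ hβ
  have hγu := IsUnit.of_mul_eq_one_right _ hγ
  -- the coefficients of `M = (V ^ 2 - 2 k ^ 2 f) / U`
  obtain ⟨m3, hm3⟩ : ∃ m, m = 2 * k ^ 2 * w3 := ⟨_, rfl⟩
  obtain ⟨m2, hm2⟩ : ∃ m, m = 2 * k ^ 2 * (w2 - 6 * b * w3) := ⟨_, rfl⟩
  obtain ⟨m1, hm1⟩ : ∃ m, m = 2 * k ^ 2 * (12 * b ^ 2 * w3 - 4 * b * w2 + w1) := ⟨_, rfl⟩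
  obtain ⟨M0, hM0⟩ : ∃ m, m = 1 + 2 * k ^ 2 * (-8 * b ^ 3 * w3 + 4 * b ^ 2 * w2 - 2 * b * w1 + w0) := ⟨_, rfl⟩
  obtain ⟨M1, hM1⟩ : ∃ m, m = M0 + 2 * m1 + 4 * m2 + 8 * m3 := ⟨_, rfl⟩
  have hM0u : IsUnit M0 := isUnit_iff_odd.2 ⟨k ^ 2 * (-8 * b ^ 3 * w3 + 4 * b ^ 2 * w2 - 2 * b * w1 + w0), by rw [hM0]; ring⟩
  have hM1u : IsUnit M1 := by
    obtain ⟨t, ht⟩ := isUnit_iff_odd.1 hM0u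
    exact isUnit_iff_odd.2 ⟨t + m1 + 2 * m2 + 4 * m3, by rw [hM1, ht]; ring⟩
  obtain ⟨N0, hN0⟩ := hM0u.exists_right_inv
  have hE5 := H.e5
  have hE4 := H.e4
  have hE3 := H.e3
  have hE2 := H.e2
  have hE1 := H.e1
  have hE0 := H.e0
  push_cast at hE5 hE4 hE3 hE2 hE1 hE0
  obtain ⟨U1, hU1⟩ : ∃ m, m = -2 * b - k ^ 2 * s1 := ⟨_, rfl⟩
  obtain ⟨u0, hu0⟩ : ∃ m, m = b' ^ 2 * N0 := ⟨_, rfl⟩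
  have huM : u0 * M0 = b' ^ 2 := by rw [hu0]; linear_combination b' ^ 2 * hN0
  have hu0u : IsUnit u0 := by rw [hu0]; exact (hb'.pow 2).mul (IsUnit.of_mul_eq_one_right _ hN0)
  obtain ⟨ui, hui⟩ := hu0u.exists_right_inv
  have hUM0 : (4 * b ^ 2 - 2 * k ^ 2 * s0 + 4 * k ^ 2 * s1 * b) * M0 = 4 * b ^ 2 := by
    rw [hM0]
    linear_combination -2 * k ^ 2 * (hE0 - 2 * b * hE1 + 4 * b ^ 2 * hE2 - 8 * b ^ 3 * hE3 + 16 * b ^ 4 * hE4 - 32 * b ^ 5 * hE5)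
  have hU0 : 4 * (g ^ 2 * u0) = 4 * b ^ 2 - 2 * k ^ 2 * s0 + 4 * k ^ 2 * s1 * b := by
    apply mul_right_cancel₀ hM0u.ne_zero
    rw [hUM0, hb]
    linear_combination 4 * g ^ 2 * huM
  have hJ5 : 2 * U1 * M0 + 4 * (g ^ 2 * u0) * m1 = -4 * b - 2 * k ^ 2 := by
    rw [hU0, hU1, hM0, hm1]
    linear_combination -2 * k ^ 2 * (hE1 - 4 * b * hE2 + 12 * b ^ 2 * hE3 - 32 * b ^ 3 * hE4 + 80 * b ^ 4 * hE5)
  have hV1 : (1 + U1 + g ^ 2 * u0) * M1 = (1 - b) ^ 2 - k ^ 2 := by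
    have h4 : (4 : R) ≠ 0 := by norm_num
    apply mul_left_cancel₀ h4
    rw [show 4 * ((1 + U1 + g ^ 2 * u0) * M1) = (4 + 4 * U1 + 4 * (g ^ 2 * u0)) * M1 by ring]
    rw [hU0, hU1, hM1, hM0, hm1, hm2, hm3]
    linear_combination -2 * k ^ 2 * (hE0 + 2 * (1 - b) * hE1 + 4 * (1 - b) ^ 2 * hE2 + 8 * (1 - b) ^ 3 * hE3 + 16 * (1 - b) ^ 4 * hE4 + 32 * (1 - b) ^ 5 * hE5)
  -- the coefficients of the interpolating quadratic `W`
  obtain ⟨ρ1, hρ1⟩ : ∃ m, m = M0 * κ * β := ⟨_, rfl⟩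
  obtain ⟨L, hL⟩ : ∃ m, m = -M1 * κ * γ := ⟨_, rfl⟩
  have hρ1u : IsUnit ρ1 := by rw [hρ1]; exact (hM0u.mul hκu).mul hβu
  have hLu : IsUnit L := by rw [hL]; exact (hM1u.neg.mul hκu).mul hγu
  obtain ⟨ρ0, hρ0⟩ : ∃ m, 2 * m = L - ρ1 := by
    obtain ⟨s, hs⟩ := isUnit_iff_odd.1 hρ1u
    obtain ⟨t, ht⟩ := isUnit_iff_odd.1 hLu
    exact ⟨t - s, by rw [hs, ht]; ring⟩
  obtain ⟨Y2, hY2⟩ : ∃ m, m = g * κ + U1 * ρ1 + 2 * g ^ 2 * u0 * ρ0 := ⟨_, rfl⟩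
  obtain ⟨E0, hEE0⟩ : ∃ m, m = u0 * ρ0 ^ 2 := ⟨_, rfl⟩
  obtain ⟨E1, hEE1⟩ : ∃ m, m = E0 + u0 * (2 * g ^ 2 * κ ^ 2 * m3 + ρ0 * ρ1 + U1 * ρ0 ^ 2) := ⟨_, rfl⟩
  have huρ : u0 * ρ1 = b' * κ := by rw [hρ1]; linear_combination κ * β * huM + b' * κ * hβ
  have hbρ : b' * ρ1 = M0 * κ := by rw [hρ1]; linear_combination M0 * κ * hβ
  have q4 : g ^ 2 * κ ^ 2 * M0 - 2 * g * b * κ * ρ1 + g ^ 2 * u0 * ρ1 ^ 2 = 0 := by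
    rw [hb]
    linear_combination -g ^ 2 * κ * hbρ + g ^ 2 * ρ1 * huρ
  have q3 : u0 * (2 * g ^ 2 * κ ^ 2 * m1 + 2 * g * κ * ρ1 - 4 * g * b * κ * ρ0 + U1 * ρ1 ^ 2 + 4 * g ^ 2 * u0 * ρ0 * ρ1) = -1 := by
    have h2 : (2 : R) ≠ 0 := by norm_num
    apply mul_left_cancel₀ h2
    linear_combination κ ^ 2 * hJ5 + (4 * g * κ + 2 * U1 * ρ1 + 8 * g ^ 2 * u0 * ρ0) * huρ + 2 * U1 * κ * hbρ - 2 * (k * κ + 1) * hκ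
      - (4 * κ ^ 2 + 8 * g * κ * ρ0 * u0) * hb
  have q2 : u0 * (4 * g ^ 2 * κ ^ 2 * m2 + 4 * g * κ * ρ0 + ρ1 ^ 2 + 4 * U1 * ρ0 * ρ1 + 4 * g ^ 2 * u0 * ρ0 ^ 2) = 1 - 4 * E1 := by
    have hdL : d' * L = -M1 * κ := by rw [hL]; linear_combination -M1 * κ * hγ
    have hUL : (1 + U1 + g ^ 2 * u0) * L = -(1 - b + k) * g * κ := by
      apply mul_left_cancel₀ hd'.ne_zero
      linear_combination (1 + U1 + g ^ 2 * u0) * hdL - κ * hV1 - (1 - b + k) * κ * hd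
    have hroot : g ^ 2 * κ ^ 2 * M1 + 2 * g * κ * (1 - b) * L + (1 + U1 + g ^ 2 * u0) * L ^ 2 = 0 := by
      linear_combination L * hUL + g * κ * L * hd + g ^ 2 * κ * hdL
    have hL' : L = 2 * ρ0 + ρ1 := by linear_combination -hρ0
    rw [hL'] at hroot
    linear_combination u0 * hroot - q3 - u0 * q4 + 4 * hEE1 + 4 * hEE0 - u0 * g ^ 2 * κ ^ 2 * hM1
  obtain ⟨A, hA⟩ : ∃ m, m = ρ1 + 2 * U1 * ρ0 - 4 * Y2 * E1 := ⟨_, rfl⟩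
  obtain ⟨B, hB⟩ : ∃ m, m = ρ0 - 2 * Y2 * E0 := ⟨_, rfl⟩
  have hAu : IsUnit A := by
    obtain ⟨t, ht⟩ := isUnit_iff_odd.1 hρ1u
    exact isUnit_iff_odd.2 ⟨t + U1 * ρ0 - 2 * Y2 * E1, by rw [hA, ht]; ring⟩
  obtain ⟨i, hi⟩ := hAu.exists_right_inv
  have hiu := IsUnit.of_mul_eq_one_right _ hi
  have hJ (x : R) : (x ^ 2 - 2 * b * x ^ 3) ^ 2 - 2 * k ^ 2 * (x ^ 5 + 8 * x ^ 4 - 12 * x ^ 3 + 6 * x ^ 2 - x) =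
      (1 + 2 * U1 * x + 4 * (g ^ 2 * u0) * x ^ 2) * (x * (m3 + m2 * x + m1 * x ^ 2 + M0 * x ^ 3)) := by
    rw [hU0, hU1, hM0, hm1, hm2, hm3]
    linear_combination 2 * k ^ 2 * (x * (1 - 2 * b * x) ^ 5 * hE5 + x ^ 2 * (1 - 2 * b * x) ^ 4 * hE4 + x ^ 3 * (1 - 2 * b * x) ^ 3 * hE3
      + x ^ 4 * (1 - 2 * b * x) ^ 2 * hE2 + x ^ 5 * (1 - 2 * b * x) * hE1 + x ^ 6 * hE0)
  have hQ (x : R) : (ρ0 + (ρ1 + 2 * U1 * ρ0) * x + 2 * Y2 * x ^ 2) ^ 2 - 8 * g ^ 2 * (x ^ 5 + 8 * x ^ 4 - 12 * x ^ 3 + 6 * x ^ 2 - x) =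
      (1 + 2 * U1 * x + 4 * (g ^ 2 * u0) * x ^ 2) * ((1 - 2 * x) * ui) * (x ^ 2 + 2 * E1 * x + E0) := by
    have hW : ρ0 + (ρ1 + 2 * U1 * ρ0) * x + 2 * Y2 * x ^ 2 =
        2 * g * κ * (x ^ 2 - 2 * b * x ^ 3) + (1 + 2 * U1 * x + 4 * (g ^ 2 * u0) * x ^ 2) * (ρ0 + ρ1 * x) := by
      rw [hY2]
      linear_combination 4 * g * κ * x ^ 3 * hb - 4 * g ^ 2 * x ^ 3 * huρ
    apply mul_left_cancel₀ hu0u.ne_zero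
    rw [hW]
    obtain ⟨D, hD⟩ : ∃ D, D = 1 + 2 * U1 * x + 4 * (g ^ 2 * u0) * x ^ 2 := ⟨_, rfl⟩
    have hJ' := hJ x
    have hq : u0 * (4 * g ^ 2 * κ ^ 2 * (x * (m3 + m2 * x + m1 * x ^ 2 + M0 * x ^ 3)) + 4 * g * κ * (x ^ 2 - 2 * b * x ^ 3) * (ρ0 + ρ1 * x) + D * (ρ0 + ρ1 * x) ^ 2) =
        (1 - 2 * x) * (x ^ 2 + 2 * E1 * x + E0) := by
      rw [hD]
      linear_combination 4 * u0 * x ^ 4 * q4 + 2 * x ^ 3 * q3 + x ^ 2 * q2 - 2 * x * hEE1 - hEE0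
    rw [← hD] at hJ' ⊢
    linear_combination 4 * g ^ 2 * κ ^ 2 * u0 * hJ' + D * hq + 8 * g ^ 2 * u0 * (k * κ + 1) * (x ^ 5 + 8 * x ^ 4 - 12 * x ^ 3 + 6 * x ^ 2 - x) * hκ
      - D * (1 - 2 * x) * (x ^ 2 + 2 * E1 * x + E0) * hui
  have hdvd : (X - C (-B * i)) ^ 2 + C (2 * E1 - 2 * B * i) * (X - C (-B * i)) + C (E0 + B ^ 2 * i ^ 2 - 2 * E1 * B * i) ∣
      (X - C (-B * i)) ^ 2 - C (2 * (2 * g * i) ^ 2) * quintic 1 4 (-6) 3 := by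
    refine ⟨C (i ^ 2) * ((1 + 2 * C U1 * X + 4 * C (g ^ 2 * u0) * X ^ 2) * ((1 - 2 * X) * C ui)
      - 4 * C Y2 * (C ρ0 + C (ρ1 + 2 * U1 * ρ0) * X + 2 * C Y2 * X ^ 2) + 4 * C Y2 ^ 2 * (X ^ 2 + 2 * C E1 * X + C E0)), ?_⟩
    apply Polynomial.funext
    intro x
    have h := hQ x
    rw [quintic]
    simp only [eval_add, eval_sub, eval_mul, eval_pow, eval_C, eval_X, eval_one, eval_ofNat]
    push_cast
    obtain ⟨D, hD⟩ : ∃ D, D = (1 + 2 * U1 * x + 4 * (g ^ 2 * u0) * x ^ 2) * ((1 - 2 * x) * ui) := ⟨_, rfl⟩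
    obtain ⟨W, hW⟩ : ∃ W, W = ρ0 + (ρ1 + 2 * U1 * ρ0) * x + 2 * Y2 * x ^ 2 := ⟨_, rfl⟩
    rw [← hD, ← hW] at h ⊢
    have hAB : A * x + B = W - 2 * Y2 * (x ^ 2 + 2 * E1 * x + E0) := by rw [hA, hB, hW]; ring
    have hx : x + B * i = (W - 2 * Y2 * (x ^ 2 + 2 * E1 * x + E0)) * i := by linear_combination i * hAB - x * hi
    rw [show x - -B * i = x + B * i by ring]
    linear_combination i ^ 2 * h + (x + B * i + (W - 2 * Y2 * (x ^ 2 + 2 * E1 * x + E0)) * i) * hx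
  obtain ⟨_, _, _, _, _, _, HD, -⟩ := mk_dat hdvd
  have h2 : (2 : R) ≠ 0 := by norm_num
  exact no_dat (mul_ne_zero (mul_ne_zero h2 hg) hiu.ne_zero) HD

end SR
end

/-! ### Rational points -/

noncomputable section
namespace SR
open Polynomial

variable {η n3 n2 n1 : ℤ}

lemma Dat.neg {b k s1 s0 w3 w2 w1 w0 : R} (H : Dat η n3 n2 n1 b k s1 s0 w3 w2 w1 w0) : Dat η n3 n2 n1 b (-k) s1 s0 w3 w2 w1 w0 where
  e5 := H.e5
  e4 := by rw [neg_sq]; exact H.e4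
  e3 := by rw [neg_sq]; exact H.e3
  e2 := by rw [neg_sq]; exact H.e2
  e1 := by rw [neg_sq]; exact H.e1
  e0 := by rw [neg_sq]; exact H.e0

/-- The reduced divisor cut out by the line `y = (x - b) / k` through two points. -/
lemma dat_of_two_points {x1 x2 b k : R} (hne : x1 ≠ x2)
    (h1 : (x1 - b) ^ 2 = 2 * k ^ 2 * (η * (x1 * (x1 ^ 4 + 2 * n3 * x1 ^ 3 + 2 * n2 * x1 ^ 2 + 2 * n1 * x1 - 1))))
    (h2 : (x2 - b) ^ 2 = 2 * k ^ 2 * (η * (x2 * (x2 ^ 4 + 2 * n3 * x2 ^ 3 + 2 * n2 * x2 ^ 2 + 2 * n1 * x2 - 1)))) :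
    ∃ s1 s0 w3 w2 w1 w0 : R, Dat η n3 n2 n1 b k s1 s0 w3 w2 w1 w0 := by
  have hdvd : (X - C x1) * (X - C x2) ∣ (X - C b) ^ 2 - C (2 * k ^ 2) * quintic η n3 n2 n1 := by
    obtain ⟨P, hP⟩ : ∃ P, P = (X - C b) ^ 2 - C (2 * k ^ 2) * quintic η n3 n2 n1 := ⟨_, rfl⟩
    have r1 : P.eval x1 = 0 := by
      rw [hP, quintic]; simp; linear_combination h1
    have r2 : P.eval x2 = 0 := by
      rw [hP, quintic]; simp; linear_combination h2
    rw [← hP]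
    obtain ⟨Q, hQ⟩ := dvd_iff_isRoot.2 r1
    rw [hQ]
    apply mul_dvd_mul_left
    rw [hQ, eval_mul] at r2
    refine dvd_iff_isRoot.2 ((mul_eq_zero.1 r2).resolve_left ?_)
    simpa [sub_eq_zero] using hne.symm
  have he : (X - C x1) * (X - C x2) = (X - C b) ^ 2 + C (2 * b - x1 - x2) * (X - C b) + C (b ^ 2 - b * (x1 + x2) + x1 * x2) := by
    simp only [C_sub, C_add, C_mul, C_pow, C_ofNat]; ring
  rw [he] at hdvd
  obtain ⟨s1, s0, w3, w2, w1, w0, H, -⟩ := mk_dat hdvd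
  exact ⟨s1, s0, w3, w2, w1, w0, H⟩

lemma four_odd {y : R} (h : ∃ t, y = 2 * t + 1) : ∃ t, y = 4 * t + 1 ∨ y = 4 * t - 1 := by
  obtain ⟨t, rfl⟩ := h
  obtain ⟨s, rfl⟩ | ⟨s, rfl⟩ := even_or_odd t
  · exact ⟨s, Or.inl (by ring)⟩
  · exact ⟨s + 1, Or.inr (by ring)⟩

/-- Points reducing to `ζ = 0`. -/
lemma no_point_zero {n : R} {y : ℚ} (hn : n ≠ 0) (hy : y ^ 2 = 2 * (2 * n) * ((2 * n) ^ 4 + 8 * (2 * n) ^ 3 - 12 * (2 * n) ^ 2 + 6 * (2 * n) - 1)) : False := by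
  have hu : IsUnit ((2 * n) ^ 4 + 8 * (2 * n) ^ 3 - 12 * (2 * n) ^ 2 + 6 * (2 * n) - 1 : R) :=
    isUnit_iff_odd.2 ⟨8 * n ^ 4 + 32 * n ^ 3 - 24 * n ^ 2 + 6 * n - 1, by ring⟩
  obtain ⟨i, hi⟩ := hu.exists_right_inv
  have hi' := congrArg (fun t : R => (t : ℚ)) hi
  push_cast at hi'
  have h4 : ((4 : R) : ℚ) = 4 := rfl
  have hnq : (n : ℚ) ≠ 0 := fun h => hn (Subtype.ext h)
  obtain ⟨μ, hμ⟩ : ∃ μ : ℚ, μ = (2 * (n : ℚ)) ^ 4 + 8 * (2 * (n : ℚ)) ^ 3 - 12 * (2 * (n : ℚ)) ^ 2 + 6 * (2 * (n : ℚ)) - 1 := ⟨_, rfl⟩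
  have hi2 : μ * i = 1 := by rw [hμ]; exact hi'
  rw [← hμ] at hy
  have hμ0 : μ ≠ 0 := left_ne_zero_of_mul_eq_one hi2
  have hy0 : y ≠ 0 := by
    rintro rfl
    have : 2 * (2 * (n : ℚ)) * μ ≠ 0 := mul_ne_zero (mul_ne_zero two_ne_zero (mul_ne_zero two_ne_zero hnq)) hμ0
    exact this (by rw [← hy]; ring)
  have hk2 : (2 * (n : ℚ) / y) ^ 2 = n * i := by
    rw [div_pow, hy]
    field_simp
    linear_combination -hi2
  have hkR : (2 * (n : ℚ) / y) ∈ R := sq_mem_R (by rw [hk2]; exact R.mul_mem n.2 i.2)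
  obtain ⟨k, hk⟩ : ∃ k : R, (k : ℚ) = 2 * n / y := ⟨⟨_, hkR⟩, rfl⟩
  have hk0 : k ≠ 0 := by
    rintro rfl
    have : 2 * (n : ℚ) / y ≠ 0 := div_ne_zero (mul_ne_zero two_ne_zero hnq) hy0
    exact this hk.symm
  have hkk : k ^ 2 = n * i := by apply coe_inj_R; push_cast; rw [hk]; exact hk2
  obtain ⟨_, _, _, _, _, _, H⟩ := dat_of_point (η := 1) (n3 := 4) (n2 := -6) (n1 := 3) (x := 2 * n) (k := k) (by
    push_cast
    rw [hkk]
    linear_combination -2 * n * hi)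
  exact no_dat hk0 H

/-- Points reducing to `ζ = 1`, joined to the point `(1, -2)`. -/
lemma no_point_one {w y : R} (hw : w ≠ 0) (hy : y ^ 2 = 2 * (1 + 2 * w) * ((1 + 2 * w) ^ 4 + 8 * (1 + 2 * w) ^ 3 - 12 * (1 + 2 * w) ^ 2 + 6 * (1 + 2 * w) - 1)) :
    False := by
  have h2 : (2 : R) ≠ 0 := by norm_num
  obtain ⟨y', rfl⟩ : ∃ y', y = 2 * y' := by
    obtain ⟨e, he⟩ := even_of_sq (x := y) (y := 0) (z := (1 + 2 * w) * ((1 + 2 * w) ^ 4 + 8 * (1 + 2 * w) ^ 3 - 12 * (1 + 2 * w) ^ 2 + 6 * (1 + 2 * w) - 1)) (by rw [hy]; ring)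
    exact ⟨e, by rw [he]; ring⟩
  have hy' : y' ^ 2 = 1 + 12 * w + 56 * w ^ 2 + 120 * w ^ 3 + 104 * w ^ 4 + 16 * w ^ 5 := by
    apply mul_left_cancel₀ (mul_ne_zero h2 h2)
    linear_combination hy
  have hodd : ∃ t, y' = 2 * t + 1 := by
    obtain ⟨e, he⟩ := even_of_sq (x := y') (y := 1) (z := 6 * w + 28 * w ^ 2 + 60 * w ^ 3 + 52 * w ^ 4 + 8 * w ^ 5) (by rw [hy']; ring)
    exact ⟨e, by rw [he]; ring⟩
  obtain ⟨t, ht⟩ : ∃ t, y' ^ 2 = (4 * t + 1) ^ 2 := by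
    obtain ⟨t, rfl | rfl⟩ := four_odd hodd
    · exact ⟨t, rfl⟩
    · exact ⟨-t, by ring⟩
  rw [ht] at hy'
  obtain ⟨v, hv⟩ | ⟨v, hv⟩ := even_or_odd w
  · have hu : IsUnit (2 * t + 1 : R) := isUnit_iff_odd.2 ⟨t, rfl⟩
    obtain ⟨i, hi⟩ := hu.exists_right_inv
    obtain ⟨k, hk⟩ : ∃ k, k = v * i := ⟨_, rfl⟩
    have hkv : k * (2 * t + 1) = v := by rw [hk]; linear_combination v * hi
    have hk0 : k ≠ 0 := by
      rintro rfl
      exact hw (by rw [hv, ← hkv]; ring)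
    obtain ⟨_, _, _, _, _, _, H⟩ := dat_of_two_points (η := 1) (n3 := 4) (n2 := -6) (n1 := 3) (x1 := 1) (x2 := 1 + 2 * w) (b := 1 + 2 * k) (k := k)
      (by simpa using mul_ne_zero h2 hw)
      (by push_cast; ring)
      (by
        have h1 : 1 + 2 * w - (1 + 2 * k) = 2 * k * (4 * t + 1) := by rw [hv, ← hkv]; ring
        rw [h1]
        push_cast
        linear_combination 4 * k ^ 2 * hy')
    exact no_dat hk0 H
  · refine two_mul_ne_odd (2 * t ^ 2 + t) (3 * v + 1 + 7 * w ^ 2 + 15 * w ^ 3 + 13 * w ^ 4 + 2 * w ^ 5) ?_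
    apply mul_left_cancel₀ (mul_ne_zero h2 h2)
    linear_combination hy' + 12 * hv

/-- Points with `z` integral at `2` and `a` even; here `x = 2 z` is the coordinate `1 / ζ`. -/
lemma no_point_inf_even {z c : R} (hc : c ≠ 0) (h : (2 * c) ^ 2 = z - 16 * (z - 1) ^ 3 * z ^ 2) : False := by
  have h2 : (2 : R) ≠ 0 := by norm_num
  have hu : IsUnit (1 - 16 * (z - 1) ^ 3 * z : R) := isUnit_iff_odd.2 ⟨-8 * (z - 1) ^ 3 * z, by ring⟩
  obtain ⟨i, hi⟩ := hu.exists_right_inv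
  -- `k = z / (2 c)`, whose square is `z / (1 - 16 (z - 1) ^ 3 z)`
  have hz : z = 4 * c ^ 2 * i := by linear_combination -z * hi - i * h
  obtain ⟨k, hk⟩ : ∃ k, k = 2 * c * i := ⟨_, rfl⟩
  have hk0 : c * i ≠ 0 := mul_ne_zero hc (IsUnit.of_mul_eq_one_right _ hi).ne_zero
  obtain ⟨_, _, _, _, _, _, H⟩ := dat_of_point (η := -1) (n3 := -3) (n2 := 6) (n1 := -4) (x := 2 * z) (k := k) (by
    have hk2 : k ^ 2 = z * i := by rw [hk, hz]; ring
    rw [hk2]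
    push_cast
    linear_combination -2 * z * hi)
  obtain ⟨n, u, hu, hn⟩ := exists_pow_unit hk0
  obtain ⟨b', k', ⟨t, ht⟩, hk', _, _, _, _, _, _, H'⟩ := chain_inv n 0 k u _ _ _ _ _ _ hu (by rw [hk, mul_assoc, hn]; ring) (by simpa using H)
  obtain ⟨s, hs⟩ := isUnit_iff_odd.1 hk'
  exact transition H' hk' one_ne_zero (isUnit_iff_odd.2 ⟨2 * t, by linear_combination ht⟩)
    (isUnit_iff_odd.2 ⟨-2 * t - s - 1, by linear_combination -ht - hs⟩ : IsUnit (1 - b' - k')) (one_mul _).symm (one_mul _).symm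

/-- Points with `z` integral at `2` and `a` odd, joined to the point `(2, -2)` in the coordinate `x = 2 z`. -/
lemma no_point_inf_odd {z c : R} (hz : z ≠ 1) (h : (4 * c + 1) ^ 2 = z - 16 * (z - 1) ^ 3 * z ^ 2) : False := by
  have h2 : (2 : R) ≠ 0 := by norm_num
  obtain ⟨i, hi⟩ := (isUnit_iff_odd.2 ⟨c, rfl⟩ : IsUnit (2 * c + 1 : R)).exists_right_inv
  obtain ⟨v, hv⟩ : ∃ v, z - 1 = 8 * v := ⟨2 * c ^ 2 + c + 2 * (z - 1) ^ 3 * z ^ 2, by linear_combination -h⟩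
  have hv0 : v ≠ 0 := by
    rintro rfl
    exact hz (by linear_combination hv)
  have hk0 : v * i ≠ 0 := mul_ne_zero hv0 (IsUnit.of_mul_eq_one_right _ hi).ne_zero
  -- `k = (z - 1) / (a + 1)`
  obtain ⟨k, hk⟩ : ∃ k, k = 4 * (v * i) := ⟨_, rfl⟩
  have hkv : k * (4 * c + 2) = z - 1 := by rw [hk]; linear_combination 8 * v * hi - hv
  obtain ⟨_, _, _, _, _, _, H⟩ := dat_of_two_points (η := -1) (n3 := -3) (n2 := 6) (n1 := -4) (x1 := 2) (x2 := 2 * z) (b := 2 * (1 + k)) (k := k)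
    (fun e => hz (mul_left_cancel₀ h2 (by linear_combination -e)))
    (by push_cast; ring)
    (by
      have h1 : 2 * z - 2 * (1 + k) = 2 * k * (4 * c + 1) := by linear_combination -2 * hkv
      rw [h1]
      push_cast
      linear_combination 4 * k ^ 2 * h)
  obtain ⟨n, u, hu, hn⟩ := exists_pow_unit hk0
  obtain ⟨b', k', ⟨t, ht⟩, hk', _, _, _, _, _, _, H'⟩ := chain_inv (n + 1) (1 + k) k u _ _ _ _ _ _ hu (by rw [hk, hn]; ring) H
  have hb' : b' = 2 * (2 * (t + v * i) + 1) := by linear_combination ht + hk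
  -- only `k' ^ 2` matters, so `k' ≡ 1` modulo `4` may be assumed
  obtain ⟨k'', hk'', H''⟩ : ∃ k'' : R, (∃ s, k'' = 4 * s + 1) ∧ ∃ s1 s0 w3 w2 w1 w0, Dat (-1) (-3) 6 (-4) (2 * b') k'' s1 s0 w3 w2 w1 w0 := by
    obtain ⟨s, hs | hs⟩ := four_odd (isUnit_iff_odd.1 hk')
    · exact ⟨k', ⟨s, hs⟩, _, _, _, _, _, _, H'⟩
    · exact ⟨-k', ⟨-s, by rw [hs]; ring⟩, _, _, _, _, _, _, H'.neg⟩
  obtain ⟨s, hs⟩ := hk''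
  obtain ⟨_, _, _, _, _, _, H''⟩ := H''
  exact transition H'' (isUnit_iff_odd.2 ⟨2 * s, by rw [hs]; ring⟩) h2 (isUnit_iff_odd.2 ⟨_, rfl⟩)
    (isUnit_iff_odd.2 ⟨-(t + v * i) - s - 1, rfl⟩) hb' (by rw [hb', hs]; ring)

/-- The rational points of `a ^ 2 = z - 16 (z - 1) ^ 3 z ^ 2` have `a = 0` or `a = ±1`. -/
theorem no_point {z a : ℚ} (h : a ^ 2 = z - 16 * (z - 1) ^ 3 * z ^ 2) (ha : a ≠ 0) (ha1 : a ^ 2 ≠ 1) : False := by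
  have hz : z ≠ 0 := by
    rintro rfl
    exact ha (by simpa using h)
  obtain hR | ⟨m, hm⟩ := mem_or_inv_even z hz
  · obtain ⟨r, rfl⟩ : ∃ r : R, (r : ℚ) = z := ⟨⟨z, hR⟩, rfl⟩
    have haR : a ∈ R := by
      apply sq_mem_R
      rw [h, show (r : ℚ) - 16 * (r - 1) ^ 3 * r ^ 2 = ((r - 16 * (r - 1) ^ 3 * r ^ 2 : R) : ℚ) by push_cast; rfl]
      exact Subtype.prop _
    obtain ⟨α, rfl⟩ : ∃ α : R, (α : ℚ) = a := ⟨⟨a, haR⟩, rfl⟩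
    have h' : α ^ 2 = r - 16 * (r - 1) ^ 3 * r ^ 2 := by apply coe_inj_R; push_cast; exact h
    obtain ⟨c, hc⟩ | hodd := even_or_odd α
    · refine no_point_inf_even (z := r) (c := c) ?_ (by rw [← hc]; exact h')
      rintro rfl
      exact ha (by rw [hc]; simp)
    · have hr : r ≠ 1 := by
        rintro rfl
        exact ha1 (by rw [h]; simp)
      obtain ⟨c, hc | hc⟩ := four_odd hodd
      · exact no_point_inf_odd (c := c) hr (by rw [← hc]; exact h')
      · exact no_point_inf_odd (c := -c) hr (by rw [← h', hc]; ring)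
  · have hm0 : (m : ℚ) ≠ 0 := by
      intro h0
      rw [h0, mul_zero, inv_eq_zero] at hm
      exact hz hm
    have hz' : z = 1 / (2 * m) := by rw [← hm]; simp
    have hy : (2 * a * (m : ℚ) ^ 3) ^ 2 = 2 * m * ((m : ℚ) ^ 4 + 8 * m ^ 3 - 12 * m ^ 2 + 6 * m - 1) := by
      rw [mul_pow, mul_pow, h, hz']
      field_simp
      ring
    obtain ⟨n, hn⟩ | ⟨w, hw⟩ := even_or_odd m
    · have hn' : (m : ℚ) = 2 * n := by rw [hn]; push_cast; rfl
      refine no_point_zero (n := n) (y := 2 * a * (m : ℚ) ^ 3) ?_ (by rw [hy, hn'])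
      rintro rfl
      exact hm0 (by rw [hn]; simp)
    · have hyR : 2 * a * (m : ℚ) ^ 3 ∈ R := by
        apply sq_mem_R
        rw [hy, show 2 * (m : ℚ) * ((m : ℚ) ^ 4 + 8 * m ^ 3 - 12 * m ^ 2 + 6 * m - 1) = ((2 * m * (m ^ 4 + 8 * m ^ 3 - 12 * m ^ 2 + 6 * m - 1) : R) : ℚ) by push_cast; rfl]
        exact Subtype.prop _
      obtain ⟨y, hyy⟩ : ∃ y : R, (y : ℚ) = 2 * a * (m : ℚ) ^ 3 := ⟨⟨_, hyR⟩, rfl⟩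
      refine no_point_one (w := w) (y := y) ?_ ?_
      · rintro rfl
        have hm1 : (m : ℚ) = 1 := by rw [hw]; simp
        rw [hm1] at hz'
        exact ha1 (by rw [h, hz']; norm_num)
      · have : y ^ 2 = 2 * m * (m ^ 4 + 8 * m ^ 3 - 12 * m ^ 2 + 6 * m - 1) := by
          apply coe_inj_R; push_cast; rw [hyy]; exact hy
        rw [this, hw]
        ring

end SR
end

/-! ### The scaled root equation -/

theorem no_rational_solution_of_scaled_root_equation :
    ∀ s : ℚ, 0 < s → s ≠ 1 → ¬ ∃ y : ℚ, scaledRootPoly s y = 0 := by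
  rintro s hs hs1 ⟨y, hy⟩
  rw [scaledRootPoly] at hy
  have hs' : s - 1 ≠ 0 := sub_ne_zero.2 hs1
  have hp : s + 1 ≠ 0 := by positivity
  have hy1 : y + 1 ≠ 0 := by
    intro h
    obtain rfl : y = -1 := by linear_combination h
    exact pow_ne_zero 4 hs' (by linear_combination -hy / 2)
  -- in the coordinates `a` and `c` the equation becomes `c (1 - c²)² = 4 (1 - a²) (a² - c²)`
  obtain ⟨a, ha⟩ : ∃ a, a = (s - 1) / (s + 1) := ⟨_, rfl⟩
  obtain ⟨c, hc⟩ : ∃ c, c = (s - 1) * (y - 1) / ((s + 1) * (y + 1)) := ⟨_, rfl⟩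
  have ha0 : a ≠ 0 := by rw [ha]; exact div_ne_zero hs' hp
  have ha1 : 1 - a ^ 2 ≠ 0 := by
    have h : 1 - a ^ 2 = 4 * s / (s + 1) ^ 2 := by rw [ha]; field_simp; ring
    rw [h]; positivity
  have hac : c * (1 - c ^ 2) ^ 2 = 4 * (1 - a ^ 2) * (a ^ 2 - c ^ 2) := by
    rw [ha, hc]
    field_simp
    linear_combination 16 * hy
  have hc1 : 1 - c ^ 2 ≠ 0 := by
    intro h
    have h2 : (1 - a ^ 2) ^ 2 = 0 := by linear_combination hac / 4 + (1 - a ^ 2 - c * (1 - c ^ 2) / 4) * h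
    exact ha1 (pow_eq_zero_iff two_ne_zero |>.1 h2)
  -- the equation is quadratic in `a²`, and its discriminant makes `1 - c` a square
  obtain ⟨t, ht⟩ : ∃ t, t = (2 * a ^ 2 - 1 - c ^ 2) / (1 - c ^ 2) := ⟨_, rfl⟩
  have ht1 : t * (1 - c ^ 2) = 2 * a ^ 2 - 1 - c ^ 2 := by rw [ht]; field_simp
  have ht2 : t ^ 2 = 1 - c := by
    apply mul_right_cancel₀ (pow_ne_zero 2 hc1)
    linear_combination (t * (1 - c ^ 2) + 2 * a ^ 2 - 1 - c ^ 2) * ht1 + hac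
  obtain rfl : c = 1 - t ^ 2 := by linear_combination ht2
  exact SR.no_point (z := (1 + t) / 2) (a := a) (by linear_combination -ht1 / 2) ha0 (fun h => ha1 (by linear_combination -h))
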